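/- Let 2 < p < ∞, 0 < r < 1, and θ = r + (p−2)/p (dimension d = 3). There exists a constant C, depending only on r and p and independent of T, such that the following holds. Let w₀ be a Schwartz function on ℝ³, let T > 0, let f : [0,T] × ℝ³ → ℂ be continuous with f(t,·) Schwartz for each t and t ↦ [f(t,·)]_θ integrable, and define w(t, ·) = e^{itD} w₀ + ∫₀^t e^{i(t−s)D} f(s, ·) ds (so that ∂_t w = i D w + f, w(0) = w₀). Then (∫₀^T [w(t, ·)]_{r,p}^{2p/(p−2)} dt)^{(p−2)/(2p)} ≤ C · ([w₀]_θ + ∫₀^T [f(t, ·)]_θ dt). -/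

import Mathlib

open MeasureTheory ENNReal
open scoped RealInnerProductSpace

noncomputable section

/-- Shorthand for Euclidean space `ℝ^d`. -/
abbrev Ed (d : ℕ) := EuclideanSpace ℝ (Fin d)

/-- The homogeneous Besov (Gagliardo) seminorm `[f]_{r,p}`. -/
def gagliardo (d : ℕ) (r p : ℝ) {F : Type*} [NormedAddCommGroup F] (f : Ed d → F) : ℝ≥0∞ :=
  (∫⁻ x, ∫⁻ y, (‖f x - f y‖₊ : ℝ≥0∞) ^ p / (‖x - y‖₊ : ℝ≥0∞) ^ (r * p + d)) ^ (1 / p)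

/-- The homogeneous Hölder seminorm `{f}_r`. -/
def holderSemi (d : ℕ) (r : ℝ) {F : Type*} [NormedAddCommGroup F] (f : Ed d → F) : ℝ≥0∞ :=
  ⨆ x, ⨆ y, (‖f x - f y‖₊ : ℝ≥0∞) / (‖x - y‖₊ : ℝ≥0∞) ^ r

/-- The Fourier transform `f̂(κ) = ∫ e^{-i x·κ} f(x) dx`. -/
def ftransform (d : ℕ) (f : Ed d → ℂ) (κ : Ed d) : ℂ :=
  ∫ x, Complex.exp (-(Complex.I * (⟪x, κ⟫ : ℂ))) * f x

/-- The homogeneous Sobolev seminorm `[f]_θ = ((2π)^{-d} ∫ |κ|^{2θ} |f̂(κ)|² dκ)^{1/2}`. -/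
def sobolevSemi (d : ℕ) (θ : ℝ) (f : Ed d → ℂ) : ℝ≥0∞ :=
  (ENNReal.ofReal ((2 * Real.pi) ^ (-(d : ℝ))) *
    ∫⁻ κ, (‖κ‖₊ : ℝ≥0∞) ^ (2 * θ) * (‖ftransform d f κ‖₊ : ℝ≥0∞) ^ (2 : ℕ)) ^ ((1 : ℝ) / 2)

/-- A symbol of class `S⁰_{ph}`: smooth away from the origin and positively
homogeneous of degree `0`. -/
def IsSymbol0 (d : ℕ) (a : Ed d → ℂ) : Prop :=
  ContDiffOn ℝ (⊤ : ℕ∞) a {0}ᶜ ∧ ∀ (c : ℝ) (κ : Ed d), 0 < c → κ ≠ 0 → a (c • κ) = a κ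

/-- The operator `𝔞[f](x) = (2π)^{-d} ∫ e^{i x·κ} a(κ) f̂(κ) dκ` associated with a symbol. -/
def symbOp (d : ℕ) (a : Ed d → ℂ) (f : Ed d → ℂ) (x : Ed d) : ℂ :=
  (((2 * Real.pi) ^ (-(d : ℝ)) : ℝ) : ℂ) *
    ∫ κ, Complex.exp (Complex.I * (⟪x, κ⟫ : ℂ)) * a κ * ftransform d f κ

/-- The partial derivative `∂_i f(x)`. -/
def pd (d : ℕ) (i : Fin d) (f : Ed d → ℝ) (x : Ed d) : ℝ :=
  fderiv ℝ f x (EuclideanSpace.single i 1)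

/-- The half-wave propagator `(e^{itD} g)(x) = (2π)^{-d} ∫ e^{i x·κ} e^{i t|κ|} ĝ(κ) dκ`. -/
def halfWave (d : ℕ) (t : ℝ) (g : Ed d → ℂ) (x : Ed d) : ℂ :=
  (((2 * Real.pi) ^ (-(d : ℝ)) : ℝ) : ℂ) *
    ∫ κ, Complex.exp (Complex.I * ((⟪x, κ⟫ : ℂ) + (t : ℂ) * ((‖κ‖ : ℝ) : ℂ))) *
      ftransform d g κ

end


open MeasureTheory ENNReal
open scoped RealInnerProductSpace

/-- Minkowski integral inequality. -/
theorem mink {X S : Type*} [MeasurableSpace X] [MeasurableSpace S] (μ : Measure X) (ν : Measure S)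
    [SFinite μ] [SigmaFinite ν] (F : X → S → ℝ≥0∞) (hF : Measurable (Function.uncurry F))
    (p : ℝ) (hp : 1 ≤ p) :
    (∫⁻ x, (∫⁻ s, F x s ∂ν) ^ p ∂μ) ^ (1 / p) ≤ ∫⁻ s, (∫⁻ x, F x s ^ p ∂μ) ^ (1 / p) ∂ν := by
  have hp0 : 0 < p := by linarith
  rcases hp.eq_or_lt with rfl | hp1
  · simp only [ENNReal.rpow_one, one_div, inv_one]
    rw [lintegral_lintegral_swap hF.aemeasurable]
  set Nf : S → ℝ≥0∞ := fun s => (∫⁻ x, F x s ^ p ∂μ) ^ (1 / p) with hN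
  have hFp : Measurable (Function.uncurry (fun s x => F x s ^ p)) :=
    (hF.comp measurable_swap).pow_const p
  have hNm : Measurable Nf := (hFp.lintegral_prod_right').pow_const _
  by_cases hI : ∫⁻ s, Nf s ∂ν = ⊤
  · rw [hI]; exact le_top
  refine ENNReal.le_of_forall_pos_le_add ?_
  intro ε hε _
  obtain ⟨g, gpos, gm, gint⟩ := exists_pos_lintegral_lt_of_sigmaFinite ν
    (ε := (ε : ℝ≥0∞)) (by exact_mod_cast hε.ne')
  set M : S → ℝ≥0∞ := fun s => Nf s + g s with hM
  have hMm : Measurable M := hNm.add gm.coe_nnreal_ennreal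
  have hMI : ∫⁻ s, M s ∂ν ≤ (∫⁻ s, Nf s ∂ν) + ε := by
    rw [hM, lintegral_add_left hNm]; gcongr
  have hMtop : ∫⁻ s, M s ∂ν ≠ ⊤ := ne_top_of_le_ne_top (by simp [hI]) hMI
  have hMfin : ∀ᵐ s ∂ν, M s < ⊤ := ae_lt_top hMm hMtop
  have hM0 : ∀ s, M s ≠ 0 := fun s => by
    have := gpos s
    simp [hM, this.ne']
  have hc : p.HolderConjugate (Real.conjExponent p) := Real.HolderConjugate.conjExponent hp1
  have key : ∀ x, (∫⁻ s, F x s ∂ν) ^ p ≤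
      (∫⁻ s, F x s ^ p * M s ^ (1 - p) ∂ν) * (∫⁻ s, M s ∂ν) ^ (p - 1) := by
    intro x
    set p' := Real.conjExponent p with hp'
    have hp'0 : 0 < p' := hc.symm.pos
    have hpp : p / p' = p - 1 := by
      rw [hp', Real.conjExponent]; field_simp
    have hFx : Measurable (F x) := hF.comp measurable_prodMk_left
    have h1 : ∫⁻ s, F x s ∂ν = ∫⁻ s, (F x s * M s ^ (-(1 / p'))) * M s ^ (1 / p') ∂ν := by
      apply lintegral_congr_ae
      filter_upwards [hMfin] with s hs
      rw [mul_assoc, ← ENNReal.rpow_add _ _ (hM0 s) hs.ne]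
      simp
    have h2 := ENNReal.lintegral_mul_le_Lp_mul_Lq ν hc
      (f := fun s => F x s * M s ^ (-(1 / p'))) (g := fun s => M s ^ (1 / p'))
      (hFx.mul (hMm.pow_const _)).aemeasurable (hMm.pow_const _).aemeasurable
    rw [h1]
    refine (ENNReal.rpow_le_rpow h2 hp0.le).trans ?_
    rw [ENNReal.mul_rpow_of_nonneg _ _ hp0.le, ← ENNReal.rpow_mul, ← ENNReal.rpow_mul]
    have e1 : 1 / p * p = 1 := by field_simp
    have e2 : 1 / p' * p = p - 1 := by rw [← hpp]; ring
    rw [e1, e2, ENNReal.rpow_one]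
    gcongr with s
    · rw [ENNReal.mul_rpow_of_nonneg _ _ hp0.le, ← ENNReal.rpow_mul]
      have : -(1 / p') * p = 1 - p := by linarith
      rw [this]
    · rw [← ENNReal.rpow_mul]
      have : 1 / p' * p' = 1 := by field_simp
      rw [this, ENNReal.rpow_one]
  have h3 : ∫⁻ x, (∫⁻ s, F x s ∂ν) ^ p ∂μ ≤ (∫⁻ s, M s ∂ν) ^ p := by
    calc ∫⁻ x, (∫⁻ s, F x s ∂ν) ^ p ∂μ
        ≤ ∫⁻ x, (∫⁻ s, F x s ^ p * M s ^ (1 - p) ∂ν) * (∫⁻ s, M s ∂ν) ^ (p - 1) ∂μ :=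
          lintegral_mono key
      _ = (∫⁻ x, (∫⁻ s, F x s ^ p * M s ^ (1 - p) ∂ν) ∂μ) * (∫⁻ s, M s ∂ν) ^ (p - 1) := by
          rw [lintegral_mul_const' _ _ (ENNReal.rpow_ne_top_of_nonneg (by linarith) hMtop)]
      _ = (∫⁻ s, (∫⁻ x, F x s ^ p * M s ^ (1 - p) ∂μ) ∂ν) * (∫⁻ s, M s ∂ν) ^ (p - 1) := by
          rw [lintegral_lintegral_swap]
          exact ((hF.pow_const p).mul ((hMm.comp measurable_snd).pow_const _)).aemeasurable
      _ ≤ (∫⁻ s, M s ∂ν) * (∫⁻ s, M s ∂ν) ^ (p - 1) := by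
          gcongr ?_ * _
          apply lintegral_mono_ae
          filter_upwards [hMfin] with s hs
          rw [lintegral_mul_const' _ _ (by
            simp [ENNReal.rpow_eq_top_iff, hM0 s, hs.ne])]
          have : ∫⁻ x, F x s ^ p ∂μ = Nf s ^ p := by
            rw [hN, ← ENNReal.rpow_mul]; simp [hp0.ne']
          rw [this]
          calc Nf s ^ p * M s ^ (1 - p) ≤ M s ^ p * M s ^ (1 - p) := by
                gcongr; exact le_self_add
            _ = M s := by
                rw [← ENNReal.rpow_add _ _ (hM0 s) hs.ne]; simp
      _ = (∫⁻ s, M s ∂ν) ^ p := by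
          nth_rewrite 1 [← ENNReal.rpow_one (∫⁻ s, M s ∂ν)]
          rw [← ENNReal.rpow_add_of_nonneg _ _ zero_le_one (by linarith)]; simp
  calc _ ≤ ((∫⁻ s, M s ∂ν) ^ p) ^ (1 / p) := by gcongr
    _ = ∫⁻ s, M s ∂ν := by rw [← ENNReal.rpow_mul]; simp [hp0.ne']
    _ ≤ _ := hMI

/-- bounded-difference estimate with Bochner junk values. -/
theorem sub_integral_enorm_le {S : Type*} [MeasurableSpace S] (ν : Measure S) (F G : S → ℂ)
    (hF : AEStronglyMeasurable F ν) (hG : AEStronglyMeasurable G ν) :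
    ‖(∫ s, F s ∂ν) - ∫ s, G s ∂ν‖ₑ ≤ ∫⁻ s, ‖F s - G s‖ₑ ∂ν := by
  by_cases h : ∫⁻ s, ‖F s - G s‖ₑ ∂ν = ⊤
  · rw [h]; exact le_top
  have hi : Integrable (fun s => F s - G s) ν :=
    ⟨hF.sub hG, by rw [hasFiniteIntegral_iff_enorm]; exact lt_top_iff_ne_top.2 h⟩
  by_cases hG' : Integrable G ν
  · have hF' : Integrable F ν := by
      have := hi.add hG'
      refine this.congr (Filter.Eventually.of_forall fun s => ?_)
      simp
    rw [← integral_sub hF' hG']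
    exact enorm_integral_le_lintegral_enorm _
  · have hF' : ¬ Integrable F ν := fun hF' => hG' (by
      have := hF'.sub hi
      refine this.congr (Filter.Eventually.of_forall fun s => ?_)
      simp)
    rw [integral_undef hF', integral_undef hG']; simp

/-- Fubini in norm form. -/
theorem fubA {X Y : Type*} [MeasurableSpace X] [MeasurableSpace Y] (μ : Measure X) (ν : Measure Y)
    [SFinite μ] [SFinite ν] (c d : X → Y → ℂ) (hc : Measurable (Function.uncurry c))
    (hd : Measurable (Function.uncurry d)) (m n : X → ℝ) (hm : Integrable m μ) (hn : Integrable n μ)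
    (hcm : ∀ x y, ‖c x y‖ ≤ m x) (hdn : ∀ x y, ‖d x y‖ ≤ n x) (w : Y → ℂ) (hw : Integrable w ν)
    (hwm : Measurable w) :
    ‖∫ y, w y * ((∫ x, c x y ∂μ) * ∫ x, d x y ∂μ) ∂ν‖ₑ ≤
      ∫⁻ x, ∫⁻ x', ‖∫ y, w y * (c x y * d x' y) ∂ν‖ₑ ∂μ ∂μ := by
  have e1 : ∀ y, w y * ((∫ x, c x y ∂μ) * ∫ x, d x y ∂μ) =
      ∫ z : X × X, w y * (c z.1 y * d z.2 y) ∂(μ.prod μ) := by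
    intro y
    rw [integral_const_mul, ← integral_prod_mul (fun x => c x y) (fun x => d x y)]
  have hmeas : Measurable (fun q : Y × (X × X) => w q.1 * (c q.2.1 q.1 * d q.2.2 q.1)) := by
    have h1 : Measurable (fun q : Y × (X × X) => c q.2.1 q.1) :=
      hc.comp ((measurable_fst.comp measurable_snd).prodMk measurable_fst)
    have h2 : Measurable (fun q : Y × (X × X) => d q.2.2 q.1) :=
      hd.comp ((measurable_snd.comp measurable_snd).prodMk measurable_fst)
    exact (hwm.comp measurable_fst).mul (h1.mul h2)
  have hint : Integrable (fun q : Y × (X × X) => w q.1 * (c q.2.1 q.1 * d q.2.2 q.1))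
      (ν.prod (μ.prod μ)) := by
    refine Integrable.mono' (g := fun q : Y × (X × X) => ‖w q.1‖ * (m q.2.1 * n q.2.2))
      (hw.norm.mul_prod (hm.mul_prod hn)) hmeas.aestronglyMeasurable ?_
    filter_upwards with q
    rw [norm_mul, norm_mul]
    gcongr
    · exact (norm_nonneg _).trans (hcm q.2.1 q.1)
    · exact hcm _ _
    · exact hdn _ _
  simp_rw [e1]
  rw [integral_integral_swap hint]
  refine (enorm_integral_le_lintegral_enorm _).trans ?_
  rw [lintegral_prod]
  have : Measurable (fun q : (X × X) × Y => w q.2 * (c q.1.1 q.2 * d q.1.2 q.2)) :=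
    hmeas.comp measurable_swap
  exact (this.stronglyMeasurable.integral_prod_right').measurable.enorm.aemeasurable

open MeasureTheory ENNReal
open scoped RealInnerProductSpace

theorem lint_rpow_Ioc (b δ : ℝ) (hb : -1 < b) (hδ : 0 ≤ δ) :
    ∫⁻ u in Set.Ioc 0 δ, ENNReal.ofReal (u ^ b) = ENNReal.ofReal (δ ^ (b + 1) / (b + 1)) := by
  have hi : IntegrableOn (fun u : ℝ => u ^ b) (Set.Ioc 0 δ) := by
    rw [← intervalIntegrable_iff_integrableOn_Ioc_of_le hδ]
    exact intervalIntegral.intervalIntegrable_rpow' hb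
  rw [← ofReal_integral_eq_lintegral_ofReal hi]
  · rw [← intervalIntegral.integral_of_le hδ, integral_rpow (Or.inl hb)]
    rw [Real.zero_rpow (by linarith), sub_zero]
  · filter_upwards [ae_restrict_mem measurableSet_Ioc] with u hu
    exact Real.rpow_nonneg hu.1.le _

theorem lint_rpow_Ioi (b δ : ℝ) (hb : b < -1) (hδ : 0 < δ) :
    ∫⁻ u in Set.Ioi δ, ENNReal.ofReal (u ^ b) = ENNReal.ofReal (-δ ^ (b + 1) / (b + 1)) := by
  have hi : IntegrableOn (fun u : ℝ => u ^ b) (Set.Ioi δ) := integrableOn_Ioi_rpow_of_lt hb hδ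
  rw [← ofReal_integral_eq_lintegral_ofReal hi]
  · rw [integral_Ioi_rpow_of_lt hb hδ]
  · filter_upwards [ae_restrict_mem measurableSet_Ioi] with u hu
    exact Real.rpow_nonneg (hδ.trans hu).le _

theorem lint_abs (t : ℝ) (h : ℝ → ℝ≥0∞) :
    ∫⁻ s, h |t - s| = 2 * ∫⁻ u in Set.Ioi 0, h u := by
  rw [lintegral_sub_left_eq_self (fun u => h |u|) t]
  rw [← lintegral_add_compl _ (measurableSet_Ioi (a := (0 : ℝ))), Set.compl_Ioi, two_mul]
  congr 1
  · apply setLIntegral_congr_fun measurableSet_Ioi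
    intro u hu
    simp [abs_of_pos (Set.mem_Ioi.1 hu)]
  · have := (Measure.measurePreserving_neg (volume : Measure ℝ)).setLIntegral_comp_preimage_emb
      (MeasurableEquiv.neg ℝ).measurableEmbedding (fun u => h |u|) (Set.Iic 0)
    rw [← this]
    simp only [Set.neg_preimage, Set.neg_Iic, neg_zero, abs_neg]
    rw [setLIntegral_congr Ioi_ae_eq_Ici.symm]
    apply setLIntegral_congr_fun measurableSet_Ioi
    intro u hu
    simp [abs_of_pos (Set.mem_Ioi.1 hu)]

theorem hls_inner (q q' a : ℝ) (hq : 2 < q) (hq' : q' = q / (q - 1)) (ha : a = 2 / q)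
    (n : ℝ → ℝ) (hn : Measurable n) (hn0 : ∀ t, 0 ≤ n t) (J : ℝ) (hJ : 0 < J)
    (hnJ : ∫⁻ t, ENNReal.ofReal (n t ^ q') ≤ ENNReal.ofReal J) (t : ℝ) :
    ∫⁻ s, (if n s ≤ n t then ENNReal.ofReal (n t * n s * |t - s| ^ (-a)) else 0) ≤
      ENNReal.ofReal ((2 / (1 - a) + 2) * J ^ (2 / q' - 1) * n t ^ q') := by
  have hq0 : 0 < q := by linarith
  have hq10 : 0 < q - 1 := by linarith
  have ha0 : 0 < a := by rw [ha]; positivity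
  have ha1 : a < 1 := by rw [ha, div_lt_one hq0]; exact hq
  have hq'0 : 0 < q' := by rw [hq']; positivity
  rcases (hn0 t).eq_or_lt with h0 | hpos
  · simp [← h0]
  set N := n t with hN
  set δ := J * N ^ (-q') with hδ
  have hδ0 : 0 < δ := by positivity
  have hmabs : Measurable (fun s : ℝ => |t - s|) := by fun_prop
  have hle : ∀ s, (if n s ≤ N then ENNReal.ofReal (N * n s * |t - s| ^ (-a)) else 0) ≤
      (Set.Ioc 0 δ).indicator (fun u => ENNReal.ofReal (N ^ 2) * ENNReal.ofReal (u ^ (-a))) |t - s|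
      + ENNReal.ofReal N * (ENNReal.ofReal (n s) *
        (Set.Ioi δ).indicator (fun u => ENNReal.ofReal (u ^ (-a))) |t - s|) := by
    intro s
    split_ifs with h
    · rcases (abs_nonneg (t - s)).eq_or_lt with h0 | h1
      · rw [← h0, Real.zero_rpow (by linarith)]; simp
      · by_cases h2 : |t - s| ≤ δ
        · refine le_trans ?_ le_self_add
          rw [Set.indicator_of_mem (show |t - s| ∈ Set.Ioc 0 δ from ⟨h1, h2⟩),
            ← ENNReal.ofReal_mul (by positivity)]
          apply ENNReal.ofReal_le_ofReal
          have := Real.rpow_nonneg h1.le (-a)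
          rw [sq]
          gcongr
        · refine le_trans ?_ le_add_self
          rw [Set.indicator_of_mem (show |t - s| ∈ Set.Ioi δ from not_le.1 h2),
            ← ENNReal.ofReal_mul (hn0 s), ← ENNReal.ofReal_mul hpos.le, mul_assoc]
    · exact zero_le
  refine (lintegral_mono hle).trans ?_
  have hm1 : Measurable ((Set.Ioc 0 δ).indicator
      (fun u => ENNReal.ofReal (N ^ 2) * ENNReal.ofReal (u ^ (-a)))) :=
    Measurable.indicator (by fun_prop) measurableSet_Ioc
  have hm2 : Measurable ((Set.Ioi δ).indicator (fun u => ENNReal.ofReal (u ^ (-a)))) :=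
    Measurable.indicator (by fun_prop) measurableSet_Ioi
  have hm3 : Measurable (fun s => (Set.Ioc 0 δ).indicator
      (fun u => ENNReal.ofReal (N ^ 2) * ENNReal.ofReal (u ^ (-a))) |t - s|) := hm1.comp hmabs
  rw [lintegral_add_left hm3, lint_abs t, lintegral_const_mul' _ _ ofReal_ne_top]
  have hA : ∫⁻ u in Set.Ioi 0, (Set.Ioc 0 δ).indicator
      (fun u => ENNReal.ofReal (N ^ 2) * ENNReal.ofReal (u ^ (-a))) u =
      ENNReal.ofReal (N ^ 2 * (δ ^ (1 - a) / (1 - a))) := by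
    rw [setLIntegral_indicator measurableSet_Ioc,
      Set.inter_eq_self_of_subset_left Set.Ioc_subset_Ioi_self, lintegral_const_mul' _ _ ofReal_ne_top,
      lint_rpow_Ioc _ _ (by linarith) hδ0.le, ← ENNReal.ofReal_mul (by positivity)]
    ring_nf
  have hc : q'.HolderConjugate q := by
    have := (Real.HolderConjugate.conjExponent (show 1 < q by linarith)).symm
    rwa [Real.conjExponent, ← hq'] at this
  have hB := ENNReal.lintegral_mul_le_Lp_mul_Lq (volume : Measure ℝ) hc
    (f := fun s => ENNReal.ofReal (n s))
    (g := fun s => (Set.Ioi δ).indicator (fun u => ENNReal.ofReal (u ^ (-a))) |t - s|)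
    (by fun_prop) (hm2.comp hmabs).aemeasurable
  have hB1 : ∫⁻ s, ENNReal.ofReal (n s) ^ q' ≤ ENNReal.ofReal J := by
    refine le_trans (le_of_eq ?_) hnJ
    congr 1; ext s
    rw [ENNReal.ofReal_rpow_of_nonneg (hn0 s) hq'0.le]
  have hB2 : ∫⁻ s, ((Set.Ioi δ).indicator (fun u => ENNReal.ofReal (u ^ (-a))) |t - s|) ^ q =
      ENNReal.ofReal (2 / δ) := by
    rw [lint_abs t (fun v => ((Set.Ioi δ).indicator (fun u => ENNReal.ofReal (u ^ (-a))) v) ^ q)]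
    have : ∀ v, ((Set.Ioi δ).indicator (fun u => ENNReal.ofReal (u ^ (-a))) v) ^ q =
      (Set.Ioi δ).indicator (fun u => ENNReal.ofReal (u ^ (-2 : ℝ))) v := by
      intro v
      by_cases hv : v ∈ Set.Ioi δ
      · rw [Set.indicator_of_mem hv, Set.indicator_of_mem hv]
        have hv0 : 0 ≤ v := (hδ0.trans hv).le
        rw [ENNReal.ofReal_rpow_of_nonneg (Real.rpow_nonneg hv0 _) hq0.le, ← Real.rpow_mul hv0]
        congr 2; rw [ha]; field_simp
      · rw [Set.indicator_of_notMem hv, Set.indicator_of_notMem hv, ENNReal.zero_rpow_of_pos hq0]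
    simp_rw [this]
    rw [setLIntegral_indicator measurableSet_Ioi,
      Set.inter_eq_self_of_subset_left (Set.Ioi_subset_Ioi hδ0.le),
      lint_rpow_Ioi _ _ (by norm_num) hδ0]
    have : (2 : ℝ≥0∞) = ENNReal.ofReal 2 := by simp
    rw [this, ← ENNReal.ofReal_mul (by norm_num)]
    congr 1
    norm_num [Real.rpow_neg_one]
    field_simp
  rw [hA]
  have hB3 : ∫⁻ s, ENNReal.ofReal (n s) *
        (Set.Ioi δ).indicator (fun u => ENNReal.ofReal (u ^ (-a))) |t - s| ≤
      ENNReal.ofReal (J ^ (1 / q') * (2 / δ) ^ (1 / q)) := by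
    refine hB.trans ?_
    rw [hB2, ENNReal.ofReal_mul (by positivity),
      ← ENNReal.ofReal_rpow_of_nonneg hJ.le (by positivity),
      ← ENNReal.ofReal_rpow_of_nonneg (by positivity) (by positivity)]
    gcongr
  have h2 : (2 : ℝ≥0∞) = ENNReal.ofReal 2 := by simp
  have h1a : 0 < 1 - a := by linarith
  calc _ ≤ ENNReal.ofReal 2 * ENNReal.ofReal (N ^ 2 * (δ ^ (1 - a) / (1 - a))) +
        ENNReal.ofReal N * ENNReal.ofReal (J ^ (1 / q') * (2 / δ) ^ (1 / q)) := by
        rw [h2]; gcongr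
    _ = ENNReal.ofReal (2 * (N ^ 2 * (δ ^ (1 - a) / (1 - a))) +
        N * (J ^ (1 / q') * (2 / δ) ^ (1 / q))) := by
        rw [ENNReal.ofReal_add (by positivity) (by positivity), ENNReal.ofReal_mul (p := 2) (by positivity),
          ENNReal.ofReal_mul (p := N) (by positivity)]
    _ ≤ _ := by
        apply ENNReal.ofReal_le_ofReal
        have f1 : N ^ 2 * δ ^ (1 - a) = J ^ (2 / q' - 1) * N ^ q' := by
          rw [hδ, Real.mul_rpow hJ.le (by positivity), ← Real.rpow_mul hpos.le, ← Real.rpow_two,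
            mul_left_comm, ← Real.rpow_add hpos]
          congr 2
          · rw [ha, hq']; field_simp; ring
          · rw [ha, hq']; field_simp; ring
        have f2 : N * (J ^ (1 / q') * (1 / δ) ^ (1 / q)) = J ^ (2 / q' - 1) * N ^ q' := by
          rw [hδ, one_div (J * N ^ (-q')), Real.inv_rpow (by positivity), ← Real.rpow_neg (by positivity),
            Real.mul_rpow hJ.le (by positivity), ← Real.rpow_mul hpos.le]
          nth_rewrite 1 [← Real.rpow_one N]
          rw [← mul_assoc (J ^ (1 / q')), ← Real.rpow_add hJ, mul_left_comm, ← Real.rpow_add hpos]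
          congr 2
          · rw [hq']; field_simp; ring
          · rw [hq']; field_simp; ring
        have f3 : (2 / δ) ^ (1 / q) ≤ 2 * (1 / δ) ^ (1 / q) := by
          rw [show 2 / δ = 2 * (1 / δ) by ring, Real.mul_rpow (by norm_num) (by positivity)]
          gcongr
          calc (2 : ℝ) ^ (1 / q) ≤ 2 ^ (1 : ℝ) := by
                apply Real.rpow_le_rpow_of_exponent_le (by norm_num)
                rw [div_le_one hq0]; linarith
            _ = 2 := Real.rpow_one _
        calc _ ≤ 2 / (1 - a) * (N ^ 2 * δ ^ (1 - a)) +
              2 * (N * (J ^ (1 / q') * (1 / δ) ^ (1 / q))) := by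
              have : N * (J ^ (1 / q') * (2 / δ) ^ (1 / q)) ≤
                N * (J ^ (1 / q') * (2 * (1 / δ) ^ (1 / q))) := by gcongr
              have e : 2 * (N ^ 2 * (δ ^ (1 - a) / (1 - a))) =
                2 / (1 - a) * (N ^ 2 * δ ^ (1 - a)) := by ring
              linarith
          _ = _ := by rw [f1, f2]; ring

theorem hls (q q' a : ℝ) (hq : 2 < q) (hq' : q' = q / (q - 1)) (ha : a = 2 / q)
    (n : ℝ → ℝ) (hn : Measurable n) (hn0 : ∀ t, 0 ≤ n t) (J : ℝ) (hJ : 0 < J)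
    (hnJ : ∫⁻ t, ENNReal.ofReal (n t ^ q') ≤ ENNReal.ofReal J) :
    ∫⁻ t, ∫⁻ s, ENNReal.ofReal (n t * n s * |t - s| ^ (-a)) ≤
      ENNReal.ofReal (2 * (2 / (1 - a) + 2) * J ^ (2 / q')) := by
  have hq0 : 0 < q := by linarith
  have ha1 : a < 1 := by rw [ha, div_lt_one hq0]; exact hq
  have h1a : 0 < 1 - a := by linarith
  set f : ℝ → ℝ → ℝ≥0∞ := fun t s =>
    if n s ≤ n t then ENNReal.ofReal (n t * n s * |t - s| ^ (-a)) else 0 with hf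
  have hfm : Measurable (Function.uncurry f) := by
    apply Measurable.ite
    · exact measurableSet_le (hn.comp measurable_snd) (hn.comp measurable_fst)
    · fun_prop
    · fun_prop
  have hI : ∫⁻ t, ∫⁻ s, f t s ≤ ENNReal.ofReal ((2 / (1 - a) + 2) * J ^ (2 / q')) := by
    calc _ ≤ ∫⁻ t, ENNReal.ofReal ((2 / (1 - a) + 2) * J ^ (2 / q' - 1)) *
            ENNReal.ofReal (n t ^ q') := by
          apply lintegral_mono; intro t
          simp only
          rw [← ENNReal.ofReal_mul (by positivity)]
          exact hls_inner q q' a hq hq' ha n hn hn0 J hJ hnJ t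
      _ ≤ ENNReal.ofReal ((2 / (1 - a) + 2) * J ^ (2 / q' - 1)) * ENNReal.ofReal J := by
          rw [lintegral_const_mul' _ _ ofReal_ne_top]; gcongr
      _ = _ := by
          rw [← ENNReal.ofReal_mul (by positivity)]
          congr 1
          rw [mul_assoc, Real.rpow_sub_one hJ.ne']
          field_simp
  calc _ ≤ ∫⁻ t, ∫⁻ s, (f t s + f s t) := by
        apply lintegral_mono; intro t
        apply lintegral_mono; intro s
        simp only [hf]
        rcases le_total (n s) (n t) with h | h
        · rw [if_pos h]; exact le_self_add
        · rw [if_pos h, mul_comm (n t), abs_sub_comm]; exact le_add_self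
    _ = (∫⁻ t, ∫⁻ s, f t s) + ∫⁻ t, ∫⁻ s, f s t := by
        have hm : Measurable (fun t => ∫⁻ s, f t s) := hfm.lintegral_prod_right'
        rw [← lintegral_add_left hm]
        congr 1; ext t
        rw [lintegral_add_left]
        exact hfm.comp measurable_prodMk_left
    _ = 2 * ∫⁻ t, ∫⁻ s, f t s := by
        rw [two_mul, lintegral_lintegral_swap hfm.aemeasurable]
    _ ≤ _ := by
        rw [mul_assoc, ENNReal.ofReal_mul (by norm_num)]
        simp only [ENNReal.ofReal_ofNat]
        gcongr

open MeasureTheory ENNReal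
open scoped RealInnerProductSpace

theorem osc1 (L τ k : ℝ) (hL : 0 < L) (hτ : τ ≠ 0) (hk : k ≠ 0) :
    ‖∫ s in Set.Ioi (0 : ℝ), (s : ℂ) * Complex.exp (((-(L / 2) * (k ^ 2 + s ^ 2) : ℝ) : ℂ) +
      Complex.I * ((τ * Real.sqrt (k ^ 2 + s ^ 2) : ℝ) : ℂ))‖ ≤
    1 / |τ| * (|k| * Real.exp (-(L / 2) * k ^ 2) +
      4 * Real.exp (-(L / 4) * k ^ 2) * (Real.sqrt (Real.pi / (L / 4)) / 2)) := by
  set ρ : ℝ → ℝ := fun s => Real.sqrt (k ^ 2 + s ^ 2) with hρ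
  have hk2 : 0 < k ^ 2 := by positivity
  have hρpos : ∀ s, 0 < ρ s := fun s => Real.sqrt_pos.2 (by positivity)
  have hρsq : ∀ s, ρ s ^ 2 = k ^ 2 + s ^ 2 := fun s => Real.sq_sqrt (by positivity)
  have hρd : ∀ s, HasDerivAt ρ (s / ρ s) s := by
    intro s
    have h1 : HasDerivAt (fun s : ℝ => k ^ 2 + s ^ 2) (2 * s) s := by
      have := (hasDerivAt_pow 2 s).const_add (k ^ 2)
      simpa using this
    have := h1.sqrt (by positivity)
    convert this using 1
    simp only [hρ]; field_simp
  set E : ℝ → ℂ := fun s => Complex.exp (((-(L / 2) * (k ^ 2 + s ^ 2) : ℝ) : ℂ) +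
      Complex.I * ((τ * ρ s : ℝ) : ℂ)) with hE
  have hEn : ∀ s, ‖E s‖ = Real.exp (-(L / 2) * (k ^ 2 + s ^ 2)) := by
    intro s
    simp only [hE]
    rw [Complex.norm_exp]
    congr 1
    simp only [Complex.add_re, Complex.ofReal_re, Complex.mul_re, Complex.I_re, Complex.I_im,
      Complex.ofReal_im]
    ring
  have hEd : ∀ s, HasDerivAt E (E s * (((-(L / 2) * (2 * s) : ℝ) : ℂ) +
      Complex.I * ((τ * (s / ρ s) : ℝ) : ℂ))) s := by
    intro s
    have h1 : HasDerivAt (fun s : ℝ => -(L / 2) * (k ^ 2 + s ^ 2)) (-(L / 2) * (2 * s)) s := by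
      have := ((hasDerivAt_pow 2 s).const_add (k ^ 2)).const_mul (-(L / 2))
      simpa using this
    have h2 : HasDerivAt (fun s : ℝ => τ * ρ s) (τ * (s / ρ s)) s := (hρd s).const_mul τ
    exact (h1.ofReal_comp.add (h2.ofReal_comp.const_mul Complex.I)).cexp
  set H : ℝ → ℂ := fun s => E s * (ρ s : ℂ) / (Complex.I * τ) with hH
  set R : ℝ → ℂ := fun s => ((s / ρ s : ℝ) : ℂ) * E s * ((1 - L * ρ s ^ 2 : ℝ) : ℂ) / (Complex.I * τ)
    with hR
  have hτc : (τ : ℂ) ≠ 0 := by exact_mod_cast hτ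
  have hHd : ∀ s : ℝ, HasDerivAt H ((s : ℂ) * E s + R s) s := by
    intro s
    have := ((hEd s).mul (hρd s).ofReal_comp).div_const (Complex.I * τ)
    refine HasDerivAt.congr_deriv this ?_
    simp only [hR]
    have hρc : (ρ s : ℂ) ≠ 0 := by exact_mod_cast (hρpos s).ne'
    push_cast
    field_simp [Complex.I_ne_zero]
    ring
  have hEc : Continuous E := by
    rw [continuous_iff_continuousAt]; exact fun s => (hEd s).continuousAt
  have hρc : Continuous ρ := by
    rw [continuous_iff_continuousAt]; exact fun s => (hρd s).continuousAt
  have hRc : Continuous R := by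
    simp only [hR]
    refine Continuous.div_const ?_ _
    refine Continuous.mul (Continuous.mul ?_ hEc) (by fun_prop)
    exact Complex.continuous_ofReal.comp (continuous_id.div hρc fun s => (hρpos s).ne')
  have hL4 : 0 < L / 4 := by positivity
  have hRn : ∀ s, ‖R s‖ ≤ 1 / |τ| * (4 * Real.exp (-(L / 4) * k ^ 2)) *
      Real.exp (-(L / 4) * s ^ 2) := by
    intro s
    simp only [hR]
    rw [norm_div, norm_mul, norm_mul, norm_mul, hEn]
    simp only [Complex.norm_real, Complex.norm_I, one_mul, Real.norm_eq_abs]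
    have h1 : |s / ρ s| ≤ 1 := by
      rw [abs_div, abs_of_pos (hρpos s), div_le_one (hρpos s)]
      exact Real.abs_le_sqrt (by nlinarith)
    have h2 : |1 - L * ρ s ^ 2| ≤ 1 + L * ρ s ^ 2 := by
      have : 0 ≤ L * ρ s ^ 2 := by positivity
      rw [abs_le]; constructor <;> linarith
    have h3 : 1 + L * ρ s ^ 2 ≤ 4 * Real.exp (L / 4 * (k ^ 2 + s ^ 2)) := by
      have := Real.add_one_le_exp (L / 4 * (k ^ 2 + s ^ 2))
      rw [hρsq]; linarith
    have h4 : Real.exp (-(L / 2) * (k ^ 2 + s ^ 2)) * Real.exp (L / 4 * (k ^ 2 + s ^ 2)) =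
      Real.exp (-(L / 4) * k ^ 2) * Real.exp (-(L / 4) * s ^ 2) := by
      rw [← Real.exp_add, ← Real.exp_add]; congr 1; ring
    calc _ ≤ 1 * Real.exp (-(L / 2) * (k ^ 2 + s ^ 2)) *
          (4 * Real.exp (L / 4 * (k ^ 2 + s ^ 2))) / |τ| := by
          gcongr; linarith
      _ = 4 * (Real.exp (-(L / 2) * (k ^ 2 + s ^ 2)) * Real.exp (L / 4 * (k ^ 2 + s ^ 2))) / |τ| := by
          ring
      _ = _ := by rw [h4]; ring
  have hRi : IntegrableOn R (Set.Ioi 0) := by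
    refine Integrable.mono' (((integrable_exp_neg_mul_sq hL4).const_mul
      (1 / |τ| * (4 * Real.exp (-(L / 4) * k ^ 2)))).integrableOn) hRc.aestronglyMeasurable ?_
    filter_upwards with s
    exact hRn s
  have hexpk : ∀ s : ℝ, Real.exp (-(L / 2) * (k ^ 2 + s ^ 2)) ≤ Real.exp (-(L / 2) * s ^ 2) := by
    intro s
    apply Real.exp_le_exp.2
    nlinarith
  have hSi : IntegrableOn (fun s : ℝ => (s : ℂ) * E s) (Set.Ioi 0) := by
    refine Integrable.mono' ((integrable_mul_exp_neg_mul_sq (b := L / 2) (by positivity)).norm.integrableOn)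
      ?_ ?_
    · exact (Continuous.mul (by fun_prop) hEc).aestronglyMeasurable
    · filter_upwards with s
      rw [norm_mul, norm_mul, hEn]
      simp only [Complex.norm_real, Real.norm_eq_abs, Real.abs_exp]
      exact mul_le_mul_of_nonneg_left (hexpk s) (abs_nonneg s)
  have hHlim : Filter.Tendsto H Filter.atTop (nhds 0) := by
    rw [tendsto_zero_iff_norm_tendsto_zero]
    have hb : ∀ᶠ s in Filter.atTop, ‖H s‖ ≤ 1 / |τ| * ((1 + |k|) * (s * Real.exp (-(L / 2) * s ^ 2))) := by
      filter_upwards [Filter.eventually_ge_atTop 1] with s hs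
      simp only [hH]
      rw [norm_div, norm_mul, norm_mul, hEn]
      simp only [Complex.norm_real, Complex.norm_I, one_mul, Real.norm_eq_abs, abs_of_pos (hρpos s)]
      have h1 : ρ s ≤ (1 + |k|) * s := by
        apply Real.sqrt_le_iff.2
        constructor
        · positivity
        · have := abs_nonneg k
          rw [← sq_abs k]
          have h5 : |k| ≤ |k| * s := by nlinarith
          have h6 : |k| * |k| ≤ (|k| * s) * (|k| * s) := by gcongr
          nlinarith [mul_nonneg this (sq_nonneg s)]
      calc _ ≤ Real.exp (-(L / 2) * s ^ 2) * ((1 + |k|) * s) / |τ| := by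
            have h7 := hexpk s
            have h8 := (hρpos s).le
            have h9 := Real.exp_nonneg (-(L / 2) * s ^ 2)
            generalize Real.exp (-(L / 2) * s ^ 2) = A at h7 h9 ⊢
            gcongr
        _ = _ := by ring
    have hlim : Filter.Tendsto (fun s : ℝ => 1 / |τ| * ((1 + |k|) * (s * Real.exp (-(L / 2) * s ^ 2))))
        Filter.atTop (nhds (1 / |τ| * ((1 + |k|) * 0))) := by
      refine Filter.Tendsto.const_mul _ (Filter.Tendsto.const_mul _ ?_)
      have := (tendsto_rpow_abs_mul_exp_neg_mul_sq_cocompact (a := L / 2) (by positivity) 1)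
      have := this.mono_left atTop_le_cocompact
      refine this.congr' ?_
      filter_upwards [Filter.eventually_ge_atTop 0] with s hs
      rw [abs_of_nonneg hs, Real.rpow_one]
    rw [mul_zero, mul_zero] at hlim
    exact squeeze_zero' (Filter.Eventually.of_forall fun s => norm_nonneg _) hb hlim
  have hFTC := integral_Ioi_of_hasDerivAt_of_tendsto (f := H) (f' := fun s => (s : ℂ) * E s + R s)
    (a := 0) (m := 0) (hHd 0).continuousAt.continuousWithinAt (fun s _ => hHd s) (hSi.add hRi) hHlim
  rw [integral_add hSi hRi] at hFTC
  have heq : ∫ s in Set.Ioi (0 : ℝ), (s : ℂ) * E s = -H 0 - ∫ s in Set.Ioi (0 : ℝ), R s := by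
    linear_combination hFTC
  have hH0 : ‖H 0‖ = 1 / |τ| * (|k| * Real.exp (-(L / 2) * k ^ 2)) := by
    simp only [hH]
    rw [norm_div, norm_mul, norm_mul, hEn]
    simp only [Complex.norm_real, Complex.norm_I, one_mul, Real.norm_eq_abs, abs_of_pos (hρpos 0)]
    simp only [hρ]
    simp [Real.sqrt_sq_eq_abs]
    ring
  have hRint : ‖∫ s in Set.Ioi (0 : ℝ), R s‖ ≤ 1 / |τ| * (4 * Real.exp (-(L / 4) * k ^ 2)) *
      (Real.sqrt (Real.pi / (L / 4)) / 2) := by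
    rw [← integral_gaussian_Ioi (L / 4), ← integral_const_mul]
    apply norm_integral_le_of_norm_le
    · exact ((integrable_exp_neg_mul_sq hL4).const_mul _).integrableOn
    · filter_upwards with s
      exact hRn s
  rw [heq]
  calc _ ≤ ‖-H 0‖ + ‖∫ s in Set.Ioi (0 : ℝ), R s‖ := norm_sub_le _ _
    _ ≤ _ := by
      rw [norm_neg, hH0]; linarith

open MeasureTheory ENNReal
open scoped RealInnerProductSpace

/-- Gaussian-damped half-wave symbol. -/
noncomputable def gw (L τ : ℝ) (κ : Ed 3) : ℂ :=
  Complex.exp (((-(L / 2) * ‖κ‖ ^ 2 : ℝ) : ℂ) + Complex.I * ((τ * ‖κ‖ : ℝ) : ℂ))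

/-- The character `e^{i x·κ}`. -/
noncomputable def ee (x κ : Ed 3) : ℂ := Complex.exp (Complex.I * (⟪x, κ⟫ : ℂ))

theorem gw_norm (L τ : ℝ) (κ : Ed 3) : ‖gw L τ κ‖ = Real.exp (-(L / 2) * ‖κ‖ ^ 2) := by
  rw [gw, Complex.norm_exp]
  congr 1
  simp only [Complex.add_re, Complex.ofReal_re, Complex.mul_re, Complex.I_re, Complex.I_im,
      Complex.ofReal_im]
  ring

theorem gw_cont (L τ : ℝ) : Continuous (gw L τ) := by
  unfold gw; fun_prop

theorem ee_norm (x κ : Ed 3) : ‖ee x κ‖ = 1 := by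
  rw [ee, mul_comm, Complex.norm_exp_ofReal_mul_I]

theorem ee_cont : Continuous (fun q : Ed 3 × Ed 3 => ee q.1 q.2) := by
  unfold ee; fun_prop

theorem rexp_int (b : ℝ) (hb : 0 < b) : Integrable (fun κ : Ed 3 => Real.exp (-b * ‖κ‖ ^ 2)) := by
  have := (GaussianFourier.integrable_cexp_neg_mul_sq_norm_add (b := (b : ℂ)) (by simpa using hb) 0
    (0 : Ed 3)).norm
  refine this.congr (Filter.Eventually.of_forall fun κ => ?_)
  simp only [zero_mul, add_zero]
  rw [Complex.norm_exp]
  congr 1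
  norm_cast

theorem gw_int (L τ : ℝ) (hL : 0 < L) : Integrable (gw L τ) := by
  rw [← integrable_norm_iff (gw_cont L τ).aestronglyMeasurable]
  simp_rw [gw_norm]
  exact rexp_int _ (by positivity)

theorem rot_exists (z : Ed 3) : ∃ A : Ed 3 ≃ₗᵢ[ℝ] Ed 3,
    A z = EuclideanSpace.single (0 : Fin 3) ‖z‖ :=
  ⟨_, Submodule.reflection_sub (by simp)⟩

theorem coords_mp : ∃ e : Ed 3 ≃ᵐ ℝ × (ℝ × ℝ), MeasurePreserving e ∧
    ∀ κ, e κ = (κ 0, κ 1, κ 2) := by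
  refine ⟨(MeasurableEquiv.toLp 2 (Fin 3 → ℝ)).symm.trans
    ((MeasurableEquiv.piFinSuccAbove (fun _ : Fin 3 => ℝ) 0).trans
      ((MeasurableEquiv.refl ℝ).prodCongr (MeasurableEquiv.finTwoArrow (α := ℝ)))), ?_, ?_⟩
  · have h1 := EuclideanSpace.volume_preserving_symm_measurableEquiv_toLp (Fin 3)
    have h2 := volume_preserving_piFinSuccAbove (fun _ : Fin 3 => ℝ) 0
    have h3 := (MeasurePreserving.id (volume : Measure ℝ)).prod (volume_preserving_finTwoArrow ℝ)
    exact (h3.comp h2).comp h1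
  · intro κ
    rfl

theorem plane_int (L τ k : ℝ) (hL : 0 < L) (hτ : τ ≠ 0) (hk : k ≠ 0) :
    ‖∫ y : ℝ × ℝ, Complex.exp (((-(L / 2) * (k ^ 2 + (y.1 ^ 2 + y.2 ^ 2)) : ℝ) : ℂ) +
      Complex.I * ((τ * Real.sqrt (k ^ 2 + (y.1 ^ 2 + y.2 ^ 2)) : ℝ) : ℂ))‖ ≤
    (2 * Real.pi / |τ|) * (1 + 4 * Real.sqrt Real.pi) / Real.sqrt L *
      Real.exp (-(L / 4) * k ^ 2) := by
  rw [← integral_comp_polarCoord_symm]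
  have h1 : ∀ q : ℝ × ℝ, (polarCoord.symm q).1 ^ 2 + (polarCoord.symm q).2 ^ 2 = q.1 ^ 2 := by
    intro q
    rw [polarCoord_symm_apply]
    simp only
    have := Real.sin_sq_add_cos_sq q.2
    linear_combination q.1 ^ 2 * this
  simp_rw [h1]
  rw [polarCoord_target]
  have h2 := setIntegral_prod_mul (μ := (volume : Measure ℝ)) (ν := (volume : Measure ℝ))
    (fun s : ℝ => (s : ℂ) * Complex.exp (((-(L / 2) * (k ^ 2 + s ^ 2) : ℝ) : ℂ) +
      Complex.I * ((τ * Real.sqrt (k ^ 2 + s ^ 2) : ℝ) : ℂ))) (fun _ : ℝ => (1 : ℂ))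
    (Set.Ioi 0) (Set.Ioo (-Real.pi) Real.pi)
  simp only [mul_one] at h2
  have h3 : ∫ y in Set.Ioo (-Real.pi) Real.pi, (1 : ℂ) = 2 * Real.pi := by
    have hp := Real.pi_pos
    simp only [integral_const, MeasurableSet.univ, measureReal_restrict_apply, Set.univ_inter,
      Real.volume_real_Ioo]
    rw [max_eq_left (by linarith)]
    simp; ring
  rw [h3] at h2
  simp only [Complex.real_smul]
  erw [h2]
  rw [norm_mul]
  have h4 := osc1 L τ k hL hτ hk
  have h5 : ‖(2 * Real.pi : ℂ)‖ = 2 * Real.pi := by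
    rw [norm_mul]; simp [abs_of_pos Real.pi_pos]
  rw [h5]
  have hsL : 0 < Real.sqrt L := Real.sqrt_pos.2 hL
  have h6 : |k| * Real.exp (-(L / 2) * k ^ 2) ≤ 1 / Real.sqrt L * Real.exp (-(L / 4) * k ^ 2) := by
    have e1 : Real.exp (-(L / 2) * k ^ 2) = Real.exp (-(L / 4) * k ^ 2) * Real.exp (-(L / 4 * k ^ 2)) := by
      rw [← Real.exp_add]; congr 1; ring
    have e2 : Real.sqrt L * |k| ≤ Real.exp (L / 4 * k ^ 2) := by
      refine le_trans ?_ (Real.add_one_le_exp _)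
      have := sq_nonneg (Real.sqrt L * |k| / 2 - 1)
      have e3 : (Real.sqrt L * |k|) ^ 2 = L * k ^ 2 := by
        rw [mul_pow, Real.sq_sqrt hL.le, sq_abs]
      nlinarith
    have e4 : Real.sqrt L * |k| * Real.exp (-(L / 4 * k ^ 2)) ≤ 1 := by
      rw [Real.exp_neg]
      exact mul_inv_le_one_of_le₀ e2 (Real.exp_nonneg _)
    rw [e1]
    calc _ = 1 / Real.sqrt L * Real.exp (-(L / 4) * k ^ 2) *
          (Real.sqrt L * |k| * Real.exp (-(L / 4 * k ^ 2))) := by field_simp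
      _ ≤ _ := by
          have : 0 ≤ 1 / Real.sqrt L * Real.exp (-(L / 4) * k ^ 2) := by positivity
          nlinarith
  have h7 : Real.sqrt (Real.pi / (L / 4)) / 2 = Real.sqrt Real.pi / Real.sqrt L := by
    rw [show Real.pi / (L / 4) = 2 ^ 2 * (Real.pi / L) by field_simp; ring,
      Real.sqrt_mul (by norm_num), Real.sqrt_sq (by norm_num), Real.sqrt_div Real.pi_pos.le]
    ring
  rw [h7] at h4
  calc _ ≤ (1 / |τ| * (1 / Real.sqrt L * Real.exp (-(L / 4) * k ^ 2) +
      4 * Real.exp (-(L / 4) * k ^ 2) * (Real.sqrt Real.pi / Real.sqrt L))) * (2 * Real.pi) := by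
        gcongr
        refine h4.trans ?_
        have : 0 < |τ| := abs_pos.2 hτ
        gcongr
    _ = _ := by ring

/-- Dispersive constant. -/
noncomputable def C0 : ℝ := 2 * Real.pi * (1 + 4 * Real.sqrt Real.pi) * (2 * Real.sqrt Real.pi)

theorem C0_pos : 0 < C0 := by
  have := Real.pi_pos
  unfold C0; positivity

theorem disp (L τ : ℝ) (hL : 0 < L) (hτ : τ ≠ 0) (z : Ed 3) :
    ‖∫ κ, gw L τ κ * ee z κ‖ ≤ C0 / (L * |τ|) := by
  obtain ⟨A, hA⟩ := rot_exists z
  obtain ⟨e, hem, he⟩ := coords_mp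
  set c := ‖z‖
  set F : ℝ × (ℝ × ℝ) → ℂ := fun q => Complex.exp (((-(L / 2) * (q.1 ^ 2 + (q.2.1 ^ 2 + q.2.2 ^ 2)) : ℝ) : ℂ) +
      Complex.I * ((τ * Real.sqrt (q.1 ^ 2 + (q.2.1 ^ 2 + q.2.2 ^ 2)) : ℝ) : ℂ)) *
      Complex.exp (Complex.I * ((c * q.1 : ℝ) : ℂ)) with hF
  have hnsq : ∀ κ : Ed 3, ‖κ‖ ^ 2 = κ 0 ^ 2 + (κ 1 ^ 2 + κ 2 ^ 2) := by
    intro κ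
    rw [EuclideanSpace.real_norm_sq_eq, Fin.sum_univ_three]; ring
  have h1 : ∀ κ, gw L τ κ * ee z κ = F (e (A κ)) := by
    intro κ
    have e1 : ⟪z, κ⟫ = c * (A κ) 0 := by
      rw [← A.inner_map_map, hA, EuclideanSpace.inner_single_left]; simp
    have e2 : ‖κ‖ ^ 2 = (A κ) 0 ^ 2 + ((A κ) 1 ^ 2 + (A κ) 2 ^ 2) := by
      rw [← A.norm_map, hnsq]
    have e3 : ‖κ‖ = Real.sqrt ((A κ) 0 ^ 2 + ((A κ) 1 ^ 2 + (A κ) 2 ^ 2)) := by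
      rw [← e2, Real.sqrt_sq (norm_nonneg _)]
    rw [he, gw, ee, e1, e2, e3]
  have hmp : MeasurePreserving (fun κ => e (A κ)) := hem.comp A.measurePreserving
  have hemb : MeasurableEmbedding (fun κ => e (A κ)) :=
    e.measurableEmbedding.comp A.toHomeomorph.measurableEmbedding
  have hFi : Integrable F := by
    rw [← hmp.integrable_comp_emb hemb]
    have : F ∘ (fun κ => e (A κ)) = fun κ => gw L τ κ * ee z κ := by
      ext κ; rw [h1]; rfl
    rw [this]
    refine (gw_int L τ hL).mul_bdd (c := 1) ?_ ?_
    · exact (ee_cont.comp (by fun_prop : Continuous fun κ : Ed 3 => (z, κ))).aestronglyMeasurable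
    · filter_upwards with κ; rw [ee_norm]
  simp_rw [h1]
  rw [hmp.integral_comp hemb F]
  have hvol : (volume : Measure (ℝ × (ℝ × ℝ))) = (volume : Measure ℝ).prod volume := rfl
  rw [hvol, integral_prod F (by rw [← hvol]; exact hFi)]
  have hb : ∀ᵐ k : ℝ, ‖∫ y, F (k, y)‖ ≤ (2 * Real.pi / |τ|) * (1 + 4 * Real.sqrt Real.pi) / Real.sqrt L *
      Real.exp (-(L / 4) * k ^ 2) := by
    have : ∀ᵐ k : ℝ, k ≠ 0 := by
      rw [ae_iff]; simp
    filter_upwards [this] with k hk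
    simp only [hF]
    rw [integral_mul_const, norm_mul]
    have : ‖Complex.exp (Complex.I * ((c * k : ℝ) : ℂ))‖ = 1 := by
      rw [mul_comm, Complex.norm_exp_ofReal_mul_I]
    rw [this, mul_one]
    exact plane_int L τ k hL hτ hk
  refine (norm_integral_le_of_norm_le ((integrable_exp_neg_mul_sq (by positivity)).const_mul _) hb).trans ?_
  rw [integral_const_mul, integral_gaussian,
    show Real.pi / (L / 4) = 2 ^ 2 * (Real.pi / L) by field_simp; ring,
      Real.sqrt_mul (by norm_num), Real.sqrt_sq (by norm_num), Real.sqrt_div Real.pi_pos.le]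
  have hsL : 0 < Real.sqrt L := Real.sqrt_pos.2 hL
  have ht : 0 < |τ| := abs_pos.2 hτ
  apply le_of_eq
  rw [C0]
  have := Real.mul_self_sqrt hL.le
  nth_rewrite 3 [← this]
  field_simp

open MeasureTheory ENNReal
open scoped RealInnerProductSpace

/-- Unnormalised inverse Fourier integral. -/
noncomputable def ck (f : Ed 3 → ℂ) (κ : Ed 3) : ℂ := ∫ x, f x * ee x κ

/-- The bilinear form. -/
noncomputable def BB (L τ : ℝ) (f g : Ed 3 → ℂ) : ℂ :=
  ∫ κ, gw L τ κ * (ck f κ * (starRingEnd ℂ) (ck g κ))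

theorem ee_meas : Measurable (fun q : Ed 3 × Ed 3 => ee q.1 q.2) := ee_cont.measurable

theorem ee_sub (x y κ : Ed 3) : ee x κ * (starRingEnd ℂ) (ee y κ) = ee (x - y) κ := by
  simp only [ee]
  rw [← Complex.exp_conj, ← Complex.exp_add]
  congr 1
  rw [inner_sub_left]
  simp only [map_mul, Complex.conj_I, Complex.conj_ofReal]
  push_cast
  ring

theorem ck_norm_le (f : Ed 3 → ℂ) (κ : Ed 3) : ‖ck f κ‖ ≤ ∫ x, ‖f x‖ := by
  refine (norm_integral_le_integral_norm _).trans (le_of_eq ?_)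
  simp_rw [norm_mul, ee_norm, mul_one]

theorem BB_le_kernel (L τ : ℝ) (hL : 0 < L) (f g : Ed 3 → ℂ) (hf : Measurable f) (hg : Measurable g)
    (hfi : Integrable f) (hgi : Integrable g) :
    ‖BB L τ f g‖ₑ ≤ ∫⁻ x, ∫⁻ y, ‖f x‖ₑ * ‖g y‖ₑ * ‖∫ κ, gw L τ κ * ee (x - y) κ‖ₑ := by
  have h := fubA (volume : Measure (Ed 3)) (volume : Measure (Ed 3))
    (fun x κ => f x * ee x κ) (fun x κ => (starRingEnd ℂ) (g x * ee x κ))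
    ((hf.comp measurable_fst).mul ee_meas)
    (Complex.continuous_conj.measurable.comp ((hg.comp measurable_fst).mul ee_meas))
    (fun x => ‖f x‖) (fun x => ‖g x‖) hfi.norm hgi.norm
    (fun x y => by rw [norm_mul, ee_norm, mul_one])
    (fun x y => by rw [RCLike.norm_conj, norm_mul, ee_norm, mul_one])
    (gw L τ) (gw_int L τ hL) (gw_cont L τ).measurable
  simp_rw [integral_conj] at h
  refine h.trans (le_of_eq ?_)
  congr 1; ext x; congr 1; ext y
  have : ∀ κ, gw L τ κ * (f x * ee x κ * (starRingEnd ℂ) (g y * ee y κ)) =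
      (f x * (starRingEnd ℂ) (g y)) * (gw L τ κ * ee (x - y) κ) := by
    intro κ
    rw [map_mul, ← ee_sub]; ring
  simp_rw [this]
  rw [integral_const_mul, enorm_mul, enorm_mul, RCLike.enorm_conj]

theorem BB_le_A (L τ : ℝ) (hL : 0 < L) (hτ : τ ≠ 0) (f g : Ed 3 → ℂ) (hf : Measurable f)
    (hg : Measurable g) (hfi : Integrable f) (hgi : Integrable g) :
    ‖BB L τ f g‖ₑ ≤ ENNReal.ofReal (C0 / (L * |τ|)) * ((∫⁻ x, ‖f x‖ₑ) * ∫⁻ y, ‖g y‖ₑ) := by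
  refine (BB_le_kernel L τ hL f g hf hg hfi hgi).trans ?_
  calc _ ≤ ∫⁻ x, ∫⁻ y, ENNReal.ofReal (C0 / (L * |τ|)) * ‖f x‖ₑ * ‖g y‖ₑ := by
        apply lintegral_mono; intro x
        apply lintegral_mono; intro y
        have : ‖∫ κ, gw L τ κ * ee (x - y) κ‖ₑ ≤ ENNReal.ofReal (C0 / (L * |τ|)) := by
          rw [← ofReal_norm]
          exact ENNReal.ofReal_le_ofReal (disp L τ hL hτ _)
        calc _ ≤ ‖f x‖ₑ * ‖g y‖ₑ * ENNReal.ofReal (C0 / (L * |τ|)) :=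
              mul_le_mul_right this _
          _ = _ := by ring
    _ = _ := by
        have : ∀ x, ∫⁻ y, ENNReal.ofReal (C0 / (L * |τ|)) * ‖f x‖ₑ * ‖g y‖ₑ =
            ENNReal.ofReal (C0 / (L * |τ|)) * (∫⁻ y, ‖g y‖ₑ) * ‖f x‖ₑ := by
          intro x
          rw [lintegral_const_mul _ hg.enorm]; ring
        simp_rw [this]
        rw [lintegral_const_mul _ hf.enorm]; ring

theorem gauss_ft (L : ℝ) (hL : 0 < L) (z : Ed 3) :
    ∫ κ, gw L 0 κ * ee z κ = (((Real.pi / (L / 2)) ^ ((3 : ℝ) / 2) *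
      Real.exp (-(1 / (2 * L)) * ‖z‖ ^ 2) : ℝ) : ℂ) := by
  have h := GaussianFourier.integral_cexp_neg_mul_sq_norm_add (b := ((L / 2 : ℝ) : ℂ))
    (by simpa using hL) Complex.I z
  have e : ∀ κ : Ed 3, gw L 0 κ * ee z κ =
      Complex.exp (-((L / 2 : ℝ) : ℂ) * ↑‖κ‖ ^ 2 + Complex.I * ↑(inner ℝ z κ)) := by
    intro κ
    rw [gw, ee, ← Complex.exp_add]
    congr 1
    push_cast; ring
  simp_rw [e]
  rw [h, finrank_euclideanSpace_fin]
  push_cast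
  rw [Complex.ofReal_cpow (by positivity)]
  congr 1
  · push_cast; rfl
  · rw [Complex.I_sq]
    congr 1
    have : (L : ℂ) ≠ 0 := by exact_mod_cast hL.ne'
    field_simp; ring

theorem kernel_mass (L : ℝ) (hL : 0 < L) :
    ∫⁻ z : Ed 3, ‖∫ κ, gw L 0 κ * ee z κ‖ₑ = ENNReal.ofReal ((2 * Real.pi) ^ 3) := by
  have hp := Real.pi_pos
  have e : ∀ z : Ed 3, ‖∫ κ, gw L 0 κ * ee z κ‖ₑ = ENNReal.ofReal ((Real.pi / (L / 2)) ^ ((3 : ℝ) / 2) *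
      Real.exp (-(1 / (2 * L)) * ‖z‖ ^ 2)) := by
    intro z
    rw [gauss_ft L hL, ← ofReal_norm, Complex.norm_real, Real.norm_of_nonneg (by positivity)]
  simp_rw [e]
  rw [← ofReal_integral_eq_lintegral_ofReal]
  · rw [integral_const_mul, GaussianFourier.integral_rexp_neg_mul_sq_norm (by positivity),
      finrank_euclideanSpace_fin, ]
    push_cast
    rw [← Real.mul_rpow (by positivity) (by positivity)]
    congr 1
    have : Real.pi / (L / 2) * (Real.pi / (1 / (2 * L))) = (2 * Real.pi) ^ (2 : ℝ) := by
      rw [Real.rpow_two]; field_simp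
    rw [this, ← Real.rpow_mul (by positivity)]
    rw [← Real.rpow_natCast]; norm_num
  · exact (rexp_int _ (by positivity)).const_mul _
  · filter_upwards with z; positivity

theorem schur (K a : Ed 3 → ℝ≥0∞) (hKm : Measurable K) (hKneg : ∀ z, K (-z) = K z)
    (ha : Measurable a) :
    ∫⁻ x, ∫⁻ y, a x * a y * K (x - y) ≤ (∫⁻ z, K z) * ∫⁻ x, a x ^ 2 := by
  have amgm : ∀ a b : ℝ≥0∞, 2 * (a * b) ≤ a ^ 2 + b ^ 2 := by
    intro a b
    rcases eq_or_ne a ⊤ with rfl | ha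
    · simp
    rcases eq_or_ne b ⊤ with rfl | hb
    · simp
    lift a to NNReal using ha
    lift b to NNReal using hb
    rw [← mul_assoc]
    exact_mod_cast two_mul_le_add_sq a b
  have hm2 : Measurable (fun q : Ed 3 × Ed 3 => a q.1 ^ 2 * K (q.1 - q.2)) :=
    ((ha.comp measurable_fst).pow_const 2).mul (hKm.comp (measurable_fst.sub measurable_snd))
  have hm3 : Measurable (fun q : Ed 3 × Ed 3 => a q.2 ^ 2 * K (q.1 - q.2)) :=
    ((ha.comp measurable_snd).pow_const 2).mul (hKm.comp (measurable_fst.sub measurable_snd))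
  have hX : ∫⁻ x, ∫⁻ y, a x ^ 2 * K (x - y) = (∫⁻ z, K z) * ∫⁻ x, a x ^ 2 := by
    have : ∀ x, ∫⁻ y, a x ^ 2 * K (x - y) = (∫⁻ z, K z) * a x ^ 2 := by
      intro x
      have hm4 : Measurable (fun y => K (x - y)) := hKm.comp (measurable_const.sub measurable_id)
      rw [lintegral_const_mul _ hm4, lintegral_sub_left_eq_self K x, mul_comm]
    simp_rw [this]
    rw [lintegral_const_mul _ (ha.pow_const 2)]
  have hY : ∫⁻ x, ∫⁻ y, a y ^ 2 * K (x - y) = (∫⁻ z, K z) * ∫⁻ x, a x ^ 2 := by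
    rw [lintegral_lintegral_swap hm3.aemeasurable, ← hX]
    have : ∀ x y, K (x - y) = K (y - x) := fun x y => by rw [← hKneg, neg_sub]
    congr 1; ext y; congr 1; ext x
    rw [this]
  have h2 : 2 * ∫⁻ x, ∫⁻ y, a x * a y * K (x - y) ≤ 2 * ((∫⁻ z, K z) * ∫⁻ x, a x ^ 2) := by
    calc _ = ∫⁻ x, ∫⁻ y, 2 * (a x * a y * K (x - y)) := by
          rw [← lintegral_const_mul' _ _ (by simp)]
          congr 1; ext x; rw [← lintegral_const_mul' _ _ (by simp)]
      _ ≤ ∫⁻ x, ∫⁻ y, (a x ^ 2 * K (x - y) + a y ^ 2 * K (x - y)) := by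
          apply lintegral_mono; intro x
          apply lintegral_mono; intro y
          simp only
          rw [← add_mul, ← mul_assoc]
          gcongr
          exact amgm _ _
      _ = (∫⁻ x, ∫⁻ y, a x ^ 2 * K (x - y)) + ∫⁻ x, ∫⁻ y, a y ^ 2 * K (x - y) := by
          rw [← lintegral_add_left hm2.lintegral_prod_right']
          congr 1; ext x
          have hm5 : Measurable (fun y => a x ^ 2 * K (x - y)) := hm2.comp measurable_prodMk_left
          rw [lintegral_add_left hm5]
      _ = _ := by rw [hX, hY, ← two_mul]
  exact (ENNReal.mul_le_mul_iff_right (by simp) (by simp)).1 h2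

theorem BB_diag (L : ℝ) (hL : 0 < L) (f : Ed 3 → ℂ) (hf : Measurable f) (hfi : Integrable f) :
    ‖BB L 0 f f‖ₑ ≤ ENNReal.ofReal ((2 * Real.pi) ^ 3) * ∫⁻ x, ‖f x‖ₑ ^ 2 := by
  refine (BB_le_kernel L 0 hL f f hf hf hfi hfi).trans ?_
  rw [← kernel_mass L hL]
  refine schur (fun z => ‖∫ κ, gw L 0 κ * ee z κ‖ₑ) (fun x => ‖f x‖ₑ) ?_ ?_ hf.enorm
  · have : Measurable (fun q : Ed 3 × Ed 3 => gw L 0 q.2 * ee q.1 q.2) :=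
      ((gw_cont L 0).measurable.comp measurable_snd).mul ee_meas
    exact (this.stronglyMeasurable.integral_prod_right').measurable.enorm
  · intro z; rw [gauss_ft L hL, gauss_ft L hL, norm_neg]

theorem ck_meas (f : Ed 3 → ℂ) (hf : Measurable f) : Measurable (ck f) := by
  have h1 : Measurable (fun q : Ed 3 × Ed 3 => ee q.2 q.1) := by
    unfold ee; fun_prop
  have : Measurable (fun q : Ed 3 × Ed 3 => f q.2 * ee q.2 q.1) :=
    (hf.comp measurable_snd).mul h1
  exact (this.stronglyMeasurable.integral_prod_right').measurable

theorem ck_L2 (L : ℝ) (hL : 0 < L) (f : Ed 3 → ℂ) (hf : Measurable f) (hfi : Integrable f) :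
    ∫⁻ κ, ENNReal.ofReal (Real.exp (-(L / 2) * ‖κ‖ ^ 2)) * ‖ck f κ‖ₑ ^ 2 ≤
      ENNReal.ofReal ((2 * Real.pi) ^ 3) * ∫⁻ x, ‖f x‖ₑ ^ 2 := by
  refine le_trans (le_of_eq ?_) (BB_diag L hL f hf hfi)
  have e : BB L 0 f f = ((∫ κ, Real.exp (-(L / 2) * ‖κ‖ ^ 2) * ‖ck f κ‖ ^ 2 : ℝ) : ℂ) := by
    rw [← integral_complex_ofReal, BB]
    congr 1; ext κ
    rw [Complex.mul_conj, Complex.normSq_eq_norm_sq, gw]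
    push_cast
    simp
  have hi : Integrable (fun κ : Ed 3 => Real.exp (-(L / 2) * ‖κ‖ ^ 2) * ‖ck f κ‖ ^ 2) := by
    refine (rexp_int (L / 2) (by positivity)).mul_bdd (c := (∫ x, ‖f x‖) ^ 2) ?_ ?_
    · exact ((ck_meas f hf).norm.pow_const 2).aestronglyMeasurable
    · filter_upwards with κ
      rw [Real.norm_of_nonneg (by positivity)]
      gcongr
      exact ck_norm_le f κ
  rw [e, ← ofReal_norm, Complex.norm_real, Real.norm_of_nonneg
    (integral_nonneg fun κ => by positivity), ofReal_integral_eq_lintegral_ofReal hi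
    (Filter.Eventually.of_forall fun κ => by positivity)]
  congr 1; ext κ
  rw [ENNReal.ofReal_mul (by positivity), ENNReal.ofReal_pow (by positivity), ofReal_norm]

theorem BB_le_M (L τ : ℝ) (hL : 0 < L) (f g : Ed 3 → ℂ) (hf : Measurable f)
    (hg : Measurable g) (hfi : Integrable f) (hgi : Integrable g) :
    ‖BB L τ f g‖ₑ ≤ ENNReal.ofReal ((2 * Real.pi) ^ 3) *
      ((∫⁻ x, ‖f x‖ₑ ^ 2) * ∫⁻ y, ‖g y‖ₑ ^ 2) ^ ((1 : ℝ) / 2) := by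
  have h1 := ck_L2 L hL f hf hfi
  have h2 := ck_L2 L hL g hg hgi
  set M := ENNReal.ofReal ((2 * Real.pi) ^ 3)
  set E : Ed 3 → ℝ≥0∞ := fun κ => ENNReal.ofReal (Real.exp (-(L / 2) * ‖κ‖ ^ 2)) with hE
  have hEm : Measurable E := by simp only [hE]; fun_prop
  have hc : (2 : ℝ).HolderConjugate 2 := Real.HolderConjugate.two_two
  have h3 := ENNReal.lintegral_mul_le_Lp_mul_Lq (volume : Measure (Ed 3)) hc
    (f := fun κ => E κ ^ ((1 : ℝ) / 2) * ‖ck f κ‖ₑ) (g := fun κ => E κ ^ ((1 : ℝ) / 2) * ‖ck g κ‖ₑ)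
    ((hEm.pow_const _).mul (ck_meas f hf).enorm).aemeasurable
    ((hEm.pow_const _).mul (ck_meas g hg).enorm).aemeasurable
  have e : ∀ h : Ed 3 → ℂ, ∀ κ, (E κ ^ ((1 : ℝ) / 2) * ‖ck h κ‖ₑ) ^ (2 : ℝ) = E κ * ‖ck h κ‖ₑ ^ 2 := by
    intro h κ
    rw [ENNReal.mul_rpow_of_nonneg _ _ (by norm_num), ← ENNReal.rpow_mul]
    norm_num
  simp_rw [e] at h3
  calc ‖BB L τ f g‖ₑ ≤ ∫⁻ κ, ‖gw L τ κ * (ck f κ * (starRingEnd ℂ) (ck g κ))‖ₑ :=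
        enorm_integral_le_lintegral_enorm _
    _ = ∫⁻ κ, ((fun κ => E κ ^ ((1 : ℝ) / 2) * ‖ck f κ‖ₑ) *
          (fun κ => E κ ^ ((1 : ℝ) / 2) * ‖ck g κ‖ₑ)) κ := by
        congr 1; ext κ
        rw [enorm_mul, enorm_mul, RCLike.enorm_conj, ← ofReal_norm (gw L τ κ), gw_norm, Pi.mul_apply]
        have : E κ = E κ ^ ((1 : ℝ) / 2) * E κ ^ ((1 : ℝ) / 2) := by
          rw [← ENNReal.rpow_add_of_nonneg _ _ (by norm_num) (by norm_num)]; norm_num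
        calc _ = E κ * (‖ck f κ‖ₑ * ‖ck g κ‖ₑ) := rfl
          _ = _ := by nth_rewrite 1 [this]; ring
    _ ≤ _ := h3
    _ ≤ (M * ∫⁻ x, ‖f x‖ₑ ^ 2) ^ ((1 : ℝ) / 2) * (M * ∫⁻ x, ‖g x‖ₑ ^ 2) ^ ((1 : ℝ) / 2) := by
        gcongr
    _ = _ := by
        rw [← ENNReal.mul_rpow_of_nonneg _ _ (by norm_num), mul_mul_mul_comm,
          ENNReal.mul_rpow_of_nonneg _ _ (by norm_num), ← sq, ← ENNReal.rpow_natCast, ← ENNReal.rpow_mul]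
        norm_num

open MeasureTheory ENNReal
open scoped RealInnerProductSpace

theorem interp_half (s c : ℝ) (hs1 : 1 < s) (hs2 : s < 2) (hc : 0 < c) (F : ℝ → ℝ≥0∞)
    (hFI : ∫⁻ μ in Set.Ioi (0 : ℝ), F μ * ENNReal.ofReal (μ ^ (s - 1)) ≤ 1) :
    ∫⁻ μ in Set.Ioi (0 : ℝ), ∫⁻ ν in Set.Ioi (0 : ℝ),
      (if ν ≤ c / μ then F μ * ENNReal.ofReal (μ ^ (s / 2) * ν ^ (-(s / 2))) else 0) ≤
      ENNReal.ofReal (c ^ (1 - s / 2) / (1 - s / 2)) := by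
  have h0 : 0 < 1 - s / 2 := by linarith
  have key : ∀ μ ∈ Set.Ioi (0 : ℝ), ∫⁻ ν in Set.Ioi (0 : ℝ),
      (if ν ≤ c / μ then F μ * ENNReal.ofReal (μ ^ (s / 2) * ν ^ (-(s / 2))) else 0) =
      ENNReal.ofReal (c ^ (1 - s / 2) / (1 - s / 2)) * (F μ * ENNReal.ofReal (μ ^ (s - 1))) := by
    intro μ hμ
    have hμ0 : 0 < μ := hμ
    have e : ∀ ν : ℝ, (if ν ≤ c / μ then F μ * ENNReal.ofReal (μ ^ (s / 2) * ν ^ (-(s / 2))) else 0) =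
        (Set.Iic (c / μ)).indicator
          (fun ν => (F μ * ENNReal.ofReal (μ ^ (s / 2))) * ENNReal.ofReal (ν ^ (-(s / 2)))) ν := by
      intro ν
      simp only [Set.indicator, Set.mem_Iic]
      rw [ENNReal.ofReal_mul (by positivity), mul_assoc]
    simp_rw [e]
    rw [setLIntegral_indicator measurableSet_Iic, Set.inter_comm, Set.Ioi_inter_Iic,
      lintegral_const_mul _ (by fun_prop), lint_rpow_Ioc _ _ (by linarith) (by positivity),
      mul_assoc, mul_left_comm (ENNReal.ofReal _) (F μ), ← ENNReal.ofReal_mul (by positivity),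
      ← ENNReal.ofReal_mul (by positivity)]
    congr 2
    have e2 : μ ^ (s / 2) = μ ^ (s - 1) * μ ^ (1 - s / 2) := by
      rw [← Real.rpow_add hμ0]; congr 1; ring
    have e3 : 0 < μ ^ (1 - s / 2) := by positivity
    rw [show -(s / 2) + 1 = 1 - s / 2 by ring, Real.div_rpow hc.le hμ0.le, e2]
    generalize μ ^ (1 - s / 2) = X at e3
    field_simp
  rw [setLIntegral_congr_fun measurableSet_Ioi key, lintegral_const_mul' _ _ ofReal_ne_top]
  calc _ ≤ ENNReal.ofReal (c ^ (1 - s / 2) / (1 - s / 2)) * 1 := by gcongr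
    _ = _ := mul_one _

theorem sqrt_le_add (a b : ℝ≥0∞) (x y : ℝ) (hx : 0 < x) (hxy : x * y = 1) :
    (a * b) ^ ((1 : ℝ) / 2) ≤ a * ENNReal.ofReal x + b * ENNReal.ofReal y := by
  have h1 : a * b = (a * ENNReal.ofReal x) * (b * ENNReal.ofReal y) := by
    rw [mul_mul_mul_comm, ← ENNReal.ofReal_mul hx.le, hxy]; simp
  rw [h1]
  set u := a * ENNReal.ofReal x
  set v := b * ENNReal.ofReal y
  calc (u * v) ^ ((1 : ℝ) / 2) ≤ ((u + v) * (u + v)) ^ ((1 : ℝ) / 2) := by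
        gcongr
        · exact le_self_add
        · exact le_add_self
    _ = u + v := by
        rw [← sq, ← ENNReal.rpow_natCast, ← ENNReal.rpow_mul]; norm_num

theorem interp_real (s A M : ℝ) (hs1 : 1 < s) (hs2 : s < 2) (hA : 0 < A) (hM : 0 ≤ M)
    (F G : ℝ → ℝ≥0∞) (hF : Measurable F) (hG : Measurable G)
    (hFI : ∫⁻ μ in Set.Ioi (0 : ℝ), F μ * ENNReal.ofReal (μ ^ (s - 1)) ≤ 1)
    (hGI : ∫⁻ μ in Set.Ioi (0 : ℝ), G μ * ENNReal.ofReal (μ ^ (s - 1)) ≤ 1)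
    (P : ℝ → ℝ → ℝ≥0∞) (hP1 : ∀ μ ν, 0 < μ → 0 < ν → P μ ν ≤ ENNReal.ofReal A * (F μ * G ν))
    (hP2 : ∀ μ ν, 0 < μ → 0 < ν → P μ ν ≤ ENNReal.ofReal M * (F μ * G ν) ^ ((1 : ℝ) / 2)) :
    ∫⁻ μ in Set.Ioi (0 : ℝ), ∫⁻ ν in Set.Ioi (0 : ℝ), P μ ν ≤
      ENNReal.ofReal ((1 + 2 * M / (1 - s / 2)) * A ^ (2 / s - 1)) := by
  have h0 : 0 < 1 - s / 2 := by linarith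
  have hs0 : 0 < s := by linarith
  set c := A ^ (2 / s) with hc
  have hc0 : 0 < c := by positivity
  set T : (ℝ → ℝ≥0∞) → ℝ → ℝ → ℝ≥0∞ := fun F μ ν =>
    (if ν ≤ c / μ then F μ * ENNReal.ofReal (μ ^ (s / 2) * ν ^ (-(s / 2))) else 0) with hT
  have hTm : ∀ F, Measurable F → Measurable (Function.uncurry (T F)) := by
    intro F hF
    apply Measurable.ite
    · exact measurableSet_le measurable_snd (measurable_const.div measurable_fst)
    · exact (hF.comp measurable_fst).mul (by fun_prop)
    · exact measurable_const
  set Q : ℝ → ℝ → ℝ≥0∞ := fun μ ν => ENNReal.ofReal (A * c ^ (1 - s)) *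
      ((F μ * ENNReal.ofReal (μ ^ (s - 1))) * (G ν * ENNReal.ofReal (ν ^ (s - 1)))) with hQ
  have hQm : Measurable (Function.uncurry Q) := by
    refine measurable_const.mul (Measurable.mul ?_ ?_)
    · exact (hF.comp measurable_fst).mul (by fun_prop)
    · exact (hG.comp measurable_snd).mul (by fun_prop)
  have hpt : ∀ μ ∈ Set.Ioi (0 : ℝ), ∀ ν ∈ Set.Ioi (0 : ℝ), P μ ν ≤
      Q μ ν + (ENNReal.ofReal M * T F μ ν + ENNReal.ofReal M * T G ν μ) := by
    intro μ hμ ν hν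
    have hμ0 : 0 < μ := hμ
    have hν0 : 0 < ν := hν
    by_cases h : μ * ν ≤ c
    · refine le_trans ?_ le_add_self
      refine (hP2 μ ν hμ hν).trans ?_
      rw [← mul_add]
      have h1 : ν ≤ c / μ := by rw [le_div_iff₀ hμ0]; linarith
      have h2 : μ ≤ c / ν := by rw [le_div_iff₀ hν0]; linarith
      simp only [hT, if_pos h1, if_pos h2]
      have := sqrt_le_add (F μ) (G ν) (μ ^ (s / 2) * ν ^ (-(s / 2))) (ν ^ (s / 2) * μ ^ (-(s / 2)))
        (by positivity) (by
          rw [Real.rpow_neg hν0.le, Real.rpow_neg hμ0.le]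
          field_simp)
      gcongr
    · refine le_trans ?_ le_self_add
      refine (hP1 μ ν hμ hν).trans ?_
      have h1 : 1 ≤ c ^ (1 - s) * (μ ^ (s - 1) * ν ^ (s - 1)) := by
        rw [← Real.mul_rpow hμ0.le hν0.le, show 1 - s = -(s - 1) by ring, Real.rpow_neg hc0.le,
          inv_mul_eq_div, one_le_div (by positivity)]
        exact Real.rpow_le_rpow hc0.le (not_le.1 h).le (by linarith)
      simp only [hQ]
      calc ENNReal.ofReal A * (F μ * G ν) = ENNReal.ofReal (A * 1) * (F μ * G ν) := by simp
        _ ≤ ENNReal.ofReal (A * (c ^ (1 - s) * (μ ^ (s - 1) * ν ^ (s - 1)))) * (F μ * G ν) := by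
            gcongr
        _ = _ := by
            rw [← mul_assoc A, ENNReal.ofReal_mul (by positivity), ENNReal.ofReal_mul (p := μ ^ (s - 1)) (by positivity)]
            ring
  have hI1 : ∫⁻ μ in Set.Ioi (0 : ℝ), ∫⁻ ν in Set.Ioi (0 : ℝ), Q μ ν ≤
      ENNReal.ofReal (A * c ^ (1 - s)) := by
    have hG' : Measurable (fun ν : ℝ => G ν * ENNReal.ofReal (ν ^ (s - 1))) := hG.mul (by fun_prop)
    have hF' : Measurable (fun ν : ℝ => F ν * ENNReal.ofReal (ν ^ (s - 1))) := hF.mul (by fun_prop)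
    simp only [hQ]
    simp_rw [lintegral_const_mul' _ _ ofReal_ne_top, lintegral_const_mul _ hG']
    rw [lintegral_mul_const _ hF']
    calc _ ≤ ENNReal.ofReal (A * c ^ (1 - s)) * (1 * 1) := by gcongr
      _ = _ := by simp
  have hI2 := interp_half s c hs1 hs2 hc0 F hFI
  have hI3 := interp_half s c hs1 hs2 hc0 G hGI
  change ∫⁻ μ in Set.Ioi (0 : ℝ), ∫⁻ ν in Set.Ioi (0 : ℝ), T F μ ν ≤ _ at hI2
  change ∫⁻ μ in Set.Ioi (0 : ℝ), ∫⁻ ν in Set.Ioi (0 : ℝ), T G μ ν ≤ _ at hI3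
  rw [lintegral_lintegral_swap (hTm G hG).aemeasurable] at hI3
  have hTF := hTm F hF
  have hTG : Measurable (Function.uncurry (fun μ ν => T G ν μ)) := (hTm G hG).comp measurable_swap
  calc _ ≤ ∫⁻ μ in Set.Ioi (0 : ℝ), ∫⁻ ν in Set.Ioi (0 : ℝ),
        (Q μ ν + (ENNReal.ofReal M * T F μ ν + ENNReal.ofReal M * T G ν μ)) := by
        apply setLIntegral_mono' measurableSet_Ioi; intro μ hμ
        apply setLIntegral_mono' measurableSet_Ioi; intro ν hν
        exact hpt μ hμ ν hν
    _ = (∫⁻ μ in Set.Ioi (0 : ℝ), ∫⁻ ν in Set.Ioi (0 : ℝ), Q μ ν) +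
        (ENNReal.ofReal M * (∫⁻ μ in Set.Ioi (0 : ℝ), ∫⁻ ν in Set.Ioi (0 : ℝ), T F μ ν) +
         ENNReal.ofReal M * ∫⁻ μ in Set.Ioi (0 : ℝ), ∫⁻ ν in Set.Ioi (0 : ℝ), T G ν μ) := by
        have e1 : ∀ μ, ∫⁻ ν in Set.Ioi (0 : ℝ),
          (Q μ ν + (ENNReal.ofReal M * T F μ ν + ENNReal.ofReal M * T G ν μ)) =
          (∫⁻ ν in Set.Ioi (0 : ℝ), Q μ ν) + (ENNReal.ofReal M * (∫⁻ ν in Set.Ioi (0 : ℝ), T F μ ν) +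
            ENNReal.ofReal M * ∫⁻ ν in Set.Ioi (0 : ℝ), T G ν μ) := by
          intro μ
          have m1 : Measurable (fun ν => Q μ ν) := hQm.comp measurable_prodMk_left
          have m2 : Measurable (fun ν => T F μ ν) := hTF.comp measurable_prodMk_left
          rw [lintegral_add_left m1, lintegral_add_left (m2.const_mul _),
            lintegral_const_mul' _ (T F μ) ofReal_ne_top,
            lintegral_const_mul' _ (fun ν => T G ν μ) ofReal_ne_top]
        simp_rw [e1]
        have n1 : Measurable (fun μ => ∫⁻ ν in Set.Ioi (0 : ℝ), Q μ ν) := hQm.lintegral_prod_right'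
        have n2 : Measurable (fun μ => ∫⁻ ν in Set.Ioi (0 : ℝ), T F μ ν) := hTF.lintegral_prod_right'
        rw [lintegral_add_left n1, lintegral_add_left (n2.const_mul _),
            lintegral_const_mul' _ _ ofReal_ne_top, lintegral_const_mul' _ _ ofReal_ne_top]
    _ ≤ ENNReal.ofReal (A * c ^ (1 - s)) + (ENNReal.ofReal M * ENNReal.ofReal (c ^ (1 - s / 2) / (1 - s / 2)) +
          ENNReal.ofReal M * ENNReal.ofReal (c ^ (1 - s / 2) / (1 - s / 2))) := by
        gcongr
    _ = _ := by
        rw [← ENNReal.ofReal_mul hM, ← ENNReal.ofReal_add (by positivity) (by positivity),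
          ← ENNReal.ofReal_add (by positivity) (by positivity)]
        congr 1
        have e1 : A * c ^ (1 - s) = A ^ (2 / s - 1) := by
          rw [hc, ← Real.rpow_mul hA.le]
          nth_rewrite 1 [← Real.rpow_one A]
          rw [← Real.rpow_add hA]
          congr 1; field_simp; ring
        have e2 : c ^ (1 - s / 2) = A ^ (2 / s - 1) := by
          rw [hc, ← Real.rpow_mul hA.le]
          congr 1; field_simp
        rw [e1, e2]; ring

open MeasureTheory ENNReal
open scoped RealInnerProductSpace

/-- Layer of `f` at height `μ`. -/
noncomputable def lay (f : Ed 3 → ℂ) (μ : ℝ) (x : Ed 3) : ℂ :=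
  if μ < ‖f x‖ then f x / (‖f x‖ : ℂ) else 0

theorem lay_meas (f : Ed 3 → ℂ) (hf : Measurable f) : Measurable (Function.uncurry (lay f)) := by
  apply Measurable.ite
  · exact measurableSet_lt measurable_fst (hf.comp measurable_snd).norm
  · exact (hf.comp measurable_snd).div
      (Complex.measurable_ofReal.comp (hf.comp measurable_snd).norm)
  · exact measurable_const

theorem lay_norm (f : Ed 3 → ℂ) (μ : ℝ) (hμ : 0 < μ) (x : Ed 3) :
    ‖lay f μ x‖ = if μ < ‖f x‖ then 1 else 0 := by
  unfold lay
  split_ifs with h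
  · rw [norm_div, Complex.norm_real, norm_norm, div_self (by linarith)]
  · simp

theorem lay_fun (f : Ed 3 → ℂ) (x : Ed 3) : (fun μ => lay f μ x) =
    (Set.Iio ‖f x‖).indicator (fun _ => f x / (‖f x‖ : ℂ)) := by
  ext μ; simp [lay, Set.indicator]

theorem lay_int1 (f : Ed 3 → ℂ) (x : Ed 3) :
    Integrable (fun μ => lay f μ x) (volume.restrict (Set.Ioi 0)) := by
  rw [lay_fun]
  rw [integrable_indicator_iff measurableSet_Iio, IntegrableOn, Measure.restrict_restrict measurableSet_Iio]
  rw [← IntegrableOn]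
  apply integrableOn_const
  · rw [Set.Iio_inter_Ioi]; simp
  · exact enorm_ne_top

theorem lay_integral (f : Ed 3 → ℂ) (x : Ed 3) :
    ∫ μ in Set.Ioi (0 : ℝ), lay f μ x = f x := by
  rw [lay_fun, setIntegral_indicator measurableSet_Iio, Set.Ioi_inter_Iio, setIntegral_const]
  simp only [Real.volume_real_Ioo, sub_zero, max_eq_left (norm_nonneg (f x))]
  rw [Complex.real_smul]
  rcases eq_or_ne (f x) 0 with h | h
  · simp [h]
  · have : (‖f x‖ : ℂ) ≠ 0 := by exact_mod_cast (norm_pos_iff.2 h).ne'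
    field_simp

theorem lay_integral_norm (f : Ed 3 → ℂ) (x : Ed 3) :
    ∫ μ in Set.Ioi (0 : ℝ), ‖lay f μ x‖ = ‖f x‖ := by
  have : ∫ μ in Set.Ioi (0 : ℝ), ‖lay f μ x‖ =
      ∫ μ in Set.Ioi (0 : ℝ), (Set.Iio ‖f x‖).indicator (fun _ => (1 : ℝ)) μ := by
    apply setIntegral_congr_fun measurableSet_Ioi
    intro μ hμ
    simp only [lay_norm f μ hμ]
    simp [Set.indicator]
  rw [this, setIntegral_indicator measurableSet_Iio, Set.Ioi_inter_Iio, setIntegral_const]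
  simp only [Real.volume_real_Ioo, sub_zero, max_eq_left (norm_nonneg (f x))]
  simp

theorem lay_int2 (f : Ed 3 → ℂ) (hf : Measurable f) (hfi : Integrable f) :
    Integrable (Function.uncurry (lay f)) ((volume.restrict (Set.Ioi 0)).prod volume) := by
  rw [integrable_prod_iff' (lay_meas f hf).aestronglyMeasurable]
  constructor
  · filter_upwards with x; exact lay_int1 f x
  · simp only [Function.uncurry_apply_pair]
    simp_rw [lay_integral_norm]
    exact hfi.norm

theorem lay_meas1 (f : Ed 3 → ℂ) (hf : Measurable f) (μ : ℝ) : Measurable (lay f μ) :=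
  (lay_meas f hf).comp measurable_prodMk_left

theorem lay_enorm (f : Ed 3 → ℂ) (hf : Measurable f) (μ : ℝ) (hμ : 0 < μ) (k : ℕ) (hk : k ≠ 0) :
    ∫⁻ x, ‖lay f μ x‖ₑ ^ k = volume {x | μ < ‖f x‖} := by
  have hm : MeasurableSet {x | μ < ‖f x‖} := measurableSet_lt measurable_const hf.norm
  rw [← lintegral_indicator_one hm]
  congr 1; ext x
  rw [← ofReal_norm, lay_norm f μ hμ]
  by_cases h : μ < ‖f x‖ <;> simp [h, hk]

theorem lay_fin (f : Ed 3 → ℂ) (hfi : Integrable f) (μ : ℝ) (hμ : 0 < μ) :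
    volume {x | μ < ‖f x‖} < ⊤ := by
  refine lt_of_le_of_lt (measure_mono fun x hx => ?_) (hfi.measure_norm_ge_lt_top hμ)
  exact (le_of_lt hx : μ ≤ ‖f x‖)

theorem lay_integrable (f : Ed 3 → ℂ) (hf : Measurable f) (hfi : Integrable f) (μ : ℝ) (hμ : 0 < μ) :
    Integrable (lay f μ) := by
  refine ⟨(lay_meas1 f hf μ).aestronglyMeasurable, ?_⟩
  rw [hasFiniteIntegral_iff_enorm]
  have := lay_enorm f hf μ hμ 1 one_ne_zero
  simp only [pow_one] at this
  rw [this]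
  exact lay_fin f hfi μ hμ

theorem ck_lay (f : Ed 3 → ℂ) (hf : Measurable f) (hfi : Integrable f) (κ : Ed 3) :
    ck f κ = ∫ μ in Set.Ioi (0 : ℝ), ck (lay f μ) κ := by
  unfold ck
  have hi : Integrable (Function.uncurry (fun μ x => lay f μ x * ee x κ))
      ((volume.restrict (Set.Ioi 0)).prod volume) := by
    refine (lay_int2 f hf hfi).mul_bdd (c := 1) ?_ ?_
    · have h1 : Measurable (fun q : ℝ × Ed 3 => ee q.2 κ) := by
        unfold ee; fun_prop
      exact h1.aestronglyMeasurable
    · filter_upwards with q; rw [ee_norm]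
  rw [integral_integral_swap hi]
  congr 1; ext x
  rw [integral_mul_const, lay_integral]

theorem ck_lay_meas (f : Ed 3 → ℂ) (hf : Measurable f) :
    Measurable (Function.uncurry (fun μ κ => ck (lay f μ) κ)) := by
  have h0 : Measurable (fun q : (ℝ × Ed 3) × Ed 3 => lay f q.1.1 q.2) :=
    (lay_meas f hf).comp ((measurable_fst.comp measurable_fst).prodMk measurable_snd)
  have h1 : Measurable (fun q : (ℝ × Ed 3) × Ed 3 => ee q.2 q.1.2) := by
    unfold ee; fun_prop
  exact ((h0.mul h1).stronglyMeasurable.integral_prod_right').measurable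

theorem BB_layer (L τ : ℝ) (hL : 0 < L) (f g : Ed 3 → ℂ) (hf : Measurable f) (hg : Measurable g)
    (hfi : Integrable f) (hgi : Integrable g) :
    ‖BB L τ f g‖ₑ ≤ ∫⁻ μ in Set.Ioi (0 : ℝ), ∫⁻ ν in Set.Ioi (0 : ℝ),
      ‖BB L τ (lay f μ) (lay g ν)‖ₑ := by
  have h := fubA (volume.restrict (Set.Ioi (0 : ℝ))) (volume : Measure (Ed 3))
    (fun μ κ => ck (lay f μ) κ) (fun μ κ => (starRingEnd ℂ) (ck (lay g μ) κ))
    (ck_lay_meas f hf) (Complex.continuous_conj.measurable.comp (ck_lay_meas g hg))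
    (fun μ => ∫ x, ‖lay f μ x‖) (fun μ => ∫ x, ‖lay g μ x‖)
    (lay_int2 f hf hfi).integral_norm_prod_left (lay_int2 g hg hgi).integral_norm_prod_left
    (fun μ κ => ck_norm_le _ κ) (fun μ κ => by rw [RCLike.norm_conj]; exact ck_norm_le _ κ)
    (gw L τ) (gw_int L τ hL) (gw_cont L τ).measurable
  simp_rw [integral_conj, ← ck_lay f hf hfi, ← ck_lay g hg hgi] at h
  exact h

theorem lay_Lp (s : ℝ) (hs : 1 < s) (f : Ed 3 → ℂ) (hf : Measurable f)
    (h : ∫⁻ x, ‖f x‖ₑ ^ s ≤ 1) :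
    ∫⁻ μ in Set.Ioi (0 : ℝ), volume {x | μ < ‖f x‖} * ENNReal.ofReal (μ ^ (s - 1)) ≤ 1 := by
  have h1 := lintegral_rpow_eq_lintegral_meas_lt_mul (volume : Measure (Ed 3)) (f := fun x => ‖f x‖)
    (Filter.Eventually.of_forall fun x => norm_nonneg _) hf.norm.aemeasurable (p := s) (by linarith)
  have h2 : ∫⁻ x, ENNReal.ofReal (‖f x‖ ^ s) = ∫⁻ x, ‖f x‖ₑ ^ s := by
    congr 1; ext x
    rw [← ENNReal.ofReal_rpow_of_nonneg (norm_nonneg _) (by linarith), ofReal_norm]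
  rw [h2] at h1
  calc _ = 1 * ∫⁻ μ in Set.Ioi (0 : ℝ), volume {x | μ < ‖f x‖} * ENNReal.ofReal (μ ^ (s - 1)) :=
        (one_mul _).symm
    _ ≤ ENNReal.ofReal s * ∫⁻ μ in Set.Ioi (0 : ℝ), volume {x | μ < ‖f x‖} * ENNReal.ofReal (μ ^ (s - 1)) := by
        gcongr
        rw [ENNReal.one_le_ofReal]; exact hs.le
    _ ≤ 1 := by rw [← h1]; exact h

theorem lemI (s : ℝ) (hs1 : 1 < s) (hs2 : s < 2) (L τ : ℝ) (hL : 0 < L) (hτ : τ ≠ 0)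
    (f g : Ed 3 → ℂ) (hf : Measurable f) (hg : Measurable g)
    (hfi : Integrable f) (hgi : Integrable g) (hfs : ∫⁻ x, ‖f x‖ₑ ^ s ≤ 1) (hgs : ∫⁻ x, ‖g x‖ₑ ^ s ≤ 1) :
    ‖BB L τ f g‖ₑ ≤ ENNReal.ofReal ((1 + 2 * (2 * Real.pi) ^ 3 / (1 - s / 2)) *
      (C0 / (L * |τ|)) ^ (2 / s - 1)) := by
  refine (BB_layer L τ hL f g hf hg hfi hgi).trans ?_
  have hA : 0 < C0 / (L * |τ|) := div_pos C0_pos (mul_pos hL (abs_pos.2 hτ))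
  have hanti : ∀ f : Ed 3 → ℂ, Measurable (fun μ : ℝ => volume {x | μ < ‖f x‖}) := by
    intro f
    apply Antitone.measurable
    intro a b hab
    exact measure_mono fun x hx => lt_of_le_of_lt hab hx
  refine interp_real s _ ((2 * Real.pi) ^ 3) hs1 hs2 hA (by have := Real.pi_pos; positivity)
    (fun μ => volume {x | μ < ‖f x‖}) (fun μ => volume {x | μ < ‖g x‖}) (hanti f) (hanti g)
    (lay_Lp s hs1 f hf hfs) (lay_Lp s hs1 g hg hgs) _ ?_ ?_
  · intro μ ν hμ hν
    refine (BB_le_A L τ hL hτ _ _ (lay_meas1 f hf μ) (lay_meas1 g hg ν) (lay_integrable f hf hfi μ hμ)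
      (lay_integrable g hg hgi ν hν)).trans (le_of_eq ?_)
    have e1 := lay_enorm f hf μ hμ 1 one_ne_zero
    have e2 := lay_enorm g hg ν hν 1 one_ne_zero
    simp only [pow_one] at e1 e2
    rw [e1, e2]
  · intro μ ν hμ hν
    refine (BB_le_M L τ hL _ _ (lay_meas1 f hf μ) (lay_meas1 g hg ν) (lay_integrable f hf hfi μ hμ)
      (lay_integrable g hg hgi ν hν)).trans (le_of_eq ?_)
    rw [lay_enorm f hf μ hμ 2 two_ne_zero, lay_enorm g hg ν hν 2 two_ne_zero]

open MeasureTheory ENNReal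
open scoped RealInnerProductSpace

/-- Frequency localised half-wave. -/
noncomputable def vv (L : ℝ) (a : Ed 3 → ℂ) (t : ℝ) (x : Ed 3) : ℂ :=
  ∫ κ, gw (L / 2) t κ * ee x κ * a κ

/-- The phase `e^{it|κ|}`. -/
noncomputable def ph (t : ℝ) (κ : Ed 3) : ℂ := Complex.exp (Complex.I * ((t * ‖κ‖ : ℝ) : ℂ))

theorem ph_norm (t : ℝ) (κ : Ed 3) : ‖ph t κ‖ = 1 := by
  rw [ph, mul_comm, Complex.norm_exp_ofReal_mul_I]

theorem ph_meas : Measurable (fun q : ℝ × Ed 3 => ph q.1 q.2) := by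
  unfold ph; fun_prop

theorem gw_ph (L t : ℝ) (κ : Ed 3) : gw L t κ = gw L 0 κ * ph t κ := by
  rw [gw, gw, ph, ← Complex.exp_add]; congr 1; push_cast; ring

theorem gw_ph2 (L t s : ℝ) (κ : Ed 3) :
    gw L 0 κ * (ph t κ * (starRingEnd ℂ) (ph s κ)) = gw L (t - s) κ := by
  simp only [ph, gw]
  rw [← Complex.exp_conj, ← Complex.exp_add, ← Complex.exp_add]
  congr 1
  simp only [map_mul, Complex.conj_I, Complex.conj_ofReal]
  push_cast; ring

theorem gauss_sq (L : ℝ) (hL : 0 < L) (b : Ed 3 → ℂ) (hb : Measurable b) (D : ℝ)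
    (hD : ∀ κ, ‖b κ‖ ≤ D) :
    ∫⁻ κ, ENNReal.ofReal (Real.exp (-(L / 2) * ‖κ‖ ^ 2)) * ‖b κ‖ₑ ^ 2 =
      ‖∫ κ, gw L 0 κ * (b κ * (starRingEnd ℂ) (b κ))‖ₑ := by
  have e : ∫ κ, gw L 0 κ * (b κ * (starRingEnd ℂ) (b κ)) =
      ((∫ κ, Real.exp (-(L / 2) * ‖κ‖ ^ 2) * ‖b κ‖ ^ 2 : ℝ) : ℂ) := by
    rw [← integral_complex_ofReal]
    congr 1; ext κ
    rw [Complex.mul_conj, Complex.normSq_eq_norm_sq, gw]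
    push_cast
    simp
  have hi : Integrable (fun κ : Ed 3 => Real.exp (-(L / 2) * ‖κ‖ ^ 2) * ‖b κ‖ ^ 2) := by
    refine (rexp_int (L / 2) (by positivity)).mul_bdd (c := D ^ 2) ?_ ?_
    · exact (hb.norm.pow_const 2).aestronglyMeasurable
    · filter_upwards with κ
      rw [Real.norm_of_nonneg (by positivity)]
      gcongr
      exact hD κ
  rw [e, ← ofReal_norm, Complex.norm_real, Real.norm_of_nonneg
    (integral_nonneg fun κ => by positivity), ofReal_integral_eq_lintegral_ofReal hi
    (Filter.Eventually.of_forall fun κ => by positivity)]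
  congr 1; ext κ
  rw [ENNReal.ofReal_mul (by positivity), ENNReal.ofReal_pow (by positivity), ofReal_norm]

theorem ckt_meas (f : ℝ → Ed 3 → ℂ) (hf : Measurable (Function.uncurry f)) :
    Measurable (Function.uncurry (fun t κ => ck (f t) κ)) := by
  have h0 : Measurable (fun q : (ℝ × Ed 3) × Ed 3 => f q.1.1 q.2) :=
    hf.comp ((measurable_fst.comp measurable_fst).prodMk measurable_snd)
  have h1 : Measurable (fun q : (ℝ × Ed 3) × Ed 3 => ee q.2 q.1.2) := by
    unfold ee; fun_prop
  exact ((h0.mul h1).stronglyMeasurable.integral_prod_right').measurable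

/-- The Strichartz constant (squared). -/
noncomputable def CS2 (s : ℝ) : ℝ := (1 + 2 * (2 * Real.pi) ^ 3 / (1 - s / 2)) * C0 ^ (2 / s - 1) *
  (2 * (2 / (1 - (2 / s - 1)) + 2))

theorem dual_b (q q' s : ℝ) (hq : 2 < q) (hq' : q' = q / (q - 1)) (hs1 : 1 < s) (hs2 : s < 2)
    (hsq : 2 / s - 1 = 2 / q) (L : ℝ) (hL : 0 < L)
    (f : ℝ → Ed 3 → ℂ) (hf : Measurable (Function.uncurry f)) (D : ℝ)
    (hfi : ∀ t, Integrable (f t)) (hfD : ∀ t, ∫ x, ‖f t x‖ ≤ D) (hfs : ∀ t, ∫⁻ x, ‖f t x‖ₑ ^ s ≤ 1)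
    (n : ℝ → ℝ) (hn : Measurable n) (hn0 : ∀ t, 0 ≤ n t) (hni : Integrable n) (J : ℝ) (hJ : 0 < J)
    (hnJ : ∫⁻ t, ENNReal.ofReal (n t ^ q') ≤ ENNReal.ofReal J) :
    ∫⁻ κ, ENNReal.ofReal (Real.exp (-(L / 2) * ‖κ‖ ^ 2)) * ‖∫ t, (n t : ℂ) * ph t κ * ck (f t) κ‖ₑ ^ 2
      ≤ ENNReal.ofReal (CS2 s * L ^ (-(2 / q)) * J ^ (2 / q')) := by
  have hq0 : 0 < q := by linarith
  have hcm : Measurable (Function.uncurry (fun t κ => (n t : ℂ) * ph t κ * ck (f t) κ)) :=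
    ((Complex.measurable_ofReal.comp (hn.comp measurable_fst)).mul ph_meas).mul (ckt_meas f hf)
  have hcn : ∀ t κ, ‖(n t : ℂ) * ph t κ * ck (f t) κ‖ ≤ n t * D := by
    intro t κ
    rw [norm_mul, norm_mul, ph_norm, mul_one, Complex.norm_real, Real.norm_of_nonneg (hn0 t)]
    exact mul_le_mul_of_nonneg_left ((ck_norm_le _ κ).trans (hfD t)) (hn0 t)
  have hbm : Measurable (fun κ => ∫ t, (n t : ℂ) * ph t κ * ck (f t) κ) :=
    ((hcm.comp measurable_swap).stronglyMeasurable.integral_prod_right').measurable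
  rw [gauss_sq L hL _ hbm (∫ t, n t * D) (fun κ => norm_integral_le_of_norm_le (hni.mul_const D)
    (Filter.Eventually.of_forall fun t => hcn t κ))]
  have h := fubA (volume : Measure ℝ) (volume : Measure (Ed 3))
    (fun t κ => (n t : ℂ) * ph t κ * ck (f t) κ)
    (fun t κ => (starRingEnd ℂ) ((n t : ℂ) * ph t κ * ck (f t) κ))
    hcm (Complex.continuous_conj.measurable.comp hcm) (fun t => n t * D) (fun t => n t * D)
    (hni.mul_const D) (hni.mul_const D) hcn (fun t κ => by rw [RCLike.norm_conj]; exact hcn t κ)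
    (gw L 0) (gw_int L 0 hL) (gw_cont L 0).measurable
  simp_rw [integral_conj] at h
  refine h.trans ?_
  set CI := (1 + 2 * (2 * Real.pi) ^ 3 / (1 - s / 2)) with hCI
  have hCI0 : 0 < CI := by
    have := Real.pi_pos
    have : 0 < 1 - s / 2 := by linarith
    positivity
  have hC0 := C0_pos
  calc _ ≤ ∫⁻ t, ∫⁻ u, ENNReal.ofReal (CI * C0 ^ (2 / s - 1) * L ^ (-(2 / q))) *
          ENNReal.ofReal (n t * n u * |t - u| ^ (-(2 / q))) := by
        apply lintegral_mono; intro t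
        apply lintegral_mono_ae
        have hne : ∀ᵐ u : ℝ, u ≠ t := by rw [ae_iff]; simp
        filter_upwards [hne] with u hu
        have htu : t - u ≠ 0 := sub_ne_zero.2 hu.symm
        have e1 : ∫ κ, gw L 0 κ * ((n t : ℂ) * ph t κ * ck (f t) κ *
            (starRingEnd ℂ) ((n u : ℂ) * ph u κ * ck (f u) κ)) =
            ((n t * n u : ℝ) : ℂ) * BB L (t - u) (f t) (f u) := by
          rw [BB, ← integral_const_mul]
          congr 1; ext κ
          rw [← gw_ph2, map_mul, map_mul, Complex.conj_ofReal]
          push_cast; ring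
        have e1' := congrArg (fun z : ℂ => ‖z‖ₑ) e1
        rw [e1', enorm_mul]
        have hb := lemI s hs1 hs2 L (t - u) hL htu (f t) (f u) (hf.comp measurable_prodMk_left)
          (hf.comp measurable_prodMk_left) (hfi t) (hfi u) (hfs t) (hfs u)
        have hnn : 0 ≤ n t * n u := mul_nonneg (hn0 t) (hn0 u)
        have e2 : ‖((n t * n u : ℝ) : ℂ)‖ₑ = ENNReal.ofReal (n t * n u) := by
          rw [← ofReal_norm, Complex.norm_real, Real.norm_of_nonneg hnn]
        rw [e2]
        have habs : 0 < |t - u| := abs_pos.2 htu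
        calc _ ≤ ENNReal.ofReal (n t * n u) * ENNReal.ofReal (CI * (C0 / (L * |t - u|)) ^ (2 / s - 1)) := by
              gcongr
          _ = _ := by
              rw [← ENNReal.ofReal_mul hnn, ← ENNReal.ofReal_mul (by positivity)]
              congr 1
              rw [Real.div_rpow hC0.le (by positivity), Real.mul_rpow hL.le habs.le, ← hsq,
                Real.rpow_neg hL.le, Real.rpow_neg habs.le]
              field_simp
    _ = ENNReal.ofReal (CI * C0 ^ (2 / s - 1) * L ^ (-(2 / q))) *
          ∫⁻ t, ∫⁻ u, ENNReal.ofReal (n t * n u * |t - u| ^ (-(2 / q))) := by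
        simp_rw [lintegral_const_mul' _ _ ofReal_ne_top]
    _ ≤ ENNReal.ofReal (CI * C0 ^ (2 / s - 1) * L ^ (-(2 / q))) *
          ENNReal.ofReal (2 * (2 / (1 - 2 / q) + 2) * J ^ (2 / q')) := by
        gcongr
        exact hls q q' (2 / q) hq hq' rfl n hn hn0 J hJ hnJ
    _ = _ := by
        rw [← ENNReal.ofReal_mul (by positivity), CS2, hsq]
        congr 1; ring

theorem dualStr (q q' s : ℝ) (hq : 2 < q) (hq' : q' = q / (q - 1)) (hs1 : 1 < s) (hs2 : s < 2)
    (hsq : 2 / s - 1 = 2 / q) (L : ℝ) (hL : 0 < L) (a : Ed 3 → ℂ) (ha : Measurable a)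
    (hai : Integrable a)
    (f : ℝ → Ed 3 → ℂ) (hf : Measurable (Function.uncurry f)) (D : ℝ)
    (hfi : ∀ t, Integrable (f t)) (hfD : ∀ t, ∫ x, ‖f t x‖ ≤ D) (hfs : ∀ t, ∫⁻ x, ‖f t x‖ₑ ^ s ≤ 1)
    (n : ℝ → ℝ) (hn : Measurable n) (hn0 : ∀ t, 0 ≤ n t) (hni : Integrable n) (J : ℝ) (hJ : 0 < J)
    (hnJ : ∫⁻ t, ENNReal.ofReal (n t ^ q') ≤ ENNReal.ofReal J) :
    ‖∫ t, (n t : ℂ) * ∫ x, f t x * vv L a t x‖ₑ ≤ (∫⁻ κ, ‖a κ‖ₑ ^ 2) ^ ((1 : ℝ) / 2) *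
      ENNReal.ofReal (CS2 s * L ^ (-(2 / q)) * J ^ (2 / q')) ^ ((1 : ℝ) / 2) := by
  have hgb : ∀ t κ, ‖gw (L / 2) t κ‖ ≤ 1 := by
    intro t κ
    rw [gw_norm]; apply Real.exp_le_one_iff.2
    have : 0 ≤ L / 2 / 2 * ‖κ‖ ^ 2 := by positivity
    linarith
  have hcm : Measurable (Function.uncurry (fun t κ => (n t : ℂ) * ph t κ * ck (f t) κ)) :=
    ((Complex.measurable_ofReal.comp (hn.comp measurable_fst)).mul ph_meas).mul (ckt_meas f hf)
  have hbm : Measurable (fun κ => ∫ t, (n t : ℂ) * ph t κ * ck (f t) κ) :=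
    ((hcm.comp measurable_swap).stronglyMeasurable.integral_prod_right').measurable
  have h1 : ∀ t, ∫ x, f t x * vv L a t x = ∫ κ, a κ * gw (L / 2) t κ * ck (f t) κ := by
    intro t
    have e1 : ∀ x, f t x * vv L a t x = ∫ κ, f t x * (gw (L / 2) t κ * ee x κ * a κ) := by
      intro x; rw [vv, integral_const_mul]
    simp_rw [e1]
    rw [integral_integral_swap]
    · congr 1; ext κ
      rw [ck, ← integral_const_mul]
      congr 1; ext x; ring
    · refine Integrable.mono' ((hfi t).norm.mul_prod hai.norm) ?_ ?_
      · have m1 : Measurable (f t) := hf.comp measurable_prodMk_left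
        exact ((m1.comp measurable_fst).mul ((((gw_cont _ _).measurable.comp measurable_snd).mul
          ee_meas).mul (ha.comp measurable_snd))).aestronglyMeasurable
      · filter_upwards with z
        simp only [Function.uncurry]
        rw [norm_mul, norm_mul, norm_mul, ee_norm, mul_one]
        have := hgb t z.2
        have h2 : ‖gw (L / 2) t z.2‖ * ‖a z.2‖ ≤ 1 * ‖a z.2‖ := by gcongr
        rw [one_mul] at h2
        gcongr
  have h2 : ∫ t, (n t : ℂ) * ∫ x, f t x * vv L a t x =
      ∫ κ, a κ * gw (L / 2) 0 κ * ∫ t, (n t : ℂ) * ph t κ * ck (f t) κ := by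
    simp_rw [h1, ← integral_const_mul]
    rw [integral_integral_swap]
    · congr 1; ext κ
      congr 1; ext t
      rw [gw_ph]; ring
    · refine Integrable.mono' ((hni.mul_const D).mul_prod hai.norm) ?_ ?_
      · have m1 : Measurable (fun z : ℝ × Ed 3 => gw (L / 2) z.1 z.2) := by
          unfold gw; fun_prop
        exact ((Complex.measurable_ofReal.comp (hn.comp measurable_fst)).mul
          (((ha.comp measurable_snd).mul m1).mul (ckt_meas f hf))).aestronglyMeasurable
      · filter_upwards with z
        simp only [Function.uncurry]
        rw [norm_mul, norm_mul, norm_mul, Complex.norm_real, Real.norm_of_nonneg (hn0 z.1)]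
        have h3 := hgb z.1 z.2
        have h4 := (ck_norm_le (f z.1) z.2).trans (hfD z.1)
        have h5 := hn0 z.1
        calc _ ≤ n z.1 * (‖a z.2‖ * 1 * D) := by gcongr
          _ = _ := by ring
  rw [h2]
  have h3 := dual_b q q' s hq hq' hs1 hs2 hsq L hL f hf D hfi hfD hfs n hn hn0 hni J hJ hnJ
  set b : Ed 3 → ℂ := fun κ => ∫ t, (n t : ℂ) * ph t κ * ck (f t) κ with hb
  have hc : (2 : ℝ).HolderConjugate 2 := Real.HolderConjugate.two_two
  have hgm : Measurable (gw (L / 2) 0) := (gw_cont _ _).measurable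
  have h4 := ENNReal.lintegral_mul_le_Lp_mul_Lq (volume : Measure (Ed 3)) hc
    (f := fun κ => ‖a κ‖ₑ) (g := fun κ => ‖gw (L / 2) 0 κ‖ₑ * ‖b κ‖ₑ)
    ha.enorm.aemeasurable (hgm.enorm.mul hbm.enorm).aemeasurable
  have e5 : ∀ κ, (‖gw (L / 2) 0 κ‖ₑ * ‖b κ‖ₑ) ^ (2 : ℝ) =
      ENNReal.ofReal (Real.exp (-(L / 2) * ‖κ‖ ^ 2)) * ‖b κ‖ₑ ^ 2 := by
    intro κ
    rw [ENNReal.mul_rpow_of_nonneg _ _ (by norm_num), ENNReal.rpow_two, ENNReal.rpow_two,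
      ← ofReal_norm (gw (L / 2) 0 κ), gw_norm, ← ENNReal.ofReal_pow (by positivity), ← Real.exp_nat_mul]
    congr 3
    push_cast; ring
  simp_rw [e5, ENNReal.rpow_two] at h4
  calc _ ≤ ∫⁻ κ, ‖a κ * gw (L / 2) 0 κ * b κ‖ₑ := enorm_integral_le_lintegral_enorm _
    _ = ∫⁻ κ, ((fun κ => ‖a κ‖ₑ) * (fun κ => ‖gw (L / 2) 0 κ‖ₑ * ‖b κ‖ₑ)) κ := by
        congr 1; ext κ
        rw [enorm_mul, enorm_mul, Pi.mul_apply, mul_assoc]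
    _ ≤ _ := h4
    _ ≤ _ := by gcongr

open MeasureTheory ENNReal
open scoped RealInnerProductSpace

theorem vv_meas (L : ℝ) (a : Ed 3 → ℂ) (ha : Measurable a) :
    Measurable (Function.uncurry (vv L a)) := by
  have m1 : Measurable (fun z : (ℝ × Ed 3) × Ed 3 => gw (L / 2) z.1.1 z.2) := by
    unfold gw; fun_prop
  have m2 : Measurable (fun z : (ℝ × Ed 3) × Ed 3 => ee z.1.2 z.2) := by
    unfold ee; fun_prop
  exact (((m1.mul m2).mul (ha.comp measurable_snd)).stronglyMeasurable.integral_prod_right').measurable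

theorem vv_bdd (L : ℝ) (hL : 0 < L) (a : Ed 3 → ℂ) (hai : Integrable a) (t : ℝ) (x : Ed 3) :
    ‖vv L a t x‖ ≤ ∫ κ, ‖a κ‖ := by
  refine norm_integral_le_of_norm_le hai.norm ?_
  filter_upwards with κ
  rw [norm_mul, norm_mul, gw_norm, ee_norm, mul_one]
  refine mul_le_of_le_one_left (norm_nonneg _) ?_
  rw [Real.exp_le_one_iff]
  have : 0 ≤ L / 2 / 2 * ‖κ‖ ^ 2 := by positivity
  linarith

theorem trunc_str (p q : ℝ) (hp : 2 < p) (hq : q = 2 * p / (p - 2)) (L : ℝ) (hL : 0 < L)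
    (a : Ed 3 → ℂ) (ha : Measurable a) (hai : Integrable a) (R : ℝ) :
    (∫⁻ t in Set.Icc (-R) R, (∫⁻ x in Metric.closedBall 0 R, ‖vv L a t x‖ₑ ^ p) ^ (q / p)) ^ (1 / q)
      ≤ (∫⁻ κ, ‖a κ‖ₑ ^ 2) ^ (1 / 2 : ℝ) *
        ENNReal.ofReal (CS2 (p / (p - 1)) * L ^ (-(2 / q))) ^ (1 / 2 : ℝ) := by
  set s := p / (p - 1) with hs
  have hp1 : 0 < p - 1 := by linarith
  have hp0 : 0 < p := by linarith
  have hp2 : 0 < p - 2 := by linarith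
  have hs1 : 1 < s := by rw [hs, lt_div_iff₀ hp1]; linarith
  have hs2 : s < 2 := by rw [hs, div_lt_iff₀ hp1]; linarith
  have hs0 : 0 < s := by linarith
  have hq2 : 2 < q := by rw [hq, lt_div_iff₀ hp2]; linarith
  have hq0 : 0 < q := by linarith
  have hq1 : 0 < q - 1 := by linarith
  have hsq : 2 / s - 1 = 2 / q := by rw [hs, hq]; field_simp; ring
  set q' := q / (q - 1) with hq'
  have hq'0 : 0 < q' := by positivity
  set A := ∫ κ, ‖a κ‖ with hA
  have hA0 : 0 ≤ A := integral_nonneg fun _ => norm_nonneg _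
  have hvm := vv_meas L a ha
  have hvb := vv_bdd L hL a hai
  set v := vv L a with hv
  set E : Set (ℝ × Ed 3) := Set.Icc (-R) R ×ˢ Metric.closedBall 0 R with hE
  have hEm : MeasurableSet E := measurableSet_Icc.prod Metric.isClosed_closedBall.measurableSet
  set V : ℝ → Ed 3 → ℂ := fun t x => E.indicator (Function.uncurry v) (t, x) with hV
  have hVm : Measurable (Function.uncurry V) := hvm.indicator hEm
  have hVb : ∀ t x, ‖V t x‖ ≤ (Metric.closedBall (0 : Ed 3) R).indicator (fun _ => A) x := by
    intro t x
    by_cases h : (t, x) ∈ E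
    · rw [hV]; simp only [Set.indicator_of_mem h, Set.indicator_of_mem h.2]; exact hvb t x
    · rw [hV]; simp only [Set.indicator_of_notMem h, norm_zero]
      exact Set.indicator_nonneg (fun _ _ => hA0) _
  have hVA : ∀ t x, ‖V t x‖ ≤ A := fun t x => (hVb t x).trans (Set.indicator_le_self' (fun _ _ => hA0) x)
  have hBi : ∀ c : ℝ, Integrable ((Metric.closedBall (0 : Ed 3) R).indicator (fun _ => c)) := fun c =>
    (integrable_indicator_iff Metric.isClosed_closedBall.measurableSet).2
      (integrableOn_const (isCompact_closedBall (0 : Ed 3) R).measure_lt_top.ne)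
  have hnV : ∀ t, Measurable (fun x => ‖V t x‖) := fun t => (hVm.comp measurable_prodMk_left).norm
  have hpowB : ∀ b : ℝ, 0 < b → ∀ t x, ‖V t x‖ ^ b ≤
      (Metric.closedBall (0 : Ed 3) R).indicator (fun _ => A ^ b) x := by
    intro b hb t x
    by_cases h : x ∈ Metric.closedBall (0 : Ed 3) R
    · rw [Set.indicator_of_mem h]
      exact Real.rpow_le_rpow (norm_nonneg _) (hVA t x) hb.le
    · have := hVb t x
      rw [Set.indicator_of_notMem h] at this ⊢
      rw [le_antisymm this (norm_nonneg _), Real.zero_rpow hb.ne']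
  have hVpi : ∀ b : ℝ, 0 < b → ∀ t, Integrable (fun x => ‖V t x‖ ^ b) := by
    intro b hb t
    refine (hBi (A ^ b)).mono' ((hnV t).pow_const b).aestronglyMeasurable ?_
    filter_upwards with x
    rw [Real.norm_of_nonneg (by positivity)]
    exact hpowB b hb t x
  set N : ℝ → ℝ := fun t => ∫ x, ‖V t x‖ ^ p with hN
  have hN0 : ∀ t, 0 ≤ N t := fun t => integral_nonneg fun x => by positivity
  have hNm : Measurable N := by
    have : Measurable (fun z : ℝ × Ed 3 => ‖V z.1 z.2‖ ^ p) := hVm.norm.pow_const p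
    exact this.stronglyMeasurable.integral_prod_right'.measurable
  set D0 := ∫ x, (Metric.closedBall (0 : Ed 3) R).indicator (fun _ => A ^ p) x with hD0
  have hND : ∀ t, N t ≤ D0 := fun t => integral_mono (hVpi p hp0 t) (hBi _) (hpowB p hp0 t)
  have hD00 : 0 ≤ D0 := (hN0 0).trans (hND 0)
  have hNz : ∀ t, t ∉ Set.Icc (-R) R → N t = 0 := by
    intro t ht
    have : ∀ x, V t x = 0 := fun x => Set.indicator_of_notMem (fun h => ht h.1) _
    rw [hN]; simp only [this, norm_zero, Real.zero_rpow hp0.ne', integral_zero]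
  have hNpi : ∀ b : ℝ, 0 < b → Integrable (fun t => N t ^ b) := by
    intro b hb
    have hI : Integrable ((Set.Icc (-R) R).indicator (fun _ => D0 ^ b)) :=
      (integrable_indicator_iff measurableSet_Icc).2 (integrableOn_const (by simp))
    refine hI.mono' (hNm.pow_const b).aestronglyMeasurable ?_
    filter_upwards with t
    rw [Real.norm_of_nonneg (Real.rpow_nonneg (hN0 t) _)]
    by_cases h : t ∈ Set.Icc (-R) R
    · rw [Set.indicator_of_mem h]
      exact Real.rpow_le_rpow (hN0 t) (hND t) hb.le
    · rw [Set.indicator_of_notMem h, hNz t h, Real.zero_rpow hb.ne']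
  have hl : (∫⁻ t in Set.Icc (-R) R, (∫⁻ x in Metric.closedBall 0 R, ‖v t x‖ₑ ^ p) ^ (q / p)) =
      ENNReal.ofReal (∫ t, N t ^ (q / p)) := by
    rw [ofReal_integral_eq_lintegral_ofReal (hNpi _ (by positivity))
      (Filter.Eventually.of_forall fun t => Real.rpow_nonneg (hN0 t) _), ← lintegral_indicator measurableSet_Icc]
    congr 1; ext t
    by_cases h : t ∈ Set.Icc (-R) R
    · rw [Set.indicator_of_mem h, ← ENNReal.ofReal_rpow_of_nonneg (hN0 t) (by positivity),
        ofReal_integral_eq_lintegral_ofReal (hVpi p hp0 t)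
        (Filter.Eventually.of_forall fun t => by positivity),
        ← lintegral_indicator Metric.isClosed_closedBall.measurableSet]
      congr 2; ext x
      by_cases h' : x ∈ Metric.closedBall (0 : Ed 3) R
      · have : V t x = v t x := Set.indicator_of_mem (show (t, x) ∈ E from ⟨h, h'⟩) _
        rw [Set.indicator_of_mem h', this, ← ENNReal.ofReal_rpow_of_nonneg (norm_nonneg _) hp0.le,
          ofReal_norm]
      · have : V t x = 0 := Set.indicator_of_notMem (fun hh => h' hh.2) _
        rw [Set.indicator_of_notMem h', this, norm_zero, Real.zero_rpow hp0.ne', ENNReal.ofReal_zero]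
    · rw [Set.indicator_of_notMem h, hNz t h, Real.zero_rpow (by positivity), ENNReal.ofReal_zero]
  rw [hl]
  set J := ∫ t, N t ^ (q / p) with hJ
  have hJ0 : 0 ≤ J := integral_nonneg fun t => Real.rpow_nonneg (hN0 t) _
  rcases hJ0.eq_or_lt with h0 | hJp
  · rw [← h0, ENNReal.ofReal_zero, ENNReal.zero_rpow_of_pos (by positivity)]; exact zero_le
  set f : ℝ → Ed 3 → ℂ := fun t x =>
    ((‖V t x‖ ^ (p - 2) * N t ^ (-(1 / s)) : ℝ) : ℂ) * (starRingEnd ℂ) (V t x) with hf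
  have hfm : Measurable (Function.uncurry f) := by
    have m1 : Measurable (fun z : ℝ × Ed 3 => ‖V z.1 z.2‖ ^ (p - 2) * N z.1 ^ (-(1 / s))) :=
      (hVm.norm.pow_const _).mul ((hNm.pow_const _).comp measurable_fst)
    exact (Complex.measurable_ofReal.comp m1).mul (Complex.continuous_conj.measurable.comp hVm)
  have hfn : ∀ t x, ‖f t x‖ = ‖V t x‖ ^ (p - 1) * N t ^ (-(1 / s)) := by
    intro t x
    have h1 : 0 ≤ N t ^ (-(1 / s)) := Real.rpow_nonneg (hN0 t) _
    rw [hf]; simp only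
    rw [norm_mul, Complex.norm_real, RCLike.norm_conj, Real.norm_of_nonneg (by positivity)]
    have : ‖V t x‖ ^ (p - 1) = ‖V t x‖ ^ (p - 2) * ‖V t x‖ := by
      rw [show p - 1 = (p - 2) + 1 by ring, Real.rpow_add_of_nonneg (norm_nonneg _) hp2.le zero_le_one,
        Real.rpow_one]
    rw [this]; ring
  have hfns : ∀ t x, ‖f t x‖ ^ s = ‖V t x‖ ^ p * (N t)⁻¹ := by
    intro t x
    rw [hfn, Real.mul_rpow (by positivity) (Real.rpow_nonneg (hN0 t) _), ← Real.rpow_mul (norm_nonneg _),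
      ← Real.rpow_mul (hN0 t)]
    have e1 : (p - 1) * s = p := by rw [hs]; field_simp
    have e2 : -(1 / s) * s = -1 := by field_simp
    rw [e1, e2, Real.rpow_neg_one]
  have hfsi : ∀ t, Integrable (fun x => ‖f t x‖ ^ s) := by
    intro t; simp_rw [hfns]; exact (hVpi p hp0 t).mul_const _
  have hfs1 : ∀ t, ∫ x, ‖f t x‖ ^ s ≤ 1 := by
    intro t; simp_rw [hfns]; rw [integral_mul_const]
    exact mul_inv_le_one
  have hfi : ∀ t, Integrable (f t) := by
    intro t
    refine Integrable.mono' ((hVpi (p - 1) hp1 t).mul_const (N t ^ (-(1 / s))))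
      (hfm.comp measurable_prodMk_left).aestronglyMeasurable ?_
    filter_upwards with x
    exact (hfn t x).le
  have hfD : ∀ t, ∫ x, ‖f t x‖ ≤
      (∫ x, (Metric.closedBall (0 : Ed 3) R).indicator (fun _ => (1 : ℝ)) x) + 1 := by
    intro t
    refine le_trans ?_ (add_le_add le_rfl (hfs1 t))
    rw [← integral_add (hBi 1) (hfsi t)]
    refine integral_mono (hfi t).norm ((hBi 1).add (hfsi t)) ?_
    intro x
    beta_reduce
    by_cases h' : x ∈ Metric.closedBall (0 : Ed 3) R
    · rw [Set.indicator_of_mem h']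
      rcases le_total ‖f t x‖ 1 with h1 | h1
      · have : 0 ≤ ‖f t x‖ ^ s := by positivity
        linarith
      · have := Real.rpow_le_rpow_of_exponent_le h1 hs1.le
        rw [Real.rpow_one] at this
        linarith
    · have : V t x = 0 := Set.indicator_of_notMem (fun hh => h' hh.2) _
      rw [Set.indicator_of_notMem h', hfn, this, norm_zero, Real.zero_rpow hp1.ne']
      simp only [zero_mul, zero_add]
      positivity
  have hfs : ∀ t, ∫⁻ x, ‖f t x‖ₑ ^ s ≤ 1 := by
    intro t
    have : ∫⁻ x, ‖f t x‖ₑ ^ s = ENNReal.ofReal (∫ x, ‖f t x‖ ^ s) := by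
      rw [ofReal_integral_eq_lintegral_ofReal (hfsi t)
        (Filter.Eventually.of_forall fun t => by positivity)]
      congr 1; ext x
      rw [← ENNReal.ofReal_rpow_of_nonneg (norm_nonneg _) hs0.le, ofReal_norm]
    rw [this]
    exact ENNReal.ofReal_le_one.2 (hfs1 t)
  set n : ℝ → ℝ := fun t => N t ^ ((q - 1) / p) with hn
  have hnq : ∀ t, n t ^ q' = N t ^ (q / p) := by
    intro t
    rw [hn]; simp only
    rw [← Real.rpow_mul (hN0 t)]
    congr 1; rw [hq']; field_simp
  have hnJ : ∫⁻ t, ENNReal.ofReal (n t ^ q') ≤ ENNReal.ofReal J := by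
    simp_rw [hnq]
    rw [hJ, ofReal_integral_eq_lintegral_ofReal (hNpi _ (by positivity))
      (Filter.Eventually.of_forall fun t => Real.rpow_nonneg (hN0 t) _)]
  have key := dualStr q q' s hq2 hq' hs1 hs2 hsq L hL a ha hai f hfm _ hfi hfD hfs n (hNm.pow_const _)
    (fun t => Real.rpow_nonneg (hN0 t) _) (hNpi _ (by positivity)) J hJp hnJ
  have hin : ∀ t, (n t : ℂ) * ∫ x, f t x * vv L a t x = ((N t ^ (q / p) : ℝ) : ℂ) := by
    intro t
    have e1 : ∀ x, f t x * vv L a t x = ((‖V t x‖ ^ p * N t ^ (-(1 / s)) : ℝ) : ℂ) := by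
      intro x
      have e2 : (starRingEnd ℂ) (V t x) * vv L a t x = ((‖V t x‖ ^ 2 : ℝ) : ℂ) := by
        by_cases h : (t, x) ∈ E
        · have : V t x = v t x := Set.indicator_of_mem h _
          rw [← hv, ← this, mul_comm, Complex.mul_conj, Complex.normSq_eq_norm_sq]
        · have : V t x = 0 := Set.indicator_of_notMem h _
          rw [this]; simp
      rw [hf]; simp only
      rw [mul_assoc, e2, ← Complex.ofReal_mul]
      congr 1
      have : ‖V t x‖ ^ p = ‖V t x‖ ^ (p - 2) * ‖V t x‖ ^ 2 := by
        rw [← Real.rpow_natCast, ← Real.rpow_add_of_nonneg (norm_nonneg _) hp2.le (by norm_num)]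
        congr 1; push_cast; ring
      rw [this]; ring
    simp_rw [e1]
    rw [integral_complex_ofReal, integral_mul_const, ← Complex.ofReal_mul]
    congr 1
    change N t ^ ((q - 1) / p) * (N t * N t ^ (-(1 / s))) = _
    rcases (hN0 t).eq_or_lt with h | h
    · rw [← h, zero_mul, mul_zero, Real.zero_rpow (by positivity)]
    · conv_lhs => enter [2, 1]; rw [← Real.rpow_one (N t)]
      rw [← Real.rpow_add h, ← Real.rpow_add h]
      congr 1
      rw [hs]; field_simp; ring
  simp_rw [hin] at key
  rw [integral_complex_ofReal, ← hJ, ← ofReal_norm, Complex.norm_real, Real.norm_of_nonneg hJ0] at key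
  have hJe : ENNReal.ofReal J ≠ 0 := by simpa using hJp
  have e3 : ENNReal.ofReal (CS2 s * L ^ (-(2 / q)) * J ^ (2 / q')) ^ (1 / 2 : ℝ) =
      ENNReal.ofReal (CS2 s * L ^ (-(2 / q))) ^ (1 / 2 : ℝ) * ENNReal.ofReal J ^ (1 / q') := by
    rw [ENNReal.ofReal_mul' (by positivity), ENNReal.mul_rpow_of_nonneg _ _ (by norm_num),
      ← ENNReal.ofReal_rpow_of_pos hJp, ← ENNReal.rpow_mul]
    congr 2
    field_simp
  rw [e3, ← mul_assoc] at key
  have e4 : ENNReal.ofReal J = ENNReal.ofReal J ^ (1 / q) * ENNReal.ofReal J ^ (1 / q') := by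
    rw [← ENNReal.rpow_add _ _ hJe ENNReal.ofReal_ne_top]
    have : 1 / q + 1 / q' = 1 := by rw [hq']; field_simp; ring
    rw [this, ENNReal.rpow_one]
  nth_rewrite 1 [e4] at key
  refine (ENNReal.mul_le_mul_iff_left ?_ ?_).1 key
  · exact (ENNReal.rpow_pos (pos_iff_ne_zero.2 hJe) ENNReal.ofReal_ne_top).ne'
  · exact ENNReal.rpow_ne_top_of_nonneg (by positivity) ENNReal.ofReal_ne_top

theorem loc_str (p q : ℝ) (hp : 2 < p) (hq : q = 2 * p / (p - 2)) (L : ℝ) (hL : 0 < L)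
    (a : Ed 3 → ℂ) (ha : Measurable a) (hai : Integrable a) :
    (∫⁻ t, (∫⁻ x, ‖vv L a t x‖ₑ ^ p) ^ (q / p)) ^ (1 / q)
      ≤ (∫⁻ κ, ‖a κ‖ₑ ^ 2) ^ (1 / 2 : ℝ) *
        ENNReal.ofReal (CS2 (p / (p - 1)) * L ^ (-(2 / q))) ^ (1 / 2 : ℝ) := by
  have hp0 : 0 < p := by linarith
  have hp2 : 0 < p - 2 := by linarith
  have hq0 : 0 < q := by rw [hq]; positivity
  have hvm := vv_meas L a ha
  set K := (∫⁻ κ, ‖a κ‖ₑ ^ 2) ^ (1 / 2 : ℝ) *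
        ENNReal.ofReal (CS2 (p / (p - 1)) * L ^ (-(2 / q))) ^ (1 / 2 : ℝ) with hK
  have hT : ∀ n : ℕ, (∫⁻ t in Set.Icc (-(n : ℝ)) n,
      (∫⁻ x in Metric.closedBall 0 (n : ℝ), ‖vv L a t x‖ₑ ^ p) ^ (q / p)) ≤ K ^ q := by
    intro n
    have := ENNReal.rpow_le_rpow (trunc_str p q hp hq L hL a ha hai n) hq0.le
    rwa [← ENNReal.rpow_mul, one_div_mul_cancel hq0.ne', ENNReal.rpow_one, ← hK] at this
  have hlim : ∫⁻ t, (∫⁻ x, ‖vv L a t x‖ₑ ^ p) ^ (q / p) ≤ K ^ q := by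
    set G : ℕ → ℝ → ℝ≥0∞ := fun n => (Set.Icc (-(n : ℝ)) n).indicator
      (fun t => (∫⁻ x in Metric.closedBall 0 (n : ℝ), ‖vv L a t x‖ₑ ^ p) ^ (q / p)) with hG
    have hGK : ∀ n, ∫⁻ t, G n t ≤ K ^ q := by
      intro n; rw [hG]; simp only; rw [lintegral_indicator measurableSet_Icc]; exact hT n
    have hinner : ∀ n : ℕ, Measurable (fun t => ∫⁻ x in Metric.closedBall 0 (n : ℝ), ‖vv L a t x‖ₑ ^ p) := by
      intro n
      have : Measurable (Function.uncurry (fun t x => ‖vv L a t x‖ₑ ^ p)) := hvm.enorm.pow_const p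
      exact this.lintegral_prod_right
    have hlimpt : ∀ t, Filter.Tendsto (fun n => G n t) Filter.atTop
        (nhds ((∫⁻ x, ‖vv L a t x‖ₑ ^ p) ^ (q / p))) := by
      intro t
      have h1 : Filter.Tendsto (fun n : ℕ => ∫⁻ x in Metric.closedBall 0 (n : ℝ), ‖vv L a t x‖ₑ ^ p)
          Filter.atTop (nhds (∫⁻ x, ‖vv L a t x‖ₑ ^ p)) := by
        simp_rw [← lintegral_indicator Metric.isClosed_closedBall.measurableSet]
        have hm : Measurable (fun x => ‖vv L a t x‖ₑ ^ p) :=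
          (hvm.comp measurable_prodMk_left).enorm.pow_const p
        refine lintegral_tendsto_of_tendsto_of_monotone
          (fun n => (hm.indicator Metric.isClosed_closedBall.measurableSet).aemeasurable) ?_ ?_
        · filter_upwards with x
          intro m n hmn
          exact Set.indicator_le_indicator_of_subset
            (Metric.closedBall_subset_closedBall (by exact_mod_cast hmn)) (fun _ => zero_le) x
        · filter_upwards with x
          refine tendsto_const_nhds.congr' ?_
          obtain ⟨m, hm⟩ := exists_nat_ge ‖x‖
          filter_upwards [Filter.eventually_ge_atTop m] with n hn
          rw [Set.indicator_of_mem]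
          rw [mem_closedBall_zero_iff]
          exact hm.trans (by exact_mod_cast hn)
      have h2 := (ENNReal.continuous_rpow_const (y := q / p)).continuousAt.tendsto.comp h1
      refine h2.congr' ?_
      obtain ⟨m, hm⟩ := exists_nat_ge |t|
      filter_upwards [Filter.eventually_ge_atTop m] with n hn
      rw [hG]; simp only
      rw [Set.indicator_of_mem]; · rfl
      have h3 : |t| ≤ n := hm.trans (by exact_mod_cast hn)
      exact abs_le.1 h3
    have h4 : ∀ t, (∫⁻ x, ‖vv L a t x‖ₑ ^ p) ^ (q / p) = Filter.liminf (fun n => G n t) Filter.atTop :=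
      fun t => (hlimpt t).liminf_eq.symm
    simp_rw [h4]
    refine (lintegral_liminf_le fun n => ((hinner n).pow_const _).indicator measurableSet_Icc).trans ?_
    refine Filter.liminf_le_of_le (by isBoundedDefault) ?_
    intro b hb
    obtain ⟨m, hm⟩ := hb.exists
    exact hm.trans (hGK m)
  calc _ ≤ (K ^ q) ^ (1 / q) := by gcongr
    _ = K := by rw [← ENNReal.rpow_mul, mul_one_div_cancel hq0.ne', ENNReal.rpow_one]

open MeasureTheory ENNReal
open scoped RealInnerProductSpace

theorem dyadic_sum (α β : ℝ) (hα : 0 < α) (hβ : 0 < β) : ∃ K : ℝ, ∀ s : ℝ, 0 < s →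
    ∑' j : ℤ, ENNReal.ofReal (min ((s * 2 ^ j) ^ α) ((s * 2 ^ j) ^ (-β))) ≤ ENNReal.ofReal K := by
  set B : ℤ → ℝ := fun j => min (2 ^ α * ((2 : ℝ) ^ j) ^ α) (((2 : ℝ) ^ j) ^ (-β)) with hB
  have hB0 : ∀ j, 0 ≤ B j := fun j => by rw [hB]; positivity
  have hBs : Summable B := by
    refine Summable.of_nat_of_neg_add_one ?_ ?_
    · refine Summable.of_nonneg_of_le (fun n => hB0 _) (f := fun n : ℕ => ((2 : ℝ) ^ (-β)) ^ n) ?_ ?_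
      · intro n
        refine (min_le_right _ _).trans (le_of_eq ?_)
        rw [zpow_natCast, ← Real.rpow_natCast, ← Real.rpow_natCast, ← Real.rpow_mul (by norm_num),
          ← Real.rpow_mul (by norm_num), mul_comm]
      · exact summable_geometric_of_lt_one (by positivity)
          (Real.rpow_lt_one_of_one_lt_of_neg (by norm_num) (by linarith))
    · refine Summable.of_nonneg_of_le (fun n => hB0 _) (f := fun n : ℕ => ((2 : ℝ) ^ (-α)) ^ n) ?_ ?_
      · intro n
        refine (min_le_left _ _).trans (le_of_eq ?_)
        rw [← Real.rpow_intCast, ← Real.rpow_natCast, ← Real.rpow_mul (by norm_num),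
          ← Real.rpow_mul (by norm_num), ← Real.rpow_add (by norm_num)]
        congr 1; push_cast; ring
      · exact summable_geometric_of_lt_one (by positivity)
          (Real.rpow_lt_one_of_one_lt_of_neg (by norm_num) (by linarith))
  refine ⟨∑' j, B j, fun s hs => ?_⟩
  obtain ⟨k, hk1, hk2⟩ := _root_.exists_mem_Ico_zpow hs (one_lt_two)
  rw [ENNReal.ofReal_tsum_of_nonneg hB0 hBs]
  rw [← (Equiv.addRight k).tsum_eq (fun j => ENNReal.ofReal (B j))]
  refine ENNReal.tsum_le_tsum fun j => ENNReal.ofReal_le_ofReal ?_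
  have h2j : (0 : ℝ) < 2 ^ j := by positivity
  have e : ((2 : ℝ) ^ (j + k)) = 2 ^ k * 2 ^ j := by rw [zpow_add₀ two_ne_zero, mul_comm]
  simp only [Equiv.coe_addRight, hB]
  rw [e]
  refine min_le_min ?_ ?_
  · rw [← Real.mul_rpow (by norm_num) (by positivity)]
    refine Real.rpow_le_rpow (by positivity) ?_ hα.le
    rw [zpow_add₀ two_ne_zero, zpow_one] at hk2
    nlinarith
  · refine Real.rpow_le_rpow_of_nonpos (by positivity) ?_ (by linarith)
    nlinarith

theorem tel_sum (k : ℝ) (hk : 0 < k) :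
    HasSum (fun j : ℤ => Real.exp (-(((2 : ℝ) ^ j) ^ 2 * k)) - Real.exp (-(4 * ((2 : ℝ) ^ j) ^ 2 * k))) 1 := by
  obtain ⟨E, hE⟩ : ∃ E : ℤ → ℝ, ∀ j, E j = Real.exp (-(((2 : ℝ) ^ j) ^ 2 * k)) := ⟨_, fun _ => rfl⟩
  have hst : ∀ j : ℤ, Real.exp (-(4 * ((2 : ℝ) ^ j) ^ 2 * k)) = E (j + 1) := by
    intro j; rw [hE, zpow_add₀ two_ne_zero, zpow_one]; congr 2; ring
  simp_rw [hst, ← hE]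
  have hmono : ∀ j, E (j + 1) ≤ E j := by
    intro j; rw [← hst, hE]
    refine Real.exp_le_exp.2 ?_
    have : 0 ≤ ((2 : ℝ) ^ j) ^ 2 * k := by positivity
    linarith
  have h1 : HasSum (fun n : ℕ => E n - E (n + 1)) (E 0) := by
    rw [hasSum_iff_tendsto_nat_of_nonneg (fun n => sub_nonneg.2 (hmono n))]
    have e : ∀ n : ℕ, ∑ i ∈ Finset.range n, (E i - E (i + 1)) = E 0 - E n := by
      intro n
      have := Finset.sum_range_sub' (fun i : ℕ => E i) n
      push_cast at this
      exact this
    simp_rw [e]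
    have : Filter.Tendsto (fun n : ℕ => E n) Filter.atTop (nhds 0) := by
      simp_rw [hE]
      refine Real.tendsto_exp_neg_atTop_nhds_zero.comp ?_
      refine Filter.Tendsto.atTop_mul_const hk ?_
      have h4 : Filter.Tendsto (fun n : ℕ => (4 : ℝ) ^ n) Filter.atTop Filter.atTop :=
        tendsto_pow_atTop_atTop_of_one_lt (by norm_num)
      refine h4.congr fun n => ?_
      rw [zpow_natCast, ← pow_mul, mul_comm, pow_mul]; norm_num
    simpa using this.const_sub (E 0)
  have h2 : HasSum (fun n : ℕ => E (-((n : ℤ) + 1)) - E (-((n : ℤ) + 1) + 1)) (1 - E 0) := by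
    rw [hasSum_iff_tendsto_nat_of_nonneg (fun n => sub_nonneg.2 (hmono _))]
    have e : ∀ n : ℕ, ∑ i ∈ Finset.range n, (E (-((i : ℤ) + 1)) - E (-((i : ℤ) + 1) + 1)) =
        E (-(n : ℤ)) - E 0 := by
      intro n
      have := Finset.sum_range_sub (fun i : ℕ => E (-(i : ℤ))) n
      push_cast at this
      rw [neg_zero] at this
      rw [← this]
      refine Finset.sum_congr rfl fun i _ => ?_
      congr 2; ring
    simp_rw [e]
    have : Filter.Tendsto (fun n : ℕ => E (-(n : ℤ))) Filter.atTop (nhds 1) := by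
      have h4 : Filter.Tendsto (fun n : ℕ => -(((1 : ℝ) / 4) ^ n * k)) Filter.atTop (nhds 0) := by
        have := ((_root_.tendsto_pow_atTop_nhds_zero_of_lt_one (r := (1 : ℝ) / 4) (by norm_num)
          (by norm_num)).mul_const k).neg
        simpa using this
      have h5 := (Real.continuous_exp.tendsto 0).comp h4
      rw [Real.exp_zero] at h5
      refine h5.congr fun n => ?_
      simp only [Function.comp, hE]
      congr 2
      rw [zpow_neg, zpow_natCast, inv_pow, ← pow_mul, mul_comm n 2, pow_mul, one_div, inv_pow]; norm_num
    exact this.sub_const (E 0)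
  have h3 := HasSum.of_nat_of_neg_add_one (f := fun j : ℤ => E j - E (j + 1)) h1 h2
  have e : E 0 + (1 - E 0) = 1 := by ring
  rw [e] at h3
  exact h3

theorem lp_le_l2 (p : ℝ) (hp : 2 ≤ p) (c : ℤ → ℝ≥0∞) :
    ∑' j, c j ^ p ≤ (∑' j, c j ^ (2 : ℝ)) ^ (p / 2) := by
  set S := ∑' j, c j ^ (2 : ℝ) with hS
  have h : ∀ j, c j ^ p ≤ c j ^ (2 : ℝ) * S ^ (p / 2 - 1) := by
    intro j
    have e : p = 2 * (1 + (p / 2 - 1)) := by ring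
    nth_rewrite 1 [e]
    rw [ENNReal.rpow_mul, ENNReal.rpow_add_of_nonneg _ _ zero_le_one (by linarith), ENNReal.rpow_one]
    gcongr
    · linarith
    · exact ENNReal.le_tsum j
  calc _ ≤ ∑' j, c j ^ (2 : ℝ) * S ^ (p / 2 - 1) := ENNReal.tsum_le_tsum h
    _ = S ^ (1 : ℝ) * S ^ (p / 2 - 1) := by rw [ENNReal.tsum_mul_right, ENNReal.rpow_one]
    _ = _ := by
      rw [← ENNReal.rpow_add_of_nonneg _ _ zero_le_one (by linarith)]; congr 1; ring

theorem tsum_holder (p : ℝ) (hp : 1 < p) (w c : ℤ → ℝ≥0∞) :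
    (∑' j, w j * c j) ^ p ≤ (∑' j, w j) ^ (p - 1) * ∑' j, w j * c j ^ p := by
  have hp0 : 0 < p := by linarith
  have h : ∑' j, w j * c j ≤ (∑' j, w j) ^ (1 - p⁻¹) * (∑' j, w j * c j ^ p) ^ p⁻¹ := by
    rw [ENNReal.tsum_eq_iSup_sum]
    refine iSup_le fun s => (ENNReal.inner_le_weight_mul_Lp_of_nonneg s hp.le w c).trans ?_
    have : 0 ≤ 1 - p⁻¹ := by
      rw [sub_nonneg]; exact inv_le_one_of_one_le₀ hp.le
    gcongr
    · exact ENNReal.sum_le_tsum s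
    · exact ENNReal.sum_le_tsum s
  calc _ ≤ ((∑' j, w j) ^ (1 - p⁻¹) * (∑' j, w j * c j ^ p) ^ p⁻¹) ^ p := by gcongr
    _ = _ := by
      rw [ENNReal.mul_rpow_of_nonneg _ _ hp0.le, ← ENNReal.rpow_mul, ← ENNReal.rpow_mul,
        inv_mul_cancel₀ hp0.ne', ENNReal.rpow_one]
      congr 2; field_simp

open MeasureTheory ENNReal
open scoped RealInnerProductSpace

/-- The normalised Gaussian kernel. -/
noncomputable def kk (L : ℝ) (z : Ed 3) : ℝ :=
  (2 * Real.pi * L) ^ (-(3 : ℝ) / 2) * Real.exp (-(1 / (2 * L)) * ‖z‖ ^ 2)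

theorem kk_cont (L : ℝ) : Continuous (kk L) := by unfold kk; fun_prop

theorem kk_nonneg (L : ℝ) (hL : 0 < L) (z : Ed 3) : 0 ≤ kk L z := by unfold kk; positivity

theorem kk_int (L : ℝ) (hL : 0 < L) : Integrable (kk L) :=
  (rexp_int (1 / (2 * L)) (by positivity)).const_mul _

theorem gw_kk (L : ℝ) (hL : 0 < L) (κ : Ed 3) : gw L 0 κ = ∫ z, (kk L z : ℂ) * ee z κ := by
  have h := gauss_ft (1 / L) (by positivity) κ
  have e : ∀ z : Ed 3, (kk L z : ℂ) * ee z κ =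
      (((2 * Real.pi * L) ^ (-(3 : ℝ) / 2) : ℝ) : ℂ) * (gw (1 / L) 0 z * ee κ z) := by
    intro z
    have e1 : ee z κ = ee κ z := by unfold ee; rw [real_inner_comm]
    have e2 : gw (1 / L) 0 z = ((Real.exp (-(1 / (2 * L)) * ‖z‖ ^ 2) : ℝ) : ℂ) := by
      unfold gw; push_cast; congr 1; field_simp; ring
    rw [e1, e2, kk]; push_cast; ring
  simp_rw [e]
  rw [integral_const_mul, h, ← Complex.ofReal_mul, ← mul_assoc]
  have e3 : Real.pi / (1 / L / 2) = 2 * Real.pi * L := by field_simp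
  rw [e3, ← Real.rpow_add (by positivity)]
  have e4 : -(3 : ℝ) / 2 + 3 / 2 = 0 := by norm_num
  rw [e4, Real.rpow_zero, one_mul, gw]
  push_cast
  congr 1
  simp
  left; ring

theorem kk_lint (L : ℝ) (hL : 0 < L) : ∫⁻ z, ‖kk L z‖ₑ = 1 := by
  have h := gw_kk L hL 0
  have e : ∀ z : Ed 3, (kk L z : ℂ) * ee z 0 = (kk L z : ℂ) := by intro z; simp [ee]
  simp_rw [e] at h
  rw [integral_complex_ofReal] at h
  have h1 : gw L 0 (0 : Ed 3) = 1 := by simp [gw]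
  rw [h1] at h
  have h2 : ∫ z, kk L z = 1 := by exact_mod_cast h.symm
  have : ∀ z, ‖kk L z‖ₑ = ENNReal.ofReal (kk L z) := fun z => by
    rw [← ofReal_norm, Real.norm_of_nonneg (kk_nonneg L hL z)]
  simp_rw [this]
  rw [← ofReal_integral_eq_lintegral_ofReal (kk_int L hL)
    (Filter.Eventually.of_forall (kk_nonneg L hL)), h2, ENNReal.ofReal_one]

theorem exp_diff (A B m : ℝ) (hA : m ≤ A) (hB : m ≤ B) :
    |Real.exp (-A) - Real.exp (-B)| ≤ |A - B| * Real.exp (-m) := by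
  wlog h : A ≤ B generalizing A B
  · rw [abs_sub_comm, abs_sub_comm A B]; exact this B A hB hA (by linarith)
  have h1 : Real.exp (-B) ≤ Real.exp (-A) := Real.exp_le_exp.2 (by linarith)
  rw [abs_of_nonneg (by linarith), abs_of_nonpos (by linarith)]
  have h2 : Real.exp (-B) = Real.exp (-A) * Real.exp (A - B) := by
    rw [← Real.exp_add]; congr 1; ring
  have h3 := Real.add_one_le_exp (A - B)
  have h4 : Real.exp (-A) ≤ Real.exp (-m) := Real.exp_le_exp.2 (by linarith)
  have h5 := Real.exp_pos (-A)
  rw [h2]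
  calc _ = Real.exp (-A) * (1 - Real.exp (A - B)) := by ring
    _ ≤ Real.exp (-A) * (-(A - B)) := by gcongr; linarith
    _ ≤ Real.exp (-m) * (-(A - B)) := by gcongr; linarith
    _ = _ := by ring

theorem kk_diff_pt (l : ℝ) (hl : 0 < l) (h z : Ed 3) (hh : ‖h‖ ≤ l) :
    |kk (l ^ 2) (z - h) - kk (l ^ 2) z| ≤ 6 * (‖h‖ / l) *
      ((2 * Real.pi * l ^ 2) ^ (-(3 : ℝ) / 2) * Real.exp (-(1 / (8 * l ^ 2)) * ‖z‖ ^ 2)) := by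
  have hc : 0 ≤ (2 * Real.pi * l ^ 2) ^ (-(3 : ℝ) / 2) := by positivity
  set c := (2 * Real.pi * l ^ 2) ^ (-(3 : ℝ) / 2)
  set y := ‖z‖ / l with hy
  set η := ‖h‖ / l with hη
  set w := ‖z - h‖ / l with hw
  have hy0 : 0 ≤ y := by positivity
  have hη0 : 0 ≤ η := by positivity
  have hw0 : 0 ≤ w := by positivity
  have hη1 : η ≤ 1 := by rw [hη, div_le_one hl]; exact hh
  have hw1 : w ≤ y + η := by
    rw [hw, hy, hη, ← add_div]; gcongr; exact norm_sub_le z h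
  have hw2 : y - η ≤ w := by
    rw [hw, hy, hη, ← sub_div]; gcongr; exact norm_sub_norm_le z h
  have e1 : kk (l ^ 2) (z - h) = c * Real.exp (-(w ^ 2 / 2)) := by
    rw [kk]; congr 2; rw [hw]; field_simp
  have e2 : kk (l ^ 2) z = c * Real.exp (-(y ^ 2 / 2)) := by
    rw [kk]; congr 2; rw [hy]; field_simp
  have e3 : -(1 / (8 * l ^ 2)) * ‖z‖ ^ 2 = -(y ^ 2 / 8) := by rw [hy]; field_simp
  rw [e1, e2, e3, ← mul_sub, abs_mul, abs_of_nonneg hc]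
  have hm1 : y ^ 2 / 4 - 1 / 2 ≤ w ^ 2 / 2 := by
    rcases le_total y 1 with h1 | h1
    · nlinarith
    · have : y - 1 ≤ w := by linarith
      nlinarith [sq_nonneg (y - 2)]
  have hm2 : y ^ 2 / 4 - 1 / 2 ≤ y ^ 2 / 2 := by nlinarith
  have hd := exp_diff _ _ _ hm1 hm2
  have hab : |w ^ 2 / 2 - y ^ 2 / 2| ≤ η * (1 / 2 + y) := by
    rw [abs_le]
    constructor
    · rcases le_total y η with h1 | h1
      · nlinarith
      · nlinarith
    · nlinarith
  have h6 : 1 / 2 + y ≤ 3 * Real.exp (y ^ 2 / 8) := by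
    have := Real.add_one_le_exp (y ^ 2 / 8)
    nlinarith [sq_nonneg (y - 4 / 3)]
  have h7 : Real.exp (1 / 2) ≤ 2 := by
    have := Real.exp_one_lt_d9
    have h8 : Real.exp (1 / 2) * Real.exp (1 / 2) = Real.exp 1 := by
      rw [← Real.exp_add]; norm_num
    nlinarith [Real.exp_pos (1 / 2)]
  have h9 : Real.exp (-(y ^ 2 / 4 - 1 / 2)) = Real.exp (1 / 2) * Real.exp (-(y ^ 2 / 4)) := by
    rw [← Real.exp_add]; congr 1; ring
  have h10 : Real.exp (y ^ 2 / 8) * Real.exp (-(y ^ 2 / 4)) = Real.exp (-(y ^ 2 / 8)) := by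
    rw [← Real.exp_add]; congr 1; ring
  calc _ ≤ c * (|w ^ 2 / 2 - y ^ 2 / 2| * Real.exp (-(y ^ 2 / 4 - 1 / 2))) := by gcongr
    _ ≤ c * ((η * (3 * Real.exp (y ^ 2 / 8))) * (2 * Real.exp (-(y ^ 2 / 4)))) := by
        rw [h9]; gcongr; exact hab.trans (by gcongr)
    _ = _ := by rw [← h10]; ring

theorem kk_diff (l : ℝ) (hl : 0 < l) (h : Ed 3) :
    ∫⁻ z, ‖kk (l ^ 2) (z - h) - kk (l ^ 2) z‖ₑ ≤ ENNReal.ofReal (48 * min 1 (‖h‖ / l)) := by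
  have hl2 : 0 < l ^ 2 := by positivity
  rcases le_total ‖h‖ l with hh | hh
  · have hm : min 1 (‖h‖ / l) = ‖h‖ / l := min_eq_right (by rw [div_le_one hl]; exact hh)
    rw [hm]
    have hint := rexp_int (1 / (8 * l ^ 2)) (by positivity)
    have hg := GaussianFourier.integral_rexp_neg_mul_sq_norm (V := Ed 3) (b := 1 / (8 * l ^ 2))
      (by positivity)
    calc _ ≤ ∫⁻ z : Ed 3, ENNReal.ofReal (6 * (‖h‖ / l) *
      ((2 * Real.pi * l ^ 2) ^ (-(3 : ℝ) / 2) * Real.exp (-(1 / (8 * l ^ 2)) * ‖z‖ ^ 2))) := by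
          refine lintegral_mono fun z => ?_
          rw [← ofReal_norm]
          exact ENNReal.ofReal_le_ofReal (kk_diff_pt l hl h z hh)
      _ = ENNReal.ofReal (6 * (‖h‖ / l) * ((2 * Real.pi * l ^ 2) ^ (-(3 : ℝ) / 2) *
          (Real.pi / (1 / (8 * l ^ 2))) ^ ((3 : ℝ) / 2))) := by
          rw [← ofReal_integral_eq_lintegral_ofReal ((hint.const_mul _).const_mul _)
            (Filter.Eventually.of_forall fun z => by positivity), integral_const_mul,
            integral_const_mul, hg]
          simp
      _ = _ := by
          congr 1
          have e1 : Real.pi / (1 / (8 * l ^ 2)) = 4 * (2 * Real.pi * l ^ 2) := by field_simp; norm_num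
          rw [e1, Real.mul_rpow (x := 4) (by norm_num) (by positivity), mul_left_comm ((2 * Real.pi * l ^ 2) ^ _),
            ← Real.rpow_add (by positivity)]
          have e2 : -(3 : ℝ) / 2 + 3 / 2 = 0 := by norm_num
          have e3 : (4 : ℝ) ^ ((3 : ℝ) / 2) = 8 := by
            rw [show (4 : ℝ) = 2 ^ (2 : ℝ) by norm_num, ← Real.rpow_mul (by norm_num)]; norm_num
          rw [e2, e3, Real.rpow_zero]; ring
  · have hm : min 1 (‖h‖ / l) = 1 := min_eq_left (by rw [le_div_iff₀ hl]; linarith)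
    rw [hm]
    have hk := kk_lint (l ^ 2) hl2
    have hm1 : Measurable (fun z => ‖kk (l ^ 2) z‖ₑ) := (kk_cont _).measurable.enorm
    have hm2 : Measurable (fun z => ‖kk (l ^ 2) (z - h)‖ₑ) := hm1.comp (measurable_id.sub_const h)
    calc _ ≤ ∫⁻ z, (‖kk (l ^ 2) (z - h)‖ₑ + ‖kk (l ^ 2) z‖ₑ) := lintegral_mono fun z => enorm_sub_le
      _ = 1 + 1 := by
          rw [lintegral_add_left hm2, hk, lintegral_sub_right_eq_self (fun z => ‖kk (l ^ 2) z‖ₑ) h, hk]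
      _ ≤ _ := by
          rw [mul_one, show (48 : ℝ) = 1 + 47 by norm_num,
            ENNReal.ofReal_add zero_le_one (by norm_num), ENNReal.ofReal_one]
          gcongr
          rw [← ENNReal.ofReal_one]; exact ENNReal.ofReal_le_ofReal (by norm_num)

/-- The dyadic piece. -/
noncomputable def uu (L : ℝ) (a : Ed 3 → ℂ) (t : ℝ) (x : Ed 3) : ℂ :=
  ∫ κ, gw L 0 κ * (gw (L / 2) t κ * ee x κ * a κ)

theorem ee_add (x y κ : Ed 3) : ee (x + y) κ = ee x κ * ee y κ := by
  unfold ee; rw [← Complex.exp_add, inner_add_left]; congr 1; push_cast; ring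

theorem uu_conv (L : ℝ) (hL : 0 < L) (a : Ed 3 → ℂ) (ha : Measurable a) (hai : Integrable a) (t : ℝ)
    (x : Ed 3) : uu L a t x = ∫ z, (kk L z : ℂ) * vv L a t (x + z) := by
  unfold uu vv
  simp_rw [gw_kk L hL, ← integral_const_mul, ← integral_mul_const]
  rw [integral_integral_swap]
  · congr 1; ext z; congr 1; ext κ
    rw [ee_add]; ring
  · refine Integrable.mono' (hai.norm.mul_prod (kk_int L hL)) ?_ ?_
    · have m1 : Measurable (fun z : Ed 3 × Ed 3 => gw (L / 2) t z.1) :=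
        (gw_cont _ _).measurable.comp measurable_fst
      have m2 : Measurable (fun z : Ed 3 × Ed 3 => ee x z.1) := by unfold ee; fun_prop
      have m3 : Measurable (fun z : Ed 3 × Ed 3 => ee z.2 z.1) := by unfold ee; fun_prop
      have m4 : Measurable (fun z : Ed 3 × Ed 3 => (kk L z.2 : ℂ)) :=
        Complex.measurable_ofReal.comp ((kk_cont L).measurable.comp measurable_snd)
      exact ((m4.mul m3).mul ((m1.mul m2).mul (ha.comp measurable_fst))).aestronglyMeasurable
    · filter_upwards with z
      simp only [Function.uncurry]
      rw [norm_mul, norm_mul, norm_mul, norm_mul, ee_norm, ee_norm, Complex.norm_real,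
        Real.norm_of_nonneg (kk_nonneg L hL _), gw_norm]
      have h1 : Real.exp (-(L / 2 / 2) * ‖z.1‖ ^ 2) ≤ 1 := by
        rw [Real.exp_le_one_iff]
        have : 0 ≤ L / 2 / 2 * ‖z.1‖ ^ 2 := by positivity
        linarith
      have := kk_nonneg L hL z.2
      calc _ ≤ kk L z.2 * 1 * (1 * 1 * ‖a z.1‖) := by gcongr
        _ = _ := by ring

theorem vv_meas_comp {X : Type*} [MeasurableSpace X] (L : ℝ) (a : Ed 3 → ℂ) (ha : Measurable a)
    (t : X → ℝ) (x : X → Ed 3) (ht : Measurable t) (hx : Measurable x) :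
    Measurable (fun z => vv L a (t z) (x z)) := by
  have h := (vv_meas L a ha).comp (ht.prodMk hx)
  have e : (Function.uncurry (vv L a) ∘ fun z => (t z, x z)) = fun z => vv L a (t z) (x z) := by
    ext z; rw [Function.comp_apply, Function.uncurry_apply_pair]
  rwa [e] at h

theorem uu_diff (L : ℝ) (hL : 0 < L) (a : Ed 3 → ℂ) (ha : Measurable a) (hai : Integrable a) (t : ℝ)
    (x h : Ed 3) : ‖uu L a t (x + h) - uu L a t x‖ₑ ≤
      ∫⁻ z, ‖kk L (z - h) - kk L z‖ₑ * ‖vv L a t (x + z)‖ₑ := by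
  have hvm := vv_meas L a ha
  have hvb := vv_bdd L hL a hai t
  have hvx : Measurable (fun z => vv L a t (x + z)) :=
    vv_meas_comp L a ha _ _ measurable_const (measurable_const.add measurable_id)
  rw [uu_conv L hL a ha hai, uu_conv L hL a ha hai]
  have e1 : ∫ z, (kk L z : ℂ) * vv L a t (x + h + z) = ∫ z, (kk L (z - h) : ℂ) * vv L a t (x + z) := by
    rw [← integral_sub_right_eq_self (fun z => (kk L z : ℂ) * vv L a t (x + h + z)) h]
    congr 1; ext z
    have : x + h + (z - h) = x + z := by abel
    rw [this]
  rw [e1]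
  have hmk : Measurable (kk L) := (kk_cont L).measurable
  have hmk2 : Measurable (fun z => kk L (z - h)) := hmk.comp (measurable_id.sub_const h)
  have hc1 : Measurable (fun z => (kk L (z - h) : ℂ)) := Complex.measurable_ofReal.comp hmk2
  have hc2 : Measurable (fun z => (kk L z : ℂ)) := Complex.measurable_ofReal.comp hmk
  have hc3 : Measurable (fun z => (kk L (z - h) : ℂ) * vv L a t (x + z)) := hc1.mul hvx
  have hc4 : Measurable (fun z => (kk L z : ℂ) * vv L a t (x + z)) := hc2.mul hvx
  refine (sub_integral_enorm_le volume _ _ hc3.aestronglyMeasurable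
    hc4.aestronglyMeasurable).trans (lintegral_mono fun z => ?_)
  rw [← sub_mul, enorm_mul, ← Complex.ofReal_sub, ← ofReal_norm, Complex.norm_real, ofReal_norm]

theorem uu_lp (p : ℝ) (hp : 1 ≤ p) (l : ℝ) (hl : 0 < l) (a : Ed 3 → ℂ) (ha : Measurable a)
    (hai : Integrable a) (t : ℝ) (h : Ed 3) :
    (∫⁻ x, ‖uu (l ^ 2) a t (x + h) - uu (l ^ 2) a t x‖ₑ ^ p) ^ (1 / p) ≤
      ENNReal.ofReal (48 * min 1 (‖h‖ / l)) * (∫⁻ x, ‖vv (l ^ 2) a t x‖ₑ ^ p) ^ (1 / p) := by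
  have hL : 0 < l ^ 2 := by positivity
  have hp0 : 0 < p := by linarith
  have hkd := kk_diff l hl h
  have hud := uu_diff (l ^ 2) hL a ha hai t
  generalize l ^ 2 = L at *
  have hvm := vv_meas L a ha
  have hmk : Measurable (kk L) := (kk_cont L).measurable
  have hmk2 : Measurable (fun z => kk L (z - h)) := hmk.comp (measurable_id.sub_const h)
  have hkm0 : Measurable (fun z => kk L (z - h) - kk L z) := hmk2.sub hmk
  have hkm : Measurable (fun z => ‖kk L (z - h) - kk L z‖ₑ) := hkm0.enorm
  have hF : Measurable (Function.uncurry (fun x z : Ed 3 =>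
      ‖kk L (z - h) - kk L z‖ₑ * ‖vv L a t (x + z)‖ₑ)) := by
    have m1 : Measurable (fun q : Ed 3 × Ed 3 => vv L a t (q.1 + q.2)) :=
      vv_meas_comp L a ha _ _ measurable_const (measurable_fst.add measurable_snd)
    have m2 : Measurable (fun q : Ed 3 × Ed 3 => ‖kk L (q.2 - h) - kk L q.2‖ₑ) :=
      hkm.comp measurable_snd
    have m3 : Measurable (fun q : Ed 3 × Ed 3 => ‖vv L a t (q.1 + q.2)‖ₑ) := m1.enorm
    exact m2.mul m3
  calc _ ≤ (∫⁻ x, (∫⁻ z, ‖kk L (z - h) - kk L z‖ₑ * ‖vv L a t (x + z)‖ₑ) ^ p) ^ (1 / p) := by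
        gcongr with x; exact hud x h
    _ ≤ ∫⁻ z, (∫⁻ x, (‖kk L (z - h) - kk L z‖ₑ * ‖vv L a t (x + z)‖ₑ) ^ p) ^ (1 / p) :=
        mink _ _ _ hF p hp
    _ = ∫⁻ z, ‖kk L (z - h) - kk L z‖ₑ * (∫⁻ x, ‖vv L a t x‖ₑ ^ p) ^ (1 / p) := by
        congr 1; ext z
        simp_rw [ENNReal.mul_rpow_of_nonneg _ _ hp0.le]
        rw [lintegral_const_mul' _ _ (ENNReal.rpow_ne_top_of_nonneg hp0.le enorm_ne_top),
          ENNReal.mul_rpow_of_nonneg _ _ (by positivity), ← ENNReal.rpow_mul,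
          mul_one_div_cancel hp0.ne', ENNReal.rpow_one,
          lintegral_add_right_eq_self (fun x => ‖vv L a t x‖ₑ ^ p) z]
    _ = (∫⁻ z, ‖kk L (z - h) - kk L z‖ₑ) * (∫⁻ x, ‖vv L a t x‖ₑ ^ p) ^ (1 / p) :=
        lintegral_mul_const _ hkm
    _ ≤ _ := by gcongr

open MeasureTheory ENNReal
open scoped RealInnerProductSpace

theorem radial_int (r : ℝ) (hr0 : 0 < r) (hr1 : r < 1) : ∃ K : ℝ, ∀ l : ℝ, 0 < l →
    ∫⁻ h : Ed 3, ENNReal.ofReal (‖h‖ ^ (-(3 : ℝ)) * min ((‖h‖ / l) ^ (1 - r)) ((‖h‖ / l) ^ (-r))) ≤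
      ENNReal.ofReal K := by
  refine ⟨3 * ((volume : Measure (Ed 3)).real (Metric.ball 0 1) * (1 / (1 - r) + 1 / r)), fun l hl => ?_⟩
  have hr1' : 0 < 1 - r := by linarith
  set f : ℝ → ℝ := fun y => y ^ (-(3 : ℝ)) * min ((y / l) ^ (1 - r)) ((y / l) ^ (-r)) with hf
  have hfm : Measurable f := by rw [hf]; fun_prop
  have hdim : Module.finrank ℝ (Ed 3) = 3 := by simp
  have hg0 : ∀ y ∈ Set.Ioi (0 : ℝ), 0 ≤ y ^ 2 • f y := by
    intro y hy
    have hy' : 0 < y := hy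
    rw [hf]; simp only [smul_eq_mul]; positivity
  have hgm : Measurable (fun y : ℝ => y ^ 2 • f y) := by
    simp only [smul_eq_mul]; fun_prop
  have hlint : ∫⁻ y in Set.Ioi (0 : ℝ), ENNReal.ofReal (y ^ 2 • f y) ≤
      ENNReal.ofReal (1 / (1 - r) + 1 / r) := by
    rw [← Set.Ioc_union_Ioi_eq_Ioi hl.le]
    refine (lintegral_union_le _ _ _).trans ?_
    rw [ENNReal.ofReal_add (by positivity) (by positivity)]
    refine add_le_add ?_ ?_
    · have h1 : ∀ y ∈ Set.Ioc (0 : ℝ) l, ENNReal.ofReal (y ^ 2 • f y) ≤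
          ENNReal.ofReal (l ^ (r - 1)) * ENNReal.ofReal (y ^ (-r)) := by
        intro y hy
        rw [← ENNReal.ofReal_mul (by positivity)]
        refine ENNReal.ofReal_le_ofReal ?_
        have hy0 := hy.1
        rw [hf]; simp only [smul_eq_mul]
        calc _ ≤ y ^ 2 * (y ^ (-(3 : ℝ)) * (y / l) ^ (1 - r)) := by gcongr; exact min_le_left _ _
          _ = _ := by
            rw [Real.div_rpow hy0.le hl.le, ← Real.rpow_natCast, ← mul_div_assoc, ← mul_div_assoc,
              ← Real.rpow_add hy0, ← Real.rpow_add hy0, div_eq_mul_inv, ← Real.rpow_neg hl.le, mul_comm]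
            congr 2 <;> push_cast <;> ring
      refine (setLIntegral_mono' measurableSet_Ioc h1).trans (le_of_eq ?_)
      rw [lintegral_const_mul' _ _ ofReal_ne_top, lint_rpow_Ioc _ _ (by linarith) hl.le,
        ← ENNReal.ofReal_mul (by positivity)]
      congr 1
      rw [← mul_div_assoc, ← Real.rpow_add hl]
      have e1 : r - 1 + (-r + 1) = 0 := by ring
      have e2 : -r + 1 = 1 - r := by ring
      rw [e1, e2, Real.rpow_zero]
    · have h1 : ∀ y ∈ Set.Ioi l, ENNReal.ofReal (y ^ 2 • f y) ≤
          ENNReal.ofReal (l ^ r) * ENNReal.ofReal (y ^ (-r - 1)) := by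
        intro y hy
        rw [← ENNReal.ofReal_mul (by positivity)]
        refine ENNReal.ofReal_le_ofReal ?_
        have hy0 : 0 < y := hl.trans hy
        rw [hf]; simp only [smul_eq_mul]
        calc _ ≤ y ^ 2 * (y ^ (-(3 : ℝ)) * (y / l) ^ (-r)) := by gcongr; exact min_le_right _ _
          _ = _ := by
            rw [Real.div_rpow hy0.le hl.le, ← Real.rpow_natCast, ← mul_div_assoc, ← mul_div_assoc,
              ← Real.rpow_add hy0, ← Real.rpow_add hy0, div_eq_mul_inv, ← Real.rpow_neg hl.le, mul_comm]
            congr 2 <;> push_cast <;> ring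
      refine (setLIntegral_mono' measurableSet_Ioi h1).trans (le_of_eq ?_)
      rw [lintegral_const_mul' _ _ ofReal_ne_top, lint_rpow_Ioi _ _ (by linarith) hl,
        ← ENNReal.ofReal_mul (by positivity)]
      congr 1
      have e2 : -r - 1 + 1 = -r := by ring
      rw [e2, ← mul_div_assoc, mul_neg, ← Real.rpow_add hl, add_neg_cancel, Real.rpow_zero, neg_div_neg_eq]
  have hgi : IntegrableOn (fun y : ℝ => y ^ 2 • f y) (Set.Ioi 0) := by
    refine ⟨hgm.aestronglyMeasurable, ?_⟩
    rw [hasFiniteIntegral_iff_ofReal (ae_restrict_of_forall_mem measurableSet_Ioi hg0)]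
    exact hlint.trans_lt ENNReal.ofReal_lt_top
  have hI : Integrable (fun x : Ed 3 => f ‖x‖) := by
    rw [integrable_fun_norm_addHaar (E := Ed 3) volume, hdim]; exact hgi
  have hint := integral_fun_norm_addHaar (volume : Measure (Ed 3)) f
  rw [hdim] at hint
  rw [← ofReal_integral_eq_lintegral_ofReal hI (Filter.Eventually.of_forall fun x => by
    rw [hf]; simp only; positivity), hint]
  refine ENNReal.ofReal_le_ofReal ?_
  simp only [nsmul_eq_mul, smul_eq_mul]
  push_cast
  gcongr
  rw [← ENNReal.ofReal_le_ofReal_iff (by positivity)]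
  refine le_trans (le_of_eq ?_) hlint
  exact ofReal_integral_eq_lintegral_ofReal hgi (ae_restrict_of_forall_mem measurableSet_Ioi hg0)

theorem besov_sum (p r : ℝ) (hp : 1 < p) (hr0 : 0 < r) (hr1 : r < 1) : ∃ K : ℝ, 
    ∀ M : ℤ → ℝ≥0∞,
    ∫⁻ h : Ed 3, (‖h‖ₑ ^ (r * p + 3))⁻¹ *
      (∑' j : ℤ, ENNReal.ofReal (48 * min 1 (‖h‖ / 2 ^ j)) * M j) ^ p ≤
      ENNReal.ofReal K * ∑' j : ℤ, (ENNReal.ofReal (((2 : ℝ) ^ j) ^ (-r)) * M j) ^ p := by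
  obtain ⟨W, hW⟩ := dyadic_sum (1 - r) r (by linarith) hr0
  obtain ⟨W', hW'⟩ := radial_int r hr0 hr1
  have hp0 : 0 < p := by linarith
  refine ⟨48 ^ p * (max W 0) ^ (p - 1) * max W' 0, fun M => ?_⟩
  set om : ℤ → Ed 3 → ℝ≥0∞ := fun j h =>
    ENNReal.ofReal (min ((‖h‖ / 2 ^ j) ^ (1 - r)) ((‖h‖ / 2 ^ j) ^ (-r))) with hom
  set c : ℤ → ℝ≥0∞ := fun j => ENNReal.ofReal (((2 : ℝ) ^ j) ^ (-r)) * M j with hc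
  have homW : ∀ h : Ed 3, h ≠ 0 → ∑' j, om j h ≤ ENNReal.ofReal (max W 0) := by
    intro h hh
    refine le_trans (le_of_eq ?_) ((hW ‖h‖ (norm_pos_iff.2 hh)).trans
      (ENNReal.ofReal_le_ofReal (le_max_left _ _)))
    rw [← (Equiv.neg ℤ).tsum_eq]
    congr 1; ext j
    rw [hom]; simp only [Equiv.neg_apply, zpow_neg, div_inv_eq_mul]
  have homm : ∀ j, Measurable (om j) := by intro j; rw [hom]; fun_prop
  have hpt : ∀ h : Ed 3, h ≠ 0 → (‖h‖ₑ ^ (r * p + 3))⁻¹ *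
      (∑' j : ℤ, ENNReal.ofReal (48 * min 1 (‖h‖ / 2 ^ j)) * M j) ^ p ≤
      ENNReal.ofReal (48 ^ p * (max W 0) ^ (p - 1)) *
        ∑' j, (ENNReal.ofReal (‖h‖ ^ (-(3 : ℝ))) * om j h) * c j ^ p := by
    intro h hh
    have hn : 0 < ‖h‖ := norm_pos_iff.2 hh
    have e1 : (‖h‖ₑ ^ (r * p + 3))⁻¹ = ENNReal.ofReal (‖h‖ ^ (-(3 : ℝ))) * ENNReal.ofReal (‖h‖ ^ (-r)) ^ p := by
      rw [← ofReal_norm, ENNReal.ofReal_rpow_of_pos hn, ENNReal.ofReal_rpow_of_pos (by positivity),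
        ← ENNReal.ofReal_inv_of_pos (by positivity), ← ENNReal.ofReal_mul (by positivity),
        ← Real.rpow_neg hn.le, ← Real.rpow_mul hn.le, ← Real.rpow_add hn]
      congr 2; ring
    have e2 : ENNReal.ofReal (‖h‖ ^ (-r)) *
        (∑' j : ℤ, ENNReal.ofReal (48 * min 1 (‖h‖ / 2 ^ j)) * M j) =
        48 * ∑' j, om j h * c j := by
      rw [← ENNReal.tsum_mul_left, ← ENNReal.tsum_mul_left]
      congr 1; ext j
      have h2 : (0 : ℝ) < 2 ^ j := by positivity
      have e48 : (48 : ℝ≥0∞) = ENNReal.ofReal 48 := by simp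
      rw [hc, hom, e48]; simp only
      rw [← mul_assoc, ← mul_assoc, ← mul_assoc, ← ENNReal.ofReal_mul (by positivity),
        ← ENNReal.ofReal_mul (by positivity), ← ENNReal.ofReal_mul (by positivity)]
      congr 2
      have h3 : 0 < ‖h‖ / 2 ^ j := by positivity
      have e3 : min ((‖h‖ / 2 ^ j) ^ (1 - r)) ((‖h‖ / 2 ^ j) ^ (-r)) =
          (‖h‖ / 2 ^ j) ^ (-r) * min 1 (‖h‖ / 2 ^ j) := by
        rw [mul_min_of_nonneg _ _ (by positivity), mul_one, min_comm]
        congr 1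
        rw [show 1 - r = -r + 1 by ring, Real.rpow_add h3, Real.rpow_one]
      have e4 : ‖h‖ ^ (-r) = (‖h‖ / 2 ^ j) ^ (-r) * ((2 : ℝ) ^ j) ^ (-r) := by
        rw [← Real.mul_rpow h3.le h2.le, div_mul_cancel₀ _ h2.ne']
      rw [e3, e4]; ring
    rw [e1, mul_assoc, ← ENNReal.mul_rpow_of_nonneg _ _ hp0.le, e2, ENNReal.mul_rpow_of_nonneg _ _ hp0.le]
    have h5 := tsum_holder p hp (fun j => om j h) c
    have h6 : (∑' j, om j h) ^ (p - 1) ≤ ENNReal.ofReal ((max W 0) ^ (p - 1)) := by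
      rw [← ENNReal.ofReal_rpow_of_nonneg (le_max_right _ _) (by linarith)]
      exact ENNReal.rpow_le_rpow (homW h hh) (by linarith)
    have e48 : (48 : ℝ≥0∞) ^ p = ENNReal.ofReal (48 ^ p) := by
      rw [← ENNReal.ofReal_rpow_of_pos (by norm_num)]; simp
    rw [ENNReal.ofReal_mul (by positivity), e48]
    simp_rw [mul_assoc (ENNReal.ofReal (‖h‖ ^ (-(3 : ℝ))))]
    rw [ENNReal.tsum_mul_left]
    calc _ ≤ ENNReal.ofReal (‖h‖ ^ (-(3 : ℝ))) * (ENNReal.ofReal (48 ^ p) *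
          (ENNReal.ofReal ((max W 0) ^ (p - 1)) * ∑' j, om j h * c j ^ p)) := by
          gcongr; exact h5.trans (by gcongr)
      _ = _ := by ring
  calc _ ≤ ∫⁻ h : Ed 3, ENNReal.ofReal (48 ^ p * (max W 0) ^ (p - 1)) *
        ∑' j, (ENNReal.ofReal (‖h‖ ^ (-(3 : ℝ))) * om j h) * c j ^ p := by
        refine lintegral_mono_ae ?_
        filter_upwards [Measure.ae_ne volume (0 : Ed 3)] with h hh using hpt h hh
    _ = ENNReal.ofReal (48 ^ p * (max W 0) ^ (p - 1)) *
        ∑' j, (∫⁻ h : Ed 3, ENNReal.ofReal (‖h‖ ^ (-(3 : ℝ))) * om j h) * c j ^ p := by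
        have hm3 : ∀ j, Measurable (fun h : Ed 3 => ENNReal.ofReal (‖h‖ ^ (-(3 : ℝ))) * om j h) := by
          intro j
          have : Measurable (fun h : Ed 3 => ENNReal.ofReal (‖h‖ ^ (-(3 : ℝ)))) := by fun_prop
          exact this.mul (homm j)
        rw [lintegral_const_mul' _ _ ofReal_ne_top, lintegral_tsum]
        · congr 2; ext j
          rw [lintegral_mul_const _ (hm3 j)]
        · intro j
          exact ((hm3 j).mul_const _).aemeasurable
    _ ≤ ENNReal.ofReal (48 ^ p * (max W 0) ^ (p - 1)) *
        ∑' j, ENNReal.ofReal (max W' 0) * c j ^ p := by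
        gcongr with j
        refine le_trans (le_of_eq ?_) ((hW' (2 ^ j) (by positivity)).trans
          (ENNReal.ofReal_le_ofReal (le_max_left _ _)))
        congr 1; ext h
        rw [ENNReal.ofReal_mul (by positivity)]
    _ = _ := by
        rw [ENNReal.tsum_mul_left, ← mul_assoc, ← ENNReal.ofReal_mul (by positivity)]

open MeasureTheory ENNReal
open scoped RealInnerProductSpace

/-- The constant `(2π)^{-3}`. -/
noncomputable def cc : ℝ := (2 * Real.pi) ^ (-((3 : ℕ) : ℝ))

theorem cc_pos : 0 < cc := by unfold cc; positivity

/-- Half-wave with given Fourier side data. -/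
noncomputable def hw (G : Ed 3 → ℂ) (t : ℝ) (x : Ed 3) : ℂ :=
  (cc : ℂ) * ∫ κ, Complex.exp (Complex.I * ((⟪x, κ⟫ : ℂ) + (t : ℂ) * ((‖κ‖ : ℝ) : ℂ))) * G κ

theorem hw_eq (g : Ed 3 → ℂ) (t : ℝ) (x : Ed 3) : halfWave 3 t g x = hw (ftransform 3 g) t x := rfl

theorem exp_split (t : ℝ) (x κ : Ed 3) :
    Complex.exp (Complex.I * ((⟪x, κ⟫ : ℂ) + (t : ℂ) * ((‖κ‖ : ℝ) : ℂ))) = ee x κ * ph t κ := by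
  rw [ee, ph, ← Complex.exp_add]; congr 1; push_cast; ring

/-- The dyadic Littlewood–Paley weight. -/
noncomputable def mm (j : ℤ) (κ : Ed 3) : ℝ :=
  Real.exp (-(((2 : ℝ) ^ j) ^ 2 * ‖κ‖ ^ 2)) - Real.exp (-(4 * ((2 : ℝ) ^ j) ^ 2 * ‖κ‖ ^ 2))

/-- The reduced dyadic weight. -/
noncomputable def bb (j : ℤ) (κ : Ed 3) : ℝ :=
  Real.exp (-(((2 : ℝ) ^ j) ^ 2 / 4) * ‖κ‖ ^ 2) * (1 - Real.exp (-(3 * ((2 : ℝ) ^ j) ^ 2) * ‖κ‖ ^ 2))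

/-- The dyadic pieces of the data. -/
noncomputable def aa (G : Ed 3 → ℂ) (j : ℤ) (κ : Ed 3) : ℂ := (cc : ℂ) * (bb j κ : ℂ) * G κ

theorem mm_nonneg (j : ℤ) (κ : Ed 3) : 0 ≤ mm j κ := by
  unfold mm
  rw [sub_nonneg]
  refine Real.exp_le_exp.2 ?_
  have : 0 ≤ ((2 : ℝ) ^ j) ^ 2 * ‖κ‖ ^ 2 := by positivity
  linarith

theorem mm_meas (j : ℤ) : Measurable (mm j) := by unfold mm; fun_prop

theorem bb_meas (j : ℤ) : Measurable (bb j) := by unfold bb; fun_prop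

theorem bb_nonneg (j : ℤ) (κ : Ed 3) : 0 ≤ bb j κ := by
  unfold bb
  refine mul_nonneg (by positivity) ?_
  rw [sub_nonneg, Real.exp_le_one_iff]
  have : 0 ≤ 3 * ((2 : ℝ) ^ j) ^ 2 * ‖κ‖ ^ 2 := by positivity
  linarith

theorem bb_le_one (j : ℤ) (κ : Ed 3) : bb j κ ≤ 1 := by
  unfold bb
  have h1 : Real.exp (-(((2 : ℝ) ^ j) ^ 2 / 4) * ‖κ‖ ^ 2) ≤ 1 := by
    rw [Real.exp_le_one_iff]
    have : 0 ≤ ((2 : ℝ) ^ j) ^ 2 / 4 * ‖κ‖ ^ 2 := by positivity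
    linarith
  have h2 : 1 - Real.exp (-(3 * ((2 : ℝ) ^ j) ^ 2) * ‖κ‖ ^ 2) ≤ 1 := by
    have := Real.exp_pos (-(3 * ((2 : ℝ) ^ j) ^ 2) * ‖κ‖ ^ 2)
    linarith
  have h3 := Real.exp_pos (-(((2 : ℝ) ^ j) ^ 2 / 4) * ‖κ‖ ^ 2)
  nlinarith

theorem aa_meas (G : Ed 3 → ℂ) (hG : Measurable G) (j : ℤ) : Measurable (aa G j) :=
  (measurable_const.mul (Complex.measurable_ofReal.comp (bb_meas j))).mul hG

theorem aa_int (G : Ed 3 → ℂ) (hG : Measurable G) (hGi : Integrable G) (j : ℤ) :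
    Integrable (aa G j) := by
  refine (hGi.norm.const_mul cc).mono' (aa_meas G hG j).aestronglyMeasurable ?_
  filter_upwards with κ
  rw [aa, norm_mul, norm_mul, Complex.norm_real, Complex.norm_real, Real.norm_of_nonneg cc_pos.le,
    Real.norm_of_nonneg (bb_nonneg j κ)]
  have := cc_pos
  have h2 := bb_le_one j κ
  calc _ ≤ cc * 1 * ‖G κ‖ := by gcongr
    _ = _ := by ring

theorem piece_eq (G : Ed 3 → ℂ) (j : ℤ) (t : ℝ) (x κ : Ed 3) :
    gw (((2 : ℝ) ^ j) ^ 2) 0 κ * (gw (((2 : ℝ) ^ j) ^ 2 / 2) t κ * ee x κ * aa G j κ) =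
      (mm j κ : ℂ) * ((cc : ℂ) * (ee x κ * ph t κ * G κ)) := by
  have e : gw (((2 : ℝ) ^ j) ^ 2) 0 κ * gw (((2 : ℝ) ^ j) ^ 2 / 2) t κ * (bb j κ : ℂ) =
      (mm j κ : ℂ) * ph t κ := by
    generalize hL : ((2 : ℝ) ^ j) ^ 2 = L
    rw [gw_ph (L / 2) t]
    have e1 : gw L 0 κ = ((Real.exp (-(L / 2) * ‖κ‖ ^ 2) : ℝ) : ℂ) := by
      unfold gw; push_cast; congr 1; ring
    have e2 : gw (L / 2) 0 κ = ((Real.exp (-(L / 2 / 2) * ‖κ‖ ^ 2) : ℝ) : ℂ) := by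
      unfold gw; push_cast; congr 1; ring
    have e3 : mm j κ = Real.exp (-(L / 2) * ‖κ‖ ^ 2) * Real.exp (-(L / 2 / 2) * ‖κ‖ ^ 2) * bb j κ := by
      unfold mm bb
      rw [hL, mul_sub, mul_sub, mul_one]
      have f1 : Real.exp (-(L * ‖κ‖ ^ 2)) = Real.exp (-(L / 2) * ‖κ‖ ^ 2) *
          Real.exp (-(L / 2 / 2) * ‖κ‖ ^ 2) * Real.exp (-(L / 4) * ‖κ‖ ^ 2) := by
        rw [← Real.exp_add, ← Real.exp_add]; congr 1; ring
      have f2 : Real.exp (-(4 * L * ‖κ‖ ^ 2)) = Real.exp (-(L * ‖κ‖ ^ 2)) *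
          Real.exp (-(3 * L) * ‖κ‖ ^ 2) := by
        rw [← Real.exp_add]; congr 1; ring
      rw [f2, f1]; ring
    rw [e1, e2, e3]; push_cast; ring
  calc _ = (gw (((2 : ℝ) ^ j) ^ 2) 0 κ * gw (((2 : ℝ) ^ j) ^ 2 / 2) t κ * (bb j κ : ℂ)) *
        ((cc : ℂ) * ee x κ * G κ) := by unfold aa; ring
    _ = _ := by rw [e]; ring

theorem ephG_int (G : Ed 3 → ℂ) (hG : Measurable G) (hGi : Integrable G) (t : ℝ) (x : Ed 3) :
    Integrable (fun κ => ee x κ * ph t κ * G κ) := by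
  have m1 : Measurable (fun κ => ee x κ) := by unfold ee; fun_prop
  have m2 : Measurable (fun κ => ph t κ) := by unfold ph; fun_prop
  refine hGi.norm.mono' ((m1.mul m2).mul hG).aestronglyMeasurable ?_
  filter_upwards with κ
  rw [norm_mul, norm_mul, ee_norm, ph_norm]; simp

theorem hw_decomp (G : Ed 3 → ℂ) (hG : Measurable G) (hGi : Integrable G) (t : ℝ) (x y : Ed 3) :
    ‖hw G t x - hw G t y‖ₑ ≤ ∑' j : ℤ, ‖uu (((2 : ℝ) ^ j) ^ 2) (aa G j) t x -
      uu (((2 : ℝ) ^ j) ^ 2) (aa G j) t y‖ₑ := by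
  have hi : ∀ x, Integrable (fun κ => (cc : ℂ) * (ee x κ * ph t κ * G κ)) := fun x =>
    (ephG_int G hG hGi t x).const_mul _
  set D : Ed 3 → ℂ := fun κ => (cc : ℂ) * (ee x κ * ph t κ * G κ) - (cc : ℂ) * (ee y κ * ph t κ * G κ)
    with hD
  have hDi : Integrable D := (hi x).sub (hi y)
  have hDm : Measurable D := by
    have m1 : ∀ x, Measurable (fun κ => ee x κ) := fun x => by unfold ee; fun_prop
    have m2 : Measurable (fun κ => ph t κ) := by unfold ph; fun_prop
    exact (measurable_const.mul (((m1 x).mul m2).mul hG)).sub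
      (measurable_const.mul (((m1 y).mul m2).mul hG))
  have e1 : hw G t x - hw G t y = ∫ κ, D κ := by
    rw [hD, integral_sub (hi x) (hi y), hw, hw]
    simp_rw [exp_split]
    rw [integral_const_mul, integral_const_mul]
  have hmmD : ∀ j, Measurable (fun κ => (mm j κ : ℂ) * D κ) := fun j =>
    (Complex.measurable_ofReal.comp (mm_meas j)).mul hDm
  have hone : ∀ κ : Ed 3, κ ≠ 0 → HasSum (fun j => mm j κ) 1 := fun κ hκ =>
    tel_sum (‖κ‖ ^ 2) (by have := norm_pos_iff.2 hκ; positivity)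
  have e2 : ∫ κ, D κ = ∫ κ, ∑' j : ℤ, (mm j κ : ℂ) * D κ := by
    refine integral_congr_ae ?_
    filter_upwards [Measure.ae_ne volume (0 : Ed 3)] with κ hκ
    have h1 : HasSum (fun j => (mm j κ : ℂ)) ((1 : ℝ) : ℂ) := by exact_mod_cast hone κ hκ
    rw [tsum_mul_right, h1.tsum_eq, Complex.ofReal_one, one_mul]
  have hfin : ∑' j : ℤ, ∫⁻ κ, ‖(mm j κ : ℂ) * D κ‖ₑ ≠ ⊤ := by
    rw [← lintegral_tsum fun j => (hmmD j).enorm.aemeasurable]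
    have : ∫⁻ κ, ∑' j : ℤ, ‖(mm j κ : ℂ) * D κ‖ₑ = ∫⁻ κ, ‖D κ‖ₑ := by
      refine lintegral_congr_ae ?_
      filter_upwards [Measure.ae_ne volume (0 : Ed 3)] with κ hκ
      have h2 : ∀ j, ‖(mm j κ : ℂ)‖ₑ = ENNReal.ofReal (mm j κ) := fun j => by
        rw [← ofReal_norm, Complex.norm_real, Real.norm_of_nonneg (mm_nonneg j κ)]
      simp_rw [enorm_mul, h2]
      rw [ENNReal.tsum_mul_right, ← ENNReal.ofReal_tsum_of_nonneg (fun j => mm_nonneg j κ)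
        (hone κ hκ).summable, (hone κ hκ).tsum_eq, ENNReal.ofReal_one, one_mul]
    rw [this]
    exact hDi.2.ne
  rw [e1, e2, integral_tsum (fun j => (hmmD j).aestronglyMeasurable) hfin]
  refine enorm_tsum_le_tsum_enorm.trans (ENNReal.tsum_le_tsum fun j => le_of_eq ?_)
  congr 1
  unfold uu
  simp_rw [piece_eq]
  have hmi : ∀ x, Integrable (fun κ => (mm j κ : ℂ) * ((cc : ℂ) * (ee x κ * ph t κ * G κ))) := by
    intro x
    refine (hi x).norm.mono' ?_ ?_
    · exact (Complex.measurable_ofReal.comp (mm_meas j)).aestronglyMeasurable.mul (hi x).1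
    · filter_upwards with κ
      rw [norm_mul, Complex.norm_real, Real.norm_of_nonneg (mm_nonneg j κ)]
      refine mul_le_of_le_one_left (norm_nonneg _) ?_
      unfold mm
      have h3 := Real.exp_pos (-(4 * ((2 : ℝ) ^ j) ^ 2 * ‖κ‖ ^ 2))
      have h4 : Real.exp (-(((2 : ℝ) ^ j) ^ 2 * ‖κ‖ ^ 2)) ≤ 1 := by
        rw [Real.exp_le_one_iff]
        have : 0 ≤ ((2 : ℝ) ^ j) ^ 2 * ‖κ‖ ^ 2 := by positivity
        linarith
      linarith
  rw [← integral_sub (hmi x) (hmi y)]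
  congr 1; ext κ
  rw [hD]; ring

theorem uu_meas (L : ℝ) (a : Ed 3 → ℂ) (ha : Measurable a) (t : ℝ) : Measurable (uu L a t) := by
  have m1 : Measurable (fun z : Ed 3 × Ed 3 => gw (L / 2) t z.2) :=
    (gw_cont _ _).measurable.comp measurable_snd
  have m0 : Measurable (fun z : Ed 3 × Ed 3 => gw L 0 z.2) :=
    (gw_cont _ _).measurable.comp measurable_snd
  have m2 : Measurable (fun z : Ed 3 × Ed 3 => ee z.1 z.2) := ee_meas
  exact ((m0.mul ((m1.mul m2).mul (ha.comp measurable_snd))).stronglyMeasurable.integral_prod_right').measurable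

theorem hw_meas (G : Ed 3 → ℂ) (hG : Measurable G) : Measurable (fun q : ℝ × Ed 3 => hw G q.1 q.2) := by
  have m2 : Measurable (fun z : (ℝ × Ed 3) × Ed 3 =>
      Complex.exp (Complex.I * ((⟪z.1.2, z.2⟫ : ℂ) + (z.1.1 : ℂ) * ((‖z.2‖ : ℝ) : ℂ)))) := by fun_prop
  exact measurable_const.mul
    ((m2.mul (hG.comp measurable_snd)).stronglyMeasurable.integral_prod_right').measurable

theorem hw_meas1 (G : Ed 3 → ℂ) (hG : Measurable G) (t : ℝ) : Measurable (hw G t) := by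
  have m2 : Measurable (fun z : Ed 3 × Ed 3 =>
      Complex.exp (Complex.I * ((⟪z.1, z.2⟫ : ℂ) + (t : ℂ) * ((‖z.2‖ : ℝ) : ℂ)))) := by fun_prop
  exact measurable_const.mul
    ((m2.mul (hG.comp measurable_snd)).stronglyMeasurable.integral_prod_right').measurable

theorem hw_lp (p : ℝ) (hp : 1 ≤ p) (G : Ed 3 → ℂ) (hG : Measurable G) (hGi : Integrable G) (t : ℝ)
    (h : Ed 3) : (∫⁻ x, ‖hw G t (x + h) - hw G t x‖ₑ ^ p) ^ (1 / p) ≤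
      ∑' j : ℤ, ENNReal.ofReal (48 * min 1 (‖h‖ / 2 ^ j)) *
        (∫⁻ x, ‖vv (((2 : ℝ) ^ j) ^ 2) (aa G j) t x‖ₑ ^ p) ^ (1 / p) := by
  have hp0 : 0 < p := by linarith
  set F : Ed 3 → ℤ → ℝ≥0∞ := fun x j => ‖uu (((2 : ℝ) ^ j) ^ 2) (aa G j) t (x + h) -
      uu (((2 : ℝ) ^ j) ^ 2) (aa G j) t x‖ₑ with hF
  have hFm : Measurable (Function.uncurry F) := by
    refine measurable_from_prod_countable_left fun j => ?_
    have m := uu_meas (((2 : ℝ) ^ j) ^ 2) (aa G j) (aa_meas G hG j) t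
    have m' : Measurable (fun x => uu (((2 : ℝ) ^ j) ^ 2) (aa G j) t (x + h)) :=
      m.comp (measurable_id.add_const h)
    exact (m'.sub m).enorm
  have hm := mink (volume : Measure (Ed 3)) (Measure.count : Measure ℤ) F hFm p hp
  simp_rw [lintegral_count] at hm
  calc _ ≤ (∫⁻ x, (∑' j, F x j) ^ p) ^ (1 / p) := by
        gcongr with x
        exact hw_decomp G hG hGi t (x + h) x
    _ ≤ _ := hm
    _ ≤ _ := ENNReal.tsum_le_tsum fun j =>
        uu_lp p hp (2 ^ j) (by positivity) (aa G j) (aa_meas G hG j) (aa_int G hG hGi j) t h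

theorem gag_eq (p r : ℝ) (u : Ed 3 → ℂ) (hu : Measurable u) :
    gagliardo 3 r p u = (∫⁻ h : Ed 3, (‖h‖ₑ ^ (r * p + 3))⁻¹ * ∫⁻ x, ‖u (x + h) - u x‖ₑ ^ p) ^ (1 / p) := by
  unfold gagliardo
  congr 1
  have m1 : Measurable (fun q : Ed 3 × Ed 3 => ‖u (q.1 + q.2) - u q.1‖ₑ ^ p) :=
    ((hu.comp (measurable_fst.add measurable_snd)).sub (hu.comp measurable_fst)).enorm.pow_const p
  have m2 : Measurable (fun h : Ed 3 => (‖h‖ₑ ^ (r * p + 3))⁻¹) := by fun_prop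
  have e1 : ∀ x : Ed 3, ∫⁻ y, (‖u x - u y‖₊ : ℝ≥0∞) ^ p / (‖x - y‖₊ : ℝ≥0∞) ^ (r * p + (3 : ℕ)) =
      ∫⁻ h, (‖h‖ₑ ^ (r * p + 3))⁻¹ * ‖u (x + h) - u x‖ₑ ^ p := by
    intro x
    rw [← lintegral_add_left_eq_self _ x]
    congr 1; ext h
    have h1 : ‖x - (x + h)‖₊ = ‖h‖₊ := by rw [sub_add_cancel_left, nnnorm_neg]
    have h2 : ‖u x - u (x + h)‖₊ = ‖u (x + h) - u x‖₊ := by rw [← nnnorm_neg, neg_sub]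
    rw [h1, h2, div_eq_mul_inv, mul_comm]; norm_num; rfl
  simp_rw [e1]
  rw [lintegral_lintegral_swap]
  · congr 1; ext h
    have m3 : Measurable (fun x : Ed 3 => ‖u (x + h) - u x‖ₑ ^ p) := by
      have m4 : Measurable (fun x : Ed 3 => u (x + h)) := hu.comp (measurable_id.add_const h)
      exact (m4.sub hu).enorm.pow_const p
    rw [lintegral_const_mul _ m3]
  · have m5 : Measurable (fun q : Ed 3 × Ed 3 => (‖q.2‖ₑ ^ (r * p + 3))⁻¹) := by fun_prop
    have m6 : Measurable (fun q : Ed 3 × Ed 3 => (‖q.2‖ₑ ^ (r * p + 3))⁻¹ *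
      ‖u (q.1 + q.2) - u q.1‖ₑ ^ p) := m5.mul m1
    exact m6.aemeasurable

theorem gag_hw (p r : ℝ) (hp : 1 < p) (hr0 : 0 < r) (hr1 : r < 1) : ∃ K : ℝ≥0∞, K ≠ ⊤ ∧
    ∀ G : Ed 3 → ℂ, Measurable G → Integrable G → ∀ t : ℝ,
    gagliardo 3 r p (hw G t) ≤ K * (∑' j : ℤ, (ENNReal.ofReal (((2 : ℝ) ^ j) ^ (-r)) *
      (∫⁻ x, ‖vv (((2 : ℝ) ^ j) ^ 2) (aa G j) t x‖ₑ ^ p) ^ (1 / p)) ^ p) ^ (1 / p) := by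
  obtain ⟨K, hK⟩ := besov_sum p r hp hr0 hr1
  have hp0 : 0 < p := by linarith
  refine ⟨ENNReal.ofReal K ^ (1 / p), ENNReal.rpow_ne_top_of_nonneg (by positivity) ofReal_ne_top, ?_⟩
  intro G hG hGi t
  rw [gag_eq p r _ (hw_meas1 G hG t),
    ← ENNReal.mul_rpow_of_nonneg _ _ (by positivity)]
  refine ENNReal.rpow_le_rpow ?_ (by positivity)
  refine le_trans (lintegral_mono fun h => ?_) (hK _)
  beta_reduce
  gcongr
  have := ENNReal.rpow_le_rpow (hw_lp p hp.le G hG hGi t h) hp0.le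
  rwa [← ENNReal.rpow_mul, one_div_mul_cancel hp0.ne', ENNReal.rpow_one] at this

open MeasureTheory ENNReal
open scoped RealInnerProductSpace

theorem bb_le_sq (j : ℤ) (κ : Ed 3) : bb j κ ≤ 3 * (‖κ‖ * 2 ^ j) ^ 2 := by
  unfold bb
  have h1 : Real.exp (-(((2 : ℝ) ^ j) ^ 2 / 4) * ‖κ‖ ^ 2) ≤ 1 := by
    rw [Real.exp_le_one_iff]
    have : 0 ≤ ((2 : ℝ) ^ j) ^ 2 / 4 * ‖κ‖ ^ 2 := by positivity
    linarith
  have h0 := Real.exp_pos (-(((2 : ℝ) ^ j) ^ 2 / 4) * ‖κ‖ ^ 2)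
  have h2 := Real.add_one_le_exp (-(3 * ((2 : ℝ) ^ j) ^ 2) * ‖κ‖ ^ 2)
  have h3 : 0 ≤ 3 * (‖κ‖ * (2 : ℝ) ^ j) ^ 2 := by positivity
  have h4 : 1 - Real.exp (-(3 * ((2 : ℝ) ^ j) ^ 2) * ‖κ‖ ^ 2) ≤ 3 * (‖κ‖ * 2 ^ j) ^ 2 := by
    rw [mul_pow]; linarith
  calc _ ≤ Real.exp (-(((2 : ℝ) ^ j) ^ 2 / 4) * ‖κ‖ ^ 2) * (3 * (‖κ‖ * 2 ^ j) ^ 2) := by gcongr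
    _ ≤ 1 * (3 * (‖κ‖ * 2 ^ j) ^ 2) := by gcongr
    _ = _ := one_mul _

theorem bb_sum (θ : ℝ) (h0 : 0 < θ) (h2 : θ < 2) : ∃ K : ℝ≥0∞, K ≠ ⊤ ∧ ∀ κ : Ed 3, κ ≠ 0 →
    ∑' j : ℤ, ENNReal.ofReal (((2 : ℝ) ^ j) ^ (-(2 * θ))) * ENNReal.ofReal (bb j κ) ^ 2 ≤
      K * ‖κ‖ₑ ^ (2 * θ) := by
  obtain ⟨K, hK⟩ := dyadic_sum (4 - 2 * θ) (2 * θ) (by linarith) (by linarith)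
  refine ⟨9 * ENNReal.ofReal K, ENNReal.mul_ne_top (by norm_num) ofReal_ne_top, fun κ hκ => ?_⟩
  have hs := norm_pos_iff.2 hκ
  have hn : ‖κ‖ₑ ^ (2 * θ) = ENNReal.ofReal (‖κ‖ ^ (2 * θ)) := by
    rw [← ofReal_norm, ENNReal.ofReal_rpow_of_pos hs]
  have hj : ∀ j : ℤ, ENNReal.ofReal (((2 : ℝ) ^ j) ^ (-(2 * θ))) * ENNReal.ofReal (bb j κ) ^ 2 ≤
      ENNReal.ofReal (9 * ‖κ‖ ^ (2 * θ)) *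
        ENNReal.ofReal (min ((‖κ‖ * 2 ^ j) ^ (4 - 2 * θ)) ((‖κ‖ * 2 ^ j) ^ (-(2 * θ)))) := by
    intro j
    have hb0 := bb_nonneg j κ
    have hb1 := bb_le_one j κ
    have hb2 := bb_le_sq j κ
    have hu : (0 : ℝ) < 2 ^ j := by positivity
    generalize (2 : ℝ) ^ j = u at *
    have hsu : 0 < ‖κ‖ * u := by positivity
    rw [← ENNReal.ofReal_pow hb0, ← ENNReal.ofReal_mul (by positivity), ← ENNReal.ofReal_mul (by positivity)]
    refine ENNReal.ofReal_le_ofReal ?_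
    have e : u ^ (-(2 * θ)) = ‖κ‖ ^ (2 * θ) * (‖κ‖ * u) ^ (-(2 * θ)) := by
      rw [Real.mul_rpow hs.le hu.le, ← mul_assoc, ← Real.rpow_add hs]; simp
    have e2 : (‖κ‖ * u) ^ (4 - 2 * θ) = (‖κ‖ * u) ^ 4 * (‖κ‖ * u) ^ (-(2 * θ)) := by
      rw [sub_eq_add_neg, Real.rpow_add hsu]; norm_cast
    have hp : 0 < (‖κ‖ * u) ^ (-(2 * θ)) := by positivity
    have hk : 0 < ‖κ‖ ^ (2 * θ) := by positivity
    rw [e, e2]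
    generalize (‖κ‖ * u) ^ (-(2 * θ)) = A at *
    generalize ‖κ‖ ^ (2 * θ) = B at *
    generalize ‖κ‖ * u = v at *
    generalize bb j κ = b at *
    have q1 : b ^ 2 ≤ 1 := by nlinarith
    have q2 : b ^ 2 ≤ 9 * v ^ 4 := by
      calc b ^ 2 ≤ (3 * v ^ 2) ^ 2 := by gcongr
        _ = _ := by ring
    rcases min_cases (v ^ 4 * A) A with ⟨h, _⟩ | ⟨h, _⟩ <;> rw [h]
    · calc B * A * b ^ 2 ≤ B * A * (9 * v ^ 4) := by gcongr
        _ = _ := by ring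
    · calc B * A * b ^ 2 ≤ B * A * 1 := by gcongr
        _ ≤ 9 * B * A := by nlinarith [mul_pos hk hp]
  calc _ ≤ ∑' j : ℤ, ENNReal.ofReal (9 * ‖κ‖ ^ (2 * θ)) *
        ENNReal.ofReal (min ((‖κ‖ * 2 ^ j) ^ (4 - 2 * θ)) ((‖κ‖ * 2 ^ j) ^ (-(2 * θ)))) :=
        ENNReal.tsum_le_tsum hj
    _ = ENNReal.ofReal (9 * ‖κ‖ ^ (2 * θ)) * ∑' j : ℤ,
        ENNReal.ofReal (min ((‖κ‖ * 2 ^ j) ^ (4 - 2 * θ)) ((‖κ‖ * 2 ^ j) ^ (-(2 * θ)))) :=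
        ENNReal.tsum_mul_left
    _ ≤ ENNReal.ofReal (9 * ‖κ‖ ^ (2 * θ)) * ENNReal.ofReal K := by gcongr; exact hK _ hs
    _ = _ := by
        rw [hn, ENNReal.ofReal_mul (by norm_num)]
        norm_num; ring

theorem aa_sum (θ : ℝ) (h0 : 0 < θ) (h2 : θ < 2) : ∃ K : ℝ≥0∞, K ≠ ⊤ ∧ ∀ G : Ed 3 → ℂ, Measurable G →
    ∑' j : ℤ, ENNReal.ofReal (((2 : ℝ) ^ j) ^ (-(2 * θ))) * ∫⁻ κ, ‖aa G j κ‖ₑ ^ 2 ≤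
      K * ∫⁻ κ, ‖κ‖ₑ ^ (2 * θ) * ‖G κ‖ₑ ^ 2 := by
  obtain ⟨K, hKt, hK⟩ := bb_sum θ h0 h2
  refine ⟨ENNReal.ofReal cc ^ 2 * K, ENNReal.mul_ne_top (by simp) hKt, fun G hG => ?_⟩
  have hm : ∀ j, Measurable (fun κ => ‖aa G j κ‖ₑ ^ 2) := fun j => (aa_meas G hG j).enorm.pow_const 2
  have hf : ENNReal.ofReal cc ^ 2 * K ≠ ⊤ := ENNReal.mul_ne_top (by simp) hKt
  have e1 : ∀ j : ℤ, ENNReal.ofReal (((2 : ℝ) ^ j) ^ (-(2 * θ))) * ∫⁻ κ, ‖aa G j κ‖ₑ ^ 2 =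
      ∫⁻ κ, ENNReal.ofReal (((2 : ℝ) ^ j) ^ (-(2 * θ))) * ‖aa G j κ‖ₑ ^ 2 := fun j =>
    (lintegral_const_mul' _ _ ofReal_ne_top).symm
  simp_rw [e1]
  rw [← lintegral_tsum fun j => ((hm j).const_mul _).aemeasurable, ← lintegral_const_mul' _ _ hf]
  refine lintegral_mono_ae ?_
  filter_upwards [Measure.ae_ne volume (0 : Ed 3)] with κ hκ
  have e2 : ∀ j : ℤ, ENNReal.ofReal (((2 : ℝ) ^ j) ^ (-(2 * θ))) * ‖aa G j κ‖ₑ ^ 2 =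
      ENNReal.ofReal (((2 : ℝ) ^ j) ^ (-(2 * θ))) * ENNReal.ofReal (bb j κ) ^ 2 *
        (ENNReal.ofReal cc ^ 2 * ‖G κ‖ₑ ^ 2) := by
    intro j
    have a1 : ‖aa G j κ‖ₑ = ENNReal.ofReal cc * ENNReal.ofReal (bb j κ) * ‖G κ‖ₑ := by
      rw [aa, enorm_mul, enorm_mul, ← ofReal_norm, ← ofReal_norm (bb j κ : ℂ), Complex.norm_real,
        Complex.norm_real, Real.norm_of_nonneg cc_pos.le, Real.norm_of_nonneg (bb_nonneg j κ)]
    rw [a1]; ring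
  simp_rw [e2]
  rw [ENNReal.tsum_mul_right]
  calc _ ≤ K * ‖κ‖ₑ ^ (2 * θ) * (ENNReal.ofReal cc ^ 2 * ‖G κ‖ₑ ^ 2) := by gcongr; exact hK κ hκ
    _ = _ := by ring

theorem hom_str (p r θ q : ℝ) (hp2 : 2 < p) (hr0 : 0 < r) (hr1 : r < 1)
    (hθ : θ = r + (p - 2) / p) (hq : q = 2 * p / (p - 2)) : ∃ K : ℝ≥0∞, K ≠ ⊤ ∧
    ∀ G : Ed 3 → ℂ, Measurable G → Integrable G →
    (∫⁻ t, gagliardo 3 r p (hw G t) ^ q) ^ (1 / q) ≤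
      K * (∫⁻ κ, ‖κ‖ₑ ^ (2 * θ) * ‖G κ‖ₑ ^ 2) ^ (1 / 2 : ℝ) := by
  have hp0 : 0 < p := by linarith
  have hpm : 0 < p - 2 := by linarith
  have hq2 : 2 < q := by rw [hq, lt_div_iff₀ hpm]; linarith
  have hq0 : 0 < q := by linarith
  have hγ : (p - 2) / p = 2 / q := by rw [hq]; field_simp
  have hγ1 : (p - 2) / p < 1 := by rw [div_lt_one hp0]; linarith
  have hγ0 : 0 < (p - 2) / p := by positivity
  obtain ⟨K1, hK1t, hK1⟩ := gag_hw p r (by linarith) hr0 hr1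
  obtain ⟨K2, hK2t, hK2⟩ := aa_sum θ (by linarith) (by linarith)
  obtain ⟨A, hA⟩ : ∃ A, A = ENNReal.ofReal (CS2 (p / (p - 1))) := ⟨_, rfl⟩
  have hAt : A ≠ ⊤ := by rw [hA]; exact ofReal_ne_top
  refine ⟨K1 * (A * K2) ^ (1 / 2 : ℝ), ENNReal.mul_ne_top hK1t
    (ENNReal.rpow_ne_top_of_nonneg (by norm_num) (ENNReal.mul_ne_top hAt hK2t)), fun G hG hGi => ?_⟩
  obtain ⟨I, hI⟩ : ∃ I : ℤ → ℝ → ℝ≥0∞, ∀ j t, I j t =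
    ∫⁻ x, ‖vv (((2 : ℝ) ^ j) ^ 2) (aa G j) t x‖ₑ ^ p := ⟨_, fun _ _ => rfl⟩
  have hIm : ∀ j, Measurable (I j) := by
    intro j
    have e : I j = fun t => ∫⁻ x, ‖vv (((2 : ℝ) ^ j) ^ 2) (aa G j) t x‖ₑ ^ p := funext (hI j)
    rw [e]
    have m : Measurable (fun z : ℝ × Ed 3 => vv (((2 : ℝ) ^ j) ^ 2) (aa G j) z.1 z.2) :=
      vv_meas_comp _ _ (aa_meas G hG j) _ _ measurable_fst measurable_snd
    have m' : Measurable (fun z : ℝ × Ed 3 => ‖vv (((2 : ℝ) ^ j) ^ 2) (aa G j) z.1 z.2‖ₑ ^ p) :=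
      m.enorm.pow_const p
    exact Measurable.lintegral_prod_right' (f := fun z : ℝ × Ed 3 =>
      ‖vv (((2 : ℝ) ^ j) ^ 2) (aa G j) z.1 z.2‖ₑ ^ p) m'
  obtain ⟨c, hc⟩ : ∃ c : ℝ → ℤ → ℝ≥0∞, ∀ t j, c t j =
    ENNReal.ofReal (((2 : ℝ) ^ j) ^ (-r)) * I j t ^ (1 / p) := ⟨_, fun _ _ => rfl⟩
  have hcm : ∀ j, Measurable (fun t => c t j) := by
    intro j
    have e : (fun t => c t j) = fun t => ENNReal.ofReal (((2 : ℝ) ^ j) ^ (-r)) * I j t ^ (1 / p) :=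
      funext fun t => hc t j
    rw [e]; exact ((hIm j).pow_const _).const_mul _
  have hcm2 : Measurable (Function.uncurry fun t j => c t j ^ (2 : ℝ)) :=
    measurable_from_prod_countable_left fun j => (hcm j).pow_const _
  have hmk := mink (volume : Measure ℝ) (Measure.count : Measure ℤ) (fun t j => c t j ^ (2 : ℝ)) hcm2
    (q / 2) (by linarith)
  simp_rw [lintegral_count] at hmk
  have h1 : ∀ t, gagliardo 3 r p (hw G t) ^ q ≤ K1 ^ q * (∑' j, c t j ^ (2 : ℝ)) ^ (q / 2) := by
    intro t
    have g := hK1 G hG hGi t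
    simp_rw [← hI, ← hc] at g
    have l := ENNReal.rpow_le_rpow (lp_le_l2 p hp2.le (c t)) (z := 1 / p) (by positivity)
    rw [← ENNReal.rpow_mul] at l
    have e : p / 2 * (1 / p) = 1 / 2 := by field_simp
    rw [e] at l
    calc _ ≤ (K1 * (∑' j, c t j ^ (2 : ℝ)) ^ (1 / 2 : ℝ)) ^ q := by
          refine ENNReal.rpow_le_rpow (g.trans ?_) hq0.le
          gcongr
      _ = _ := by
          rw [ENNReal.mul_rpow_of_nonneg _ _ hq0.le, ← ENNReal.rpow_mul]
          congr 2; ring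
  have h2 : ∀ j, (∫⁻ t, (c t j ^ (2 : ℝ)) ^ (q / 2)) ^ (1 / (q / 2)) ≤
      A * (ENNReal.ofReal (((2 : ℝ) ^ j) ^ (-(2 * θ))) * ∫⁻ κ, ‖aa G j κ‖ₑ ^ 2) := by
    intro j
    have l := loc_str p q hp2 hq (((2 : ℝ) ^ j) ^ 2) (by positivity) (aa G j) (aa_meas G hG j)
      (aa_int G hG hGi j)
    simp_rw [← hI] at l
    have hu : (0 : ℝ) < 2 ^ j := by positivity
    have e1 : ∀ t, (c t j ^ (2 : ℝ)) ^ (q / 2) =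
        ENNReal.ofReal (((2 : ℝ) ^ j) ^ (-r)) ^ q * I j t ^ (q / p) := by
      intro t
      rw [← ENNReal.rpow_mul, hc, ENNReal.mul_rpow_of_nonneg _ _ (by positivity), ← ENNReal.rpow_mul]
      congr 2 <;> field_simp
    simp_rw [e1]
    rw [lintegral_const_mul' _ _ (ENNReal.rpow_ne_top_of_nonneg hq0.le ofReal_ne_top),
      ENNReal.mul_rpow_of_nonneg _ _ (by positivity), ← ENNReal.rpow_mul]
    have e2 : q * (1 / (q / 2)) = 2 := by field_simp
    have l2 := ENNReal.rpow_le_rpow l (z := 2) (by norm_num)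
    rw [ENNReal.mul_rpow_of_nonneg _ _ (by norm_num), ← ENNReal.rpow_mul, ← ENNReal.rpow_mul,
      ← ENNReal.rpow_mul] at l2
    have e3 : 1 / q * 2 = 1 / (q / 2) := by field_simp
    have e4 : (1 / 2 : ℝ) * 2 = 1 := by norm_num
    rw [e3, e4, ENNReal.rpow_one, ENNReal.rpow_one, ENNReal.ofReal_mul' (by positivity), ← hA] at l2
    rw [e2]
    have e5 : ENNReal.ofReal (((2 : ℝ) ^ j) ^ (-(2 * θ))) =
        ENNReal.ofReal (((2 : ℝ) ^ j) ^ (-r)) ^ (2 : ℝ) * ENNReal.ofReal ((((2 : ℝ) ^ j) ^ 2) ^ (-(2 / q))) := by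
      rw [ENNReal.ofReal_rpow_of_pos (by positivity), ← ENNReal.ofReal_mul (by positivity)]
      congr 1
      generalize (2 : ℝ) ^ j = u at *
      rw [← Real.rpow_natCast u 2, ← Real.rpow_mul hu.le, ← Real.rpow_mul hu.le, ← Real.rpow_add hu]
      congr 1
      rw [hθ, hγ]; push_cast; ring
    rw [e5]
    exact (mul_le_mul' le_rfl l2).trans_eq (by ring)
  have h3 := hmk.trans ((ENNReal.tsum_le_tsum h2).trans_eq ENNReal.tsum_mul_left)
  have h4 : (∫⁻ t, (∑' j, c t j ^ (2 : ℝ)) ^ (q / 2)) ^ (1 / (q / 2)) ≤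
      A * K2 * ∫⁻ κ, ‖κ‖ₑ ^ (2 * θ) * ‖G κ‖ₑ ^ 2 := by
    refine h3.trans ?_
    rw [mul_assoc]; gcongr; exact hK2 G hG
  calc _ ≤ (∫⁻ t, K1 ^ q * (∑' j, c t j ^ (2 : ℝ)) ^ (q / 2)) ^ (1 / q) := by
        refine ENNReal.rpow_le_rpow (lintegral_mono h1) (by positivity)
    _ = K1 * ((∫⁻ t, (∑' j, c t j ^ (2 : ℝ)) ^ (q / 2)) ^ (1 / (q / 2))) ^ (1 / 2 : ℝ) := by
        rw [lintegral_const_mul' _ _ (ENNReal.rpow_ne_top_of_nonneg hq0.le hK1t),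
          ENNReal.mul_rpow_of_nonneg _ _ (by positivity), ← ENNReal.rpow_mul, ← ENNReal.rpow_mul]
        have e1 : q * (1 / q) = 1 := by field_simp
        have e2 : 1 / (q / 2) * (1 / 2) = 1 / q := by field_simp
        rw [e1, e2, ENNReal.rpow_one]
    _ ≤ K1 * (A * K2 * ∫⁻ κ, ‖κ‖ₑ ^ (2 * θ) * ‖G κ‖ₑ ^ 2) ^ (1 / 2 : ℝ) := by gcongr
    _ = _ := by rw [ENNReal.mul_rpow_of_nonneg _ _ (by norm_num), mul_assoc]

open MeasureTheory ENNReal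
open scoped RealInnerProductSpace

theorem ft_eq (g : SchwartzMap (Ed 3) ℂ) :
    ftransform 3 ⇑g = fun κ => (FourierTransform.fourier g : SchwartzMap (Ed 3) ℂ) ((2 * Real.pi)⁻¹ • κ) := by
  ext κ
  rw [SchwartzMap.fourier_coe, Real.fourier_eq', ftransform]
  congr 1; ext x
  rw [smul_eq_mul, inner_smul_right]
  congr 2
  have := Real.pi_ne_zero
  push_cast
  have h : ((2 * Real.pi : ℝ) : ℂ) ≠ 0 := by norm_cast; positivity
  push_cast at h
  field_simp

theorem ft_int (g : SchwartzMap (Ed 3) ℂ) : Integrable (ftransform 3 ⇑g) := by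
  rw [ft_eq]
  exact (FourierTransform.fourier g : SchwartzMap (Ed 3) ℂ).integrable.comp_smul
    (inv_ne_zero (by have := Real.pi_pos; positivity))

theorem ft_meas (g : SchwartzMap (Ed 3) ℂ) : Measurable (ftransform 3 ⇑g) := by
  rw [ft_eq]
  have h : Continuous (fun κ : Ed 3 => (2 * Real.pi)⁻¹ • κ) := by fun_prop
  exact ((FourierTransform.fourier g : SchwartzMap (Ed 3) ℂ).continuous.comp h).measurable

theorem hom_str2 (p r θ q : ℝ) (hp2 : 2 < p) (hr0 : 0 < r) (hr1 : r < 1)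
    (hθ : θ = r + (p - 2) / p) (hq : q = 2 * p / (p - 2)) : ∃ K : ℝ≥0∞, K ≠ ⊤ ∧
    ∀ g : SchwartzMap (Ed 3) ℂ,
    (∫⁻ t, gagliardo 3 r p (hw (ftransform 3 ⇑g) t) ^ q) ^ (1 / q) ≤ K * sobolevSemi 3 θ ⇑g := by
  obtain ⟨K, hKt, hK⟩ := hom_str p r θ q hp2 hr0 hr1 hθ hq
  have hc : ENNReal.ofReal cc ≠ 0 := by simpa using cc_pos
  refine ⟨K * (ENNReal.ofReal cc)⁻¹ ^ (1 / 2 : ℝ), ENNReal.mul_ne_top hKt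
    (ENNReal.rpow_ne_top_of_nonneg (by norm_num) (by simpa using cc_pos)), fun g => ?_⟩
  refine (hK _ (ft_meas g) (ft_int g)).trans_eq ?_
  have e : sobolevSemi 3 θ ⇑g = (ENNReal.ofReal cc * ∫⁻ κ, ‖κ‖ₑ ^ (2 * θ) * ‖ftransform 3 ⇑g κ‖ₑ ^ 2) ^
    (1 / 2 : ℝ) := rfl
  rw [e, ENNReal.mul_rpow_of_nonneg _ _ (by norm_num), mul_assoc, ← mul_assoc (_ ^ (1 / 2 : ℝ)),
    ← ENNReal.mul_rpow_of_nonneg _ _ (by norm_num), ENNReal.inv_mul_cancel hc ofReal_ne_top,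
    ENNReal.one_rpow, one_mul]

/-- The Gagliardo measure on pairs. -/
noncomputable def rho (r p : ℝ) : Measure (Ed 3 × Ed 3) :=
  (volume : Measure (Ed 3 × Ed 3)).withDensity fun z => (‖z.1 - z.2‖ₑ ^ (r * p + 3))⁻¹

instance (r p : ℝ) : SFinite (rho r p) := by unfold rho; infer_instance

theorem rho_lint (r p : ℝ) (Φ : Ed 3 × Ed 3 → ℝ≥0∞) (hΦ : Measurable Φ) :
    ∫⁻ x : Ed 3, ∫⁻ y : Ed 3, Φ (x, y) / (‖x - y‖₊ : ℝ≥0∞) ^ (r * p + (3 : ℕ)) = ∫⁻ z, Φ z ∂(rho r p) := by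
  have m : Measurable (fun z : Ed 3 × Ed 3 => (‖z.1 - z.2‖ₑ ^ (r * p + 3))⁻¹) := by fun_prop
  rw [rho, lintegral_withDensity_eq_lintegral_mul _ m hΦ, Measure.volume_eq_prod,
    lintegral_prod _ (m.mul hΦ).aemeasurable]
  refine lintegral_congr fun x => lintegral_congr fun y => ?_
  rw [Pi.mul_apply, div_eq_mul_inv, mul_comm]; norm_num; rfl

theorem gag_rho (r p : ℝ) (u : Ed 3 → ℂ) (hu : Measurable u) :
    gagliardo 3 r p u = (∫⁻ z, ‖u z.1 - u z.2‖ₑ ^ p ∂(rho r p)) ^ (1 / p) := by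
  have m1 : Measurable (fun z : Ed 3 × Ed 3 => u z.1) := hu.comp measurable_fst
  have m2 : Measurable (fun z : Ed 3 × Ed 3 => u z.2) := hu.comp measurable_snd
  have m : Measurable (fun z : Ed 3 × Ed 3 => ‖u z.1 - u z.2‖ₑ ^ p) := (m1.sub m2).enorm.pow_const p
  rw [← rho_lint r p _ m]; rfl

theorem gag_le (r p : ℝ) (hp : 0 < p) (u : Ed 3 → ℂ) (Φ : Ed 3 × Ed 3 → ℝ≥0∞) (hΦ : Measurable Φ)
    (h : ∀ x y, ‖u x - u y‖ₑ ≤ Φ (x, y)) :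
    gagliardo 3 r p u ≤ (∫⁻ z, Φ z ^ p ∂(rho r p)) ^ (1 / p) := by
  rw [← rho_lint r p _ (hΦ.pow_const p)]
  unfold gagliardo
  refine ENNReal.rpow_le_rpow (lintegral_mono fun x => lintegral_mono fun y => ?_) (by positivity)
  exact ENNReal.div_le_div_right (ENNReal.rpow_le_rpow (h x y) hp.le) _

theorem duh (p q r T : ℝ) (hp : 1 ≤ p) (hq : 1 ≤ q) (u0 : ℝ → Ed 3 → ℂ) (H : ℝ → ℝ → Ed 3 → ℂ)
    (hu : Measurable (fun z : ℝ × Ed 3 => u0 z.1 z.2))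
    (hH : Measurable (fun z : (ℝ × ℝ) × Ed 3 => H z.1.1 z.1.2 z.2)) :
    (∫⁻ t in Set.Ioc 0 T, gagliardo 3 r p (fun x => u0 t x + ∫ s in Set.Ioc 0 t, H t s x) ^ q) ^ (1 / q) ≤
    (∫⁻ t in Set.Ioc 0 T, gagliardo 3 r p (u0 t) ^ q) ^ (1 / q) +
      ∫⁻ s in Set.Ioc 0 T, (∫⁻ t in Set.Ioc 0 T, gagliardo 3 r p (H t s) ^ q) ^ (1 / q) := by
  have hp0 : 0 < p := by linarith
  have hq0 : 0 < q := by linarith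
  have mu : ∀ t, Measurable (u0 t) := fun t => hu.comp measurable_prodMk_left
  have mH : ∀ t s, Measurable (H t s) := fun t s => hH.comp (measurable_prodMk_left (x := (t, s)))
  have mHs : ∀ t x, Measurable (fun s => H t s x) := fun t x =>
    hH.comp ((measurable_prodMk_left (x := t)).prodMk measurable_const)
  have mg1 : Measurable (fun t => gagliardo 3 r p (u0 t)) := by
    simp_rw [fun t => gag_rho r p (u0 t) (mu t)]
    have a1 : Measurable (fun z : ℝ × (Ed 3 × Ed 3) => u0 z.1 z.2.1) :=
      hu.comp (measurable_fst.prodMk (measurable_fst.comp measurable_snd))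
    have a2 : Measurable (fun z : ℝ × (Ed 3 × Ed 3) => u0 z.1 z.2.2) :=
      hu.comp (measurable_fst.prodMk (measurable_snd.comp measurable_snd))
    exact (((a1.sub a2).enorm.pow_const p).lintegral_prod_right').pow_const _
  have mg2 : Measurable (fun z : ℝ × ℝ => gagliardo 3 r p (H z.1 z.2)) := by
    simp_rw [fun z : ℝ × ℝ => gag_rho r p (H z.1 z.2) (mH z.1 z.2)]
    have a1 : Measurable (fun z : (ℝ × ℝ) × (Ed 3 × Ed 3) => H z.1.1 z.1.2 z.2.1) :=
      hH.comp (measurable_fst.prodMk (measurable_fst.comp measurable_snd))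
    have a2 : Measurable (fun z : (ℝ × ℝ) × (Ed 3 × Ed 3) => H z.1.1 z.1.2 z.2.2) :=
      hH.comp (measurable_fst.prodMk (measurable_snd.comp measurable_snd))
    exact (((a1.sub a2).enorm.pow_const p).lintegral_prod_right').pow_const _
  have key : ∀ t ∈ Set.Ioc 0 T, gagliardo 3 r p (fun x => u0 t x + ∫ s in Set.Ioc 0 t, H t s x) ≤
      gagliardo 3 r p (u0 t) + ∫⁻ s in Set.Ioc 0 T, gagliardo 3 r p (H t s) := by
    intro t ht
    have b1 : Measurable (fun z : (Ed 3 × Ed 3) × ℝ => H t z.2 z.1.1) :=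
      hH.comp ((measurable_const.prodMk measurable_snd).prodMk (measurable_fst.comp measurable_fst))
    have b2 : Measurable (fun z : (Ed 3 × Ed 3) × ℝ => H t z.2 z.1.2) :=
      hH.comp ((measurable_const.prodMk measurable_snd).prodMk (measurable_snd.comp measurable_fst))
    have b3 : Measurable (fun z : (Ed 3 × Ed 3) × ℝ => ‖H t z.2 z.1.1 - H t z.2 z.1.2‖ₑ) :=
      (b1.sub b2).enorm
    have b4 : Measurable (fun z : Ed 3 × Ed 3 => ∫⁻ s in Set.Ioc 0 T, ‖H t s z.1 - H t s z.2‖ₑ) :=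
      b3.lintegral_prod_right'
    have c1 : Measurable (fun z : Ed 3 × Ed 3 => u0 t z.1) := (mu t).comp measurable_fst
    have c2 : Measurable (fun z : Ed 3 × Ed 3 => u0 t z.2) := (mu t).comp measurable_snd
    have b5 : Measurable (fun z : Ed 3 × Ed 3 => ‖u0 t z.1 - u0 t z.2‖ₑ) := (c1.sub c2).enorm
    refine (gag_le r p hp0 _ (fun z => ‖u0 t z.1 - u0 t z.2‖ₑ +
      ∫⁻ s in Set.Ioc 0 T, ‖H t s z.1 - H t s z.2‖ₑ) (b5.add b4) ?_).trans ?_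
    · intro x y
      have e : (u0 t x + ∫ s in Set.Ioc 0 t, H t s x) - (u0 t y + ∫ s in Set.Ioc 0 t, H t s y) =
        (u0 t x - u0 t y) + ((∫ s in Set.Ioc 0 t, H t s x) - ∫ s in Set.Ioc 0 t, H t s y) := by ring
      rw [e]
      refine (enorm_add_le _ _).trans ?_
      refine add_le_add le_rfl ((sub_integral_enorm_le _ _ _ (mHs t x).aestronglyMeasurable
        (mHs t y).aestronglyMeasurable).trans ?_)
      exact lintegral_mono_set (Set.Ioc_subset_Ioc_right ht.2)
    · refine (ENNReal.lintegral_Lp_add_le (f := fun z : Ed 3 × Ed 3 => ‖u0 t z.1 - u0 t z.2‖ₑ)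
        (g := fun z => ∫⁻ s in Set.Ioc 0 T, ‖H t s z.1 - H t s z.2‖ₑ) b5.aemeasurable
        b4.aemeasurable hp).trans ?_
      rw [gag_rho r p _ (mu t)]
      refine add_le_add le_rfl ?_
      simp_rw [fun s => gag_rho r p (H t s) (mH t s)]
      exact mink (rho r p) (volume.restrict (Set.Ioc 0 T)) (fun z s => ‖H t s z.1 - H t s z.2‖ₑ) b3 p hp
  have mg3 : Measurable (fun t => ∫⁻ s in Set.Ioc 0 T, gagliardo 3 r p (H t s)) := mg2.lintegral_prod_right'
  calc _ ≤ (∫⁻ t in Set.Ioc 0 T, (gagliardo 3 r p (u0 t) +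
          ∫⁻ s in Set.Ioc 0 T, gagliardo 3 r p (H t s)) ^ q) ^ (1 / q) := by
        refine ENNReal.rpow_le_rpow (setLIntegral_mono' measurableSet_Ioc fun t ht => ?_) (by positivity)
        exact ENNReal.rpow_le_rpow (key t ht) hq0.le
    _ ≤ _ := ENNReal.lintegral_Lp_add_le (f := fun t => gagliardo 3 r p (u0 t))
        (g := fun t => ∫⁻ s in Set.Ioc 0 T, gagliardo 3 r p (H t s)) mg1.aemeasurable mg3.aemeasurable hq
    _ ≤ _ := by
        refine add_le_add le_rfl ?_
        exact mink (volume.restrict (Set.Ioc 0 T)) (volume.restrict (Set.Ioc 0 T))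
          (fun t s => gagliardo 3 r p (H t s)) mg2 q hq

theorem fin_str (p r θ : ℝ) (hp2 : 2 < p) (hr0 : 0 < r) (hr1 : r < 1)
    (hθ : θ = r + (p - 2) / p) :
    ∃ C : ℝ, 0 < C ∧ ∀ (T : ℝ), 0 < T →
      ∀ (w₀ : SchwartzMap (Ed 3) ℂ) (f : ℝ → SchwartzMap (Ed 3) ℂ),
      ContinuousOn (fun q : ℝ × Ed 3 => f q.1 q.2) (Set.Icc 0 T ×ˢ Set.univ) →
      (∫⁻ t in Set.Ioc (0 : ℝ) T,
          gagliardo 3 r p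
            (fun x => halfWave 3 t (⇑w₀) x +
              ∫ s in (0 : ℝ)..t, halfWave 3 (t - s) (⇑(f s)) x)
            ^ (2 * p / (p - 2))) ^ ((p - 2) / (2 * p))
        ≤ ENNReal.ofReal C *
            (sobolevSemi 3 θ ⇑w₀ + ∫⁻ t in Set.Ioc (0 : ℝ) T, sobolevSemi 3 θ ⇑(f t)) := by
  obtain ⟨K, hKt, hK⟩ := hom_str2 p r θ _ hp2 hr0 hr1 hθ rfl
  have hpm : 0 < p - 2 := by linarith
  have hq1 : 1 ≤ 2 * p / (p - 2) := by rw [le_div_iff₀ hpm]; linarith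
  have hqi : (p - 2) / (2 * p) = 1 / (2 * p / (p - 2)) := by rw [one_div_div]
  rw [hqi]
  generalize 2 * p / (p - 2) = q at *
  have hq0 : 0 < q := by linarith
  refine ⟨K.toReal + 1, by positivity, fun T hT w₀ f hf => ?_⟩
  have hKC : K ≤ ENNReal.ofReal (K.toReal + 1) := by
    rw [← ENNReal.ofReal_toReal hKt]
    exact ENNReal.ofReal_le_ofReal (by rw [ENNReal.toReal_ofReal ENNReal.toReal_nonneg]; linarith)
  classical
  obtain ⟨F, hF⟩ : ∃ F : ℝ × Ed 3 → ℂ, F = (Set.Icc 0 T ×ˢ (Set.univ : Set (Ed 3))).piecewise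
    (fun q : ℝ × Ed 3 => f q.1 q.2) (fun _ => 0) := ⟨_, rfl⟩
  have hFm : Measurable F := by
    rw [hF]
    exact hf.measurable_piecewise continuousOn_const (measurableSet_Icc.prod MeasurableSet.univ)
  have hFf : ∀ s ∈ Set.Icc 0 T, ∀ x, F (s, x) = f s x := by
    intro s hs x
    rw [hF, Set.piecewise_eq_of_mem]
    exact ⟨hs, Set.mem_univ _⟩
  obtain ⟨G, hG⟩ : ∃ G : ℝ → Ed 3 → ℂ, ∀ s κ, G s κ = ftransform 3 (fun x => F (s, x)) κ :=
    ⟨_, fun _ _ => rfl⟩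
  have hGf : ∀ s ∈ Set.Icc 0 T, G s = ftransform 3 ⇑(f s) := by
    intro s hs
    ext κ
    rw [hG, funext (hFf s hs)]
  have hGm : Measurable (fun z : ℝ × Ed 3 => G z.1 z.2) := by
    simp_rw [hG]
    unfold ftransform
    have a1 : Measurable (fun z : (ℝ × Ed 3) × Ed 3 => Complex.exp (-(Complex.I * (⟪z.2, z.1.2⟫ : ℂ)))) := by
      fun_prop
    have a2 : Measurable (fun z : (ℝ × Ed 3) × Ed 3 => F (z.1.1, z.2)) :=
      hFm.comp ((measurable_fst.comp measurable_fst).prodMk measurable_snd)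
    exact ((a1.mul a2).stronglyMeasurable.integral_prod_right').measurable
  obtain ⟨H, hH⟩ : ∃ H : ℝ → ℝ → Ed 3 → ℂ, ∀ t s x, H t s x = hw (G s) (t - s) x :=
    ⟨_, fun _ _ _ => rfl⟩
  have hHm : Measurable (fun z : (ℝ × ℝ) × Ed 3 => H z.1.1 z.1.2 z.2) := by
    simp_rw [hH]
    unfold hw
    have a1 : Measurable (fun z : ((ℝ × ℝ) × Ed 3) × Ed 3 => Complex.exp (Complex.I *
        ((⟪z.1.2, z.2⟫ : ℂ) + ((z.1.1.1 - z.1.1.2 : ℝ) : ℂ) * ((‖z.2‖ : ℝ) : ℂ)))) := by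
      fun_prop
    have a2 : Measurable (fun z : ((ℝ × ℝ) × Ed 3) × Ed 3 => G z.1.1.2 z.2) :=
      hGm.comp ((measurable_snd.comp (measurable_fst.comp measurable_fst)).prodMk measurable_snd)
    exact measurable_const.mul ((a1.mul a2).stronglyMeasurable.integral_prod_right').measurable
  have hd := duh p q r T (by linarith) hq1 (hw (ftransform 3 ⇑w₀)) H (hw_meas _ (ft_meas w₀)) hHm
  have e1 : ∫⁻ t in Set.Ioc (0 : ℝ) T, gagliardo 3 r p (fun x => halfWave 3 t (⇑w₀) x +
              ∫ s in (0 : ℝ)..t, halfWave 3 (t - s) (⇑(f s)) x) ^ q =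
      ∫⁻ t in Set.Ioc 0 T, gagliardo 3 r p (fun x => hw (ftransform 3 ⇑w₀) t x +
        ∫ s in Set.Ioc 0 t, H t s x) ^ q := by
    refine setLIntegral_congr_fun measurableSet_Ioc fun t ht => ?_
    congr 2
    ext x
    rw [hw_eq, intervalIntegral.integral_of_le ht.1.le]
    congr 1
    refine setIntegral_congr_fun measurableSet_Ioc fun s hs => ?_
    rw [hw_eq, hH, hGf s ⟨hs.1.le, hs.2.trans ht.2⟩]
  rw [e1]
  refine hd.trans ?_
  have k1 : (∫⁻ t in Set.Ioc 0 T, gagliardo 3 r p (hw (ftransform 3 ⇑w₀) t) ^ q) ^ (1 / q) ≤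
      K * sobolevSemi 3 θ ⇑w₀ :=
    (ENNReal.rpow_le_rpow (setLIntegral_le_lintegral _ _) (by positivity)).trans (hK w₀)
  have k2 : ∫⁻ s in Set.Ioc 0 T, (∫⁻ t in Set.Ioc 0 T, gagliardo 3 r p (H t s) ^ q) ^ (1 / q) ≤
      K * ∫⁻ s in Set.Ioc 0 T, sobolevSemi 3 θ ⇑(f s) := by
    rw [← lintegral_const_mul' _ _ hKt]
    refine setLIntegral_mono' measurableSet_Ioc fun s hs => ?_
    refine (ENNReal.rpow_le_rpow (setLIntegral_le_lintegral _ _) (by positivity)).trans ?_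
    have e2 : ∀ t, H t s = hw (ftransform 3 ⇑(f s)) (t - s) := by
      intro t; ext x; rw [hH, hGf s ⟨hs.1.le, hs.2⟩]
    simp_rw [e2]
    rw [lintegral_sub_right_eq_self (fun t => gagliardo 3 r p (hw (ftransform 3 ⇑(f s)) t) ^ q) s]
    exact hK (f s)
  calc _ ≤ K * sobolevSemi 3 θ ⇑w₀ + K * ∫⁻ s in Set.Ioc 0 T, sobolevSemi 3 θ ⇑(f s) := add_le_add k1 k2
    _ = K * (sobolevSemi 3 θ ⇑w₀ + ∫⁻ s in Set.Ioc 0 T, sobolevSemi 3 θ ⇑(f s)) := (mul_add _ _ _).symm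
    _ ≤ _ := by gcongr

/-- Strichartz estimate for the half-wave equation in `d = 3`:
for `2 < p < ∞`, `0 < r < 1`, `θ = r + (p−2)/p`, and
`w(t) = e^{itD}w₀ + ∫₀^t e^{i(t−s)D} f(s) ds`,
`(∫₀^T [w(t)]_{r,p}^{2p/(p−2)} dt)^{(p−2)/(2p)} ≤ C ([w₀]_θ + ∫₀^T [f(t)]_θ dt)`
with `C` independent of `T`. -/
theorem stmt17 (p r θ : ℝ) (hp2 : 2 < p) (hr0 : 0 < r) (hr1 : r < 1)
    (hθ : θ = r + (p - 2) / p) :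
    ∃ C : ℝ, 0 < C ∧ ∀ (T : ℝ), 0 < T →
      ∀ (w₀ : SchwartzMap (Ed 3) ℂ) (f : ℝ → SchwartzMap (Ed 3) ℂ),
      ContinuousOn (fun q : ℝ × Ed 3 => f q.1 q.2) (Set.Icc 0 T ×ˢ Set.univ) →
      (∫⁻ t in Set.Ioc (0 : ℝ) T, sobolevSemi 3 θ ⇑(f t)) ≠ ⊤ →
      (∫⁻ t in Set.Ioc (0 : ℝ) T,
          gagliardo 3 r p
            (fun x => halfWave 3 t (⇑w₀) x +
              ∫ s in (0 : ℝ)..t, halfWave 3 (t - s) (⇑(f s)) x)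
            ^ (2 * p / (p - 2))) ^ ((p - 2) / (2 * p))
        ≤ ENNReal.ofReal C *
            (sobolevSemi 3 θ ⇑w₀ + ∫⁻ t in Set.Ioc (0 : ℝ) T, sobolevSemi 3 θ ⇑(f t)) := by
  obtain ⟨C, hC, h⟩ := fin_str p r θ hp2 hr0 hr1 hθ
  exact ⟨C, hC, fun T hT w₀ f hf _ => h T hT w₀ f hf⟩
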